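/- If G is a planar triangulation different from K4, then τ(G) ≤ (3/2)·ν(G). -/

import Mathlib

open SimpleGraph

variable {V : Type*}

/-- A triangle transversal of `G`: a set of edges of `G` meeting every triangle of `G`
(so that its removal leaves a triangle-free graph). -/
def IsTriangleTransversal (G : SimpleGraph V) (X : Finset (Sym2 V)) : Prop :=
  ↑X ⊆ G.edgeSet ∧
    ∀ t : Finset V, G.IsNClique 3 t → ∃ e ∈ X, ∀ v ∈ e, v ∈ t

/-- A triangle packing of `G`: a set of pairwise edge-disjoint triangles of `G`. -/
def IsTrianglePacking (G : SimpleGraph V) (Y : Finset (Finset V)) : Prop :=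
  (∀ t ∈ Y, G.IsNClique 3 t) ∧
    ∀ s ∈ Y, ∀ t ∈ Y, s ≠ t →
      ∀ e ∈ G.edgeSet, ¬ ((∀ v ∈ e, v ∈ s) ∧ (∀ v ∈ e, v ∈ t))

/-- `tau G` is the minimum size of a triangle transversal of `G`. -/
noncomputable def tau (G : SimpleGraph V) : ℕ :=
  sInf {n | ∃ X : Finset (Sym2 V), IsTriangleTransversal G X ∧ X.card = n}

/-- `nu G` is the maximum size of a triangle packing of `G`. -/
noncomputable def nu (G : SimpleGraph V) : ℕ :=
  sSup {n | ∃ Y : Finset (Finset V), IsTrianglePacking G Y ∧ Y.card = n}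

/-- A drawing of the graph `G` in the plane (identified with `ℂ`): vertices are mapped to
distinct points, each edge is realized by a simple continuous arc joining the images of its
endpoints, arcs of distinct edges meet only in common endpoints, and no arc passes through
the image of any other vertex. -/
structure PlaneEmbedding (G : SimpleGraph V) where
  vtx : V → ℂ
  arc : V → V → Set ℂ
  vtx_inj : Function.Injective vtx
  arc_symm : ∀ u v : V, arc u v = arc v u
  arc_curve : ∀ ⦃u v : V⦄, G.Adj u v → ∃ γ : ℝ → ℂ,
    ContinuousOn γ (Set.Icc 0 1) ∧ Set.InjOn γ (Set.Icc 0 1) ∧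
    γ 0 = vtx u ∧ γ 1 = vtx v ∧ arc u v = γ '' Set.Icc 0 1
  arc_inter : ∀ ⦃u v x y : V⦄, G.Adj u v → G.Adj x y → s(u, v) ≠ s(x, y) →
    arc u v ∩ arc x y ⊆ ({vtx u, vtx v} : Set ℂ) ∩ ({vtx x, vtx y} : Set ℂ)
  arc_vtx : ∀ ⦃u v : V⦄, G.Adj u v → ∀ w : V, vtx w ∈ arc u v → w = u ∨ w = v

/-- The set of points of the plane used by a plane embedding. -/
def PlaneEmbedding.drawing {G : SimpleGraph V} (E : PlaneEmbedding G) : Set ℂ :=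
  Set.range E.vtx ∪ ⋃ (u : V) (v : V) (_ : G.Adj u v), E.arc u v

/-- A graph is planar if it admits a plane embedding. -/
def PlanarGraph (G : SimpleGraph V) : Prop := Nonempty (PlaneEmbedding G)

/-- A maximal planar graph (planar triangulation): a planar graph such that adding any
edge between nonadjacent vertices destroys planarity. -/
def MaximalPlanar (G : SimpleGraph V) : Prop :=
  PlanarGraph G ∧ ∀ u v : V, u ≠ v → ¬ G.Adj u v →
    ¬ PlanarGraph (G ⊔ SimpleGraph.fromEdgeSet {s(u, v)})

/-!
The regions of a plane triangulation with at least four vertices are bounded by triangles, the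
faces. Every edge lies in exactly two faces, and every triangle of the graph is the mod 2 boundary
of the set of faces inside it. The dual graph, in which two faces are adjacent when they share an
edge, is therefore cubic, and parity gives an odd set of faces at least three boundary edges. By
Tutte's theorem the dual graph has a perfect matching; the edges of the triangulation that it
crosses meet every face exactly once, hence by parity every triangle, and `τ ≤ |F| / 2`. The dual
graph contains `K₄` only if the triangulation is `K₄`. Otherwise, being subcubic, it has an
independent set of at least `|F| / 3` faces, that is, edge-disjoint triangles, and `ν ≥ |F| / 3`.

The Jordan curve theorem is replaced by Eilenberg's criterion: a compact set `K` separates `p` from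
`q` if and only if `(z - p) / (z - q)` has no continuous logarithm on `K`. Once the arcs are
straightened near the vertices, a missing edge between two vertices on the boundary of one region
can be drawn in that region, so in a triangulation the vertices of each region are pairwise
adjacent.
-/

/-! ### Continuous logarithms -/

/-- `f` has a continuous logarithm on `S`. Logarithms of `(z - p) / (z - q)` decide whether a
compact set separates `p` from `q` (Eilenberg's criterion), which replaces the Jordan curve
theorem here. -/
def HasLogOn (S : Set ℂ) (f : ℂ → ℂ) : Prop :=
  ∃ g : ℂ → ℂ, ContinuousOn g S ∧ ∀ z ∈ S, Complex.exp (g z) = f z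

namespace HasLogOn

variable {S T : Set ℂ} {f f' : ℂ → ℂ}

theorem mono (h : HasLogOn T f) (hST : S ⊆ T) : HasLogOn S f := by
  obtain ⟨g, hg, hgf⟩ := h
  exact ⟨g, hg.mono hST, fun z hz => hgf z (hST hz)⟩

theorem mul (h : HasLogOn S f) (h' : HasLogOn S f') : HasLogOn S (fun z => f z * f' z) := by
  obtain ⟨g, hg, hgf⟩ := h
  obtain ⟨g', hg', hgf'⟩ := h'
  exact ⟨fun z => g z + g' z, hg.add hg', fun z hz => by
    simp only [Complex.exp_add, hgf z hz, hgf' z hz]⟩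

theorem inv (h : HasLogOn S f) : HasLogOn S (fun z => (f z)⁻¹) := by
  obtain ⟨g, hg, hgf⟩ := h
  exact ⟨fun z => -g z, hg.neg, fun z hz => by simp only [Complex.exp_neg, hgf z hz]⟩

theorem comp {φ : ℂ → ℂ} (h : HasLogOn S f) (hφ : ContinuousOn φ T) (hmaps : Set.MapsTo φ T S) :
    HasLogOn T (f ∘ φ) := by
  obtain ⟨g, hg, hgf⟩ := h
  exact ⟨g ∘ φ, hg.comp hφ hmaps, fun z hz => hgf _ (hmaps hz)⟩

theorem congr (h : HasLogOn S f) (hf : Set.EqOn f f' S) : HasLogOn S f' := by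
  obtain ⟨g, hg, hgf⟩ := h
  exact ⟨g, hg, fun z hz => (hgf z hz).trans (hf hz)⟩

theorem of_mem_slitPlane (hf : ContinuousOn f S) (h : ∀ z ∈ S, f z ∈ Complex.slitPlane) :
    HasLogOn S f :=
  ⟨fun z => Complex.log (f z), hf.clog h,
    fun z hz => Complex.exp_log (Complex.slitPlane_ne_zero (h z hz))⟩

theorem of_finite (hS : S.Finite) (h0 : ∀ z ∈ S, f z ≠ 0) : HasLogOn S f :=
  ⟨fun z => Complex.log (f z), hS.continuousOn _, fun z hz => Complex.exp_log (h0 z hz)⟩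

theorem union (hS : IsClosed S) (hT : IsClosed T) {x : ℂ} (hST : S ∩ T ⊆ {x})
    (h : HasLogOn S f) (h' : HasLogOn T f) : HasLogOn (S ∪ T) f := by
  classical
  obtain ⟨g, hg, hgf⟩ := h
  obtain ⟨g', hg', hgf'⟩ := h'
  obtain ⟨k, hk, hk1⟩ : ∃ k : ℂ, (x ∈ S ∩ T → g x = g' x + k) ∧ Complex.exp k = 1 := by
    by_cases hx : x ∈ S ∩ T
    · refine ⟨g x - g' x, fun _ => by ring, ?_⟩
      rw [Complex.exp_sub, hgf x hx.1, ← hgf' x hx.2, div_self (Complex.exp_ne_zero _)]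
    · exact ⟨0, fun hx' => absurd hx' hx, Complex.exp_zero⟩
  let glued : ℂ → ℂ := S.piecewise g (fun z => g' z + k)
  have hgS : Set.EqOn glued g S := S.piecewise_eqOn _ _
  have hgT : Set.EqOn glued (fun z => g' z + k) T := by
    intro z hz
    by_cases hzS : z ∈ S
    · obtain rfl : z = x := hST ⟨hzS, hz⟩
      rw [hgS hzS, hk ⟨hzS, hz⟩]
    · exact Set.piecewise_eq_of_notMem _ _ _ hzS
  refine ⟨glued, (hg.congr hgS).union_of_isClosed
    ((hg'.add continuousOn_const).congr hgT) hS hT, ?_⟩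
  rintro z (hz | hz)
  · rw [hgS hz, hgf z hz]
  · rw [hgT hz, Complex.exp_add, hk1, mul_one, hgf' z hz]

end HasLogOn

theorem sub_eq_sub_of_exp_eq {X : Type*} [TopologicalSpace X] {S : Set X} (hS : IsPreconnected S)
    {g g' : X → ℂ} (hg : ContinuousOn g S) (hg' : ContinuousOn g' S)
    (h : ∀ x ∈ S, Complex.exp (g x) = Complex.exp (g' x)) {x y : X} (hx : x ∈ S) (hy : y ∈ S) :
    g x - g' x = g y - g' y := by
  let periods : AddSubgroup ℂ := AddSubgroup.zmultiples (2 * Real.pi * Complex.I)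
  have hdisc : IsDiscrete (periods : Set ℂ) := ⟨NormedSpace.discreteTopology_zmultiples _⟩
  have hmaps : Set.MapsTo (fun z => g z - g' z) S periods := by
    intro z hz
    obtain ⟨n, hn⟩ := Complex.exp_eq_exp_iff_exists_int.1 (h z hz)
    exact AddSubgroup.mem_zmultiples_iff.2 ⟨n, by simp only [hn, zsmul_eq_mul]; ring⟩
  exact hS.constant_of_mapsTo hdisc (hg.sub hg') hmaps hx hy

theorem exists_continuous_log {X : Type*} [TopologicalSpace X] [SimplyConnectedSpace X]
    [LocallyPathConnectedSpace X] {f : X → ℂ} (hf : Continuous f) (h0 : ∀ x, f x ≠ 0) :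
    ∃ g : X → ℂ, Continuous g ∧ ∀ x, Complex.exp (g x) = f x := by
  obtain ⟨x₀⟩ : Nonempty X := inferInstance
  obtain ⟨F, ⟨-, hF⟩, -⟩ := Complex.isCoveringMapOn_exp.existsUnique_continuousMap_lifts
    (⟨f, hf⟩ : C(X, ℂ)) (a₀ := x₀) (e₀ := Complex.log (f x₀)) (Complex.exp_log (h0 x₀))
    (fun x => h0 x)
  exact ⟨F, F.continuous, fun x => congrFun hF x⟩

theorem exists_log_continuousOn_Icc {a b : ℝ} (hab : a ≤ b) {f : ℝ → ℂ}
    (hf : ContinuousOn f (Set.Icc a b)) (h0 : ∀ t ∈ Set.Icc a b, f t ≠ 0) :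
    ∃ g : ℝ → ℂ, Continuous g ∧ ∀ t ∈ Set.Icc a b, Complex.exp (g t) = f t := by
  have hc : Continuous fun t => f (Set.projIcc a b hab t) :=
    hf.comp_continuous (continuous_subtype_val.comp continuous_projIcc)
      fun t => (Set.projIcc a b hab t).2
  obtain ⟨g, hg, hgf⟩ := exists_continuous_log hc fun t => h0 _ (Set.projIcc a b hab t).2
  exact ⟨g, hg, fun t ht => by rw [hgf, Set.projIcc_of_mem hab ht]⟩

theorem continuousOn_comp_invFunOn {X Y Z : Type*} [TopologicalSpace X] [TopologicalSpace Y]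
    [TopologicalSpace Z] [T2Space Y] [Nonempty X] {γ : X → Y} {s : Set X} (hs : IsCompact s)
    (hγ : ContinuousOn γ s) (hinj : Set.InjOn γ s) {φ : X → Z} (hφ : ContinuousOn φ s) :
    ContinuousOn (φ ∘ Function.invFunOn γ s) (γ '' s) := by
  have : CompactSpace s := isCompact_iff_compactSpace.1 hs
  let π : s → γ '' s := fun t => ⟨γ t, Set.mem_image_of_mem _ t.2⟩
  have hπ : Continuous π := (continuousOn_iff_continuous_domRestrict.1 hγ).subtype_mk _
  have hsurj : Function.Surjective π := by
    rintro ⟨_, t, ht, rfl⟩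
    exact ⟨⟨t, ht⟩, rfl⟩
  have hcomp : (γ '' s).domRestrict (φ ∘ Function.invFunOn γ s) ∘ π = s.domRestrict φ :=
    funext fun t => congrArg φ (hinj.leftInvOn_invFunOn t.2)
  rw [continuousOn_iff_continuous_domRestrict,
    (hπ.isClosedMap.isQuotientMap hπ hsurj).continuous_iff, hcomp]
  exact continuousOn_iff_continuous_domRestrict.1 hφ

/-! ### Simple arcs -/

/-- `A` is a simple arc from `x` to `y`: the edges of a plane drawing are such arcs. As in
`PlaneEmbedding`, the parametrization is a total function restricted to `[0, 1]`. -/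
def IsArc (A : Set ℂ) (x y : ℂ) : Prop :=
  ∃ γ : ℝ → ℂ, ContinuousOn γ (Set.Icc 0 1) ∧ Set.InjOn γ (Set.Icc 0 1) ∧
    γ 0 = x ∧ γ 1 = y ∧ A = γ '' Set.Icc 0 1

theorem isArc_image {a b : ℝ} (hab : a < b) {γ : ℝ → ℂ} (hγ : ContinuousOn γ (Set.Icc a b))
    (hinj : Set.InjOn γ (Set.Icc a b)) : IsArc (γ '' Set.Icc a b) (γ a) (γ b) := by
  have himg : (fun t : ℝ => (b - a) * t + a) '' Set.Icc 0 1 = Set.Icc a b := by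
    rw [Set.image_affine_Icc' (sub_pos.2 hab)]
    simp
  have hmaps : Set.MapsTo (fun t : ℝ => (b - a) * t + a) (Set.Icc 0 1) (Set.Icc a b) :=
    Set.mapsTo_iff_image_subset.2 himg.subset
  refine ⟨γ ∘ fun t => (b - a) * t + a, hγ.comp (by fun_prop) hmaps, ?_, by simp, by simp, ?_⟩
  · exact hinj.comp (fun s _ t _ h => by simpa [(sub_pos.2 hab).ne'] using h) hmaps
  · rw [Set.image_comp, himg]

theorem isArc_segment {x y : ℂ} (h : x ≠ y) : IsArc (segment ℝ x y) x y :=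
  ⟨AffineMap.lineMap x y, AffineMap.lineMap_continuous.continuousOn,
    (AffineMap.lineMap_injective ℝ h).injOn, by simp, by simp, segment_eq_image_lineMap ℝ x y⟩

namespace IsArc

variable {A B : Set ℂ} {x y b : ℂ}

theorem symm (h : IsArc A x y) : IsArc A y x := by
  obtain ⟨γ, hγ, hinj, rfl, rfl, rfl⟩ := h
  have himg : (fun t : ℝ => 1 - t) '' Set.Icc 0 1 = Set.Icc 0 1 := by simp
  have hmaps : Set.MapsTo (fun t : ℝ => 1 - t) (Set.Icc 0 1) (Set.Icc 0 1) :=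
    Set.mapsTo_iff_image_subset.2 himg.subset
  refine ⟨γ ∘ fun t => 1 - t, hγ.comp (by fun_prop) hmaps, ?_, by simp, by simp, ?_⟩
  · exact hinj.comp (fun s _ t _ h => by simpa using h) hmaps
  · rw [Set.image_comp, himg]

theorem left_mem (h : IsArc A x y) : x ∈ A := by
  obtain ⟨γ, -, -, rfl, -, rfl⟩ := h
  exact ⟨0, by simp, rfl⟩

theorem right_mem (h : IsArc A x y) : y ∈ A := h.symm.left_mem

theorem isCompact (h : IsArc A x y) : IsCompact A := by
  obtain ⟨γ, hγ, -, -, -, rfl⟩ := h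
  exact isCompact_Icc.image_of_continuousOn hγ

theorem isClosed (h : IsArc A x y) : IsClosed A := h.isCompact.isClosed

theorem hasLogOn (h : IsArc A x y) {f : ℂ → ℂ} (hf : ContinuousOn f A)
    (h0 : ∀ z ∈ A, f z ≠ 0) : HasLogOn A f := by
  obtain ⟨γ, hγ, hinj, -, -, rfl⟩ := h
  obtain ⟨φ, hφ, hφf⟩ := exists_log_continuousOn_Icc zero_le_one
    (hf.comp hγ (Set.mapsTo_image _ _)) fun t ht => h0 _ (Set.mem_image_of_mem _ ht)
  refine ⟨φ ∘ Function.invFunOn γ (Set.Icc 0 1),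
    continuousOn_comp_invFunOn isCompact_Icc hγ hinj hφ.continuousOn, ?_⟩
  rintro _ ⟨t, ht, rfl⟩
  rw [Function.comp_apply, hinj.leftInvOn_invFunOn ht, hφf t ht, Function.comp_apply]

theorem exists_diff_eq_image_Ioo (h : IsArc A x y) : ∃ γ : ℝ → ℂ, ContinuousOn γ (Set.Icc 0 1) ∧
    A = γ '' Set.Icc 0 1 ∧ A \ {x, y} = γ '' Set.Ioo 0 1 := by
  obtain ⟨γ, hγ, hinj, rfl, rfl, rfl⟩ := h
  refine ⟨γ, hγ, rfl, ?_⟩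
  have hends : ({0, 1} : Set ℝ) ⊆ Set.Icc 0 1 := by
    rintro t (rfl | rfl) <;> simp
  rw [← Set.image_pair, ← hinj.image_sdiff_subset hends, Set.Icc_sdiff_both]

theorem isPreconnected (h : IsArc A x y) : IsPreconnected A := by
  obtain ⟨γ, hγ, -, -, -, rfl⟩ := h
  exact isPreconnected_Icc.image _ hγ

theorem isPreconnected_diff (h : IsArc A x y) : IsPreconnected (A \ {x, y}) := by
  obtain ⟨γ, hγ, -, hdiff⟩ := h.exists_diff_eq_image_Ioo
  exact hdiff ▸ isPreconnected_Ioo.image _ (hγ.mono Set.Ioo_subset_Icc_self)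

theorem nonempty_diff (h : IsArc A x y) : (A \ {x, y}).Nonempty := by
  obtain ⟨γ, -, -, hdiff⟩ := h.exists_diff_eq_image_Ioo
  exact hdiff ▸ (Set.nonempty_Ioo.2 one_pos).image γ

theorem subset_closure_diff (h : IsArc A x y) : A ⊆ closure (A \ {x, y}) := by
  obtain ⟨γ, hγ, rfl, hdiff⟩ := h.exists_diff_eq_image_Ioo
  have hcl : closure (Set.Ioo (0 : ℝ) 1) = Set.Icc 0 1 := closure_Ioo zero_ne_one
  rw [hdiff, ← hcl]
  exact (hγ.mono hcl.subset).image_closure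

theorem exists_param_Icc_one_two (h : IsArc A x y) : ∃ γ : ℝ → ℂ, ContinuousOn γ (Set.Icc 1 2) ∧
    Set.InjOn γ (Set.Icc 1 2) ∧ γ 1 = x ∧ γ 2 = y ∧ A = γ '' Set.Icc 1 2 := by
  obtain ⟨γ, hγ, hinj, rfl, rfl, rfl⟩ := h
  have himg : (fun t : ℝ => t - 1) '' Set.Icc 1 2 = Set.Icc 0 1 := by norm_num
  have hmaps : Set.MapsTo (fun t : ℝ => t - 1) (Set.Icc 1 2) (Set.Icc 0 1) :=
    Set.mapsTo_iff_image_subset.2 himg.subset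
  refine ⟨γ ∘ fun t => t - 1, hγ.comp (by fun_prop) hmaps,
    hinj.comp (sub_left_injective.injOn) hmaps, by simp, by norm_num, ?_⟩
  rw [Set.image_comp, himg]

theorem union (hA : IsArc A x b) (hB : IsArc B b y) (hAB : A ∩ B ⊆ {b}) :
    IsArc (A ∪ B) x y := by
  obtain ⟨γ, hγ, hinj, rfl, rfl, rfl⟩ := hA
  obtain ⟨η, hη, hinj', hb, rfl, rfl⟩ := hB.exists_param_Icc_one_two
  let φ : ℝ → ℂ := fun t => if t ≤ 1 then γ t else η t
  have hφγ : Set.EqOn φ γ (Set.Icc 0 1) := fun t ht => if_pos ht.2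
  have hφη : Set.EqOn φ η (Set.Icc 1 2) := by
    intro t ht
    rcases ht.1.eq_or_lt with rfl | h
    · exact (if_pos le_rfl).trans hb.symm
    · exact if_neg (not_le.2 h)
  have hunion : Set.Icc (0 : ℝ) 1 ∪ Set.Icc 1 2 = Set.Icc 0 2 :=
    Set.Icc_union_Icc_eq_Icc zero_le_one one_le_two
  have hcont : ContinuousOn φ (Set.Icc 0 2) := hunion ▸
    (hγ.congr hφγ).union_of_isClosed (hη.congr hφη) isClosed_Icc isClosed_Icc
  have hcross : ∀ s ∈ Set.Icc (0 : ℝ) 1, ∀ t ∈ Set.Icc (1 : ℝ) 2, φ s = φ t → s = t := by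
    intro s hs t ht hst
    rw [hφγ hs, hφη ht] at hst
    have hs1 : γ s = γ 1 := hAB ⟨⟨s, hs, rfl⟩, ⟨t, ht, hst.symm⟩⟩
    have ht1 : η t = η 1 := by rw [hb, ← hs1, hst]
    rw [hinj hs (by simp) hs1, hinj' ht (by norm_num) ht1]
  have hinjφ : Set.InjOn φ (Set.Icc 0 2) := by
    rw [← hunion]
    rintro s (hs | hs) t (ht | ht) hst
    · exact hinj hs ht (by rwa [hφγ hs, hφγ ht] at hst)
    · exact hcross s hs t ht hst
    · exact (hcross t ht s hs hst.symm).symm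
    · exact hinj' hs ht (by rwa [hφη hs, hφη ht] at hst)
  have harc := isArc_image two_pos hcont hinjφ
  rwa [← hunion, Set.image_union, hφγ.image_eq, hφη.image_eq, hφγ (by simp),
    hφη (by norm_num)] at harc

theorem exists_first_hit (h : IsArc A x y) (hB : IsClosed B) (hx : x ∉ B) (hy : y ∈ B) :
    ∃ A' b, IsArc A' x b ∧ A' ⊆ A ∧ b ∈ B ∧ A' ∩ B ⊆ {b} ∧ b ∈ closure Bᶜ := by
  obtain ⟨γ, hγ, hinj, rfl, rfl, rfl⟩ := h
  have hcomp : IsCompact (Set.Icc 0 1 ∩ γ ⁻¹' B) :=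
    isCompact_Icc.of_isClosed_subset (hγ.preimage_isClosed_of_isClosed isClosed_Icc hB)
      Set.inter_subset_left
  obtain ⟨t, ⟨ht, htB⟩, hmin⟩ := hcomp.exists_isLeast ⟨1, by simp, hy⟩
  have ht0 : 0 < t := lt_of_le_of_ne ht.1 (by rintro rfl; exact hx htB)
  have hsub : Set.Icc 0 t ⊆ Set.Icc 0 1 := Set.Icc_subset_Icc le_rfl ht.2
  have hbefore : ∀ s ∈ Set.Ico 0 t, γ s ∈ Bᶜ := fun s hs hsB =>
    not_lt.2 (hmin ⟨⟨hs.1, hs.2.le.trans ht.2⟩, hsB⟩) hs.2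
  refine ⟨γ '' Set.Icc 0 t, γ t, isArc_image ht0 (hγ.mono hsub) (hinj.mono hsub),
    Set.image_mono hsub, htB, ?_, ?_⟩
  · rintro _ ⟨⟨s, hs, rfl⟩, hsB⟩
    rcases hs.2.eq_or_lt with rfl | hlt
    · rfl
    · exact absurd hsB (hbefore s ⟨hs.1, hlt⟩)
  · have hcl : closure (Set.Ico 0 t) = Set.Icc 0 t := closure_Ico ht0.ne
    exact closure_mono (Set.image_subset_iff.2 (show Set.Ico 0 t ⊆ γ ⁻¹' Bᶜ from hbefore))
      ((hγ.mono (hcl.subset.trans hsub)).image_closure ⟨t, hcl ▸ ⟨ht0.le, le_rfl⟩, rfl⟩)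

theorem exists_cut (h : IsArc A x y) {w : ℂ} (hw : w ∈ A \ {x, y}) {W : Set ℂ}
    (hW : W ∈ nhds w) : ∃ A₁ A₂ a₁ a₂, IsArc A₁ x a₁ ∧ IsArc A₂ a₂ y ∧ A₁ ⊆ A \ {w, y} ∧
      A₂ ⊆ A \ {w, x} ∧ Disjoint A₁ A₂ ∧ A ⊆ A₁ ∪ A₂ ∪ W := by
  obtain ⟨γ, hγ, hinj, rfl, rfl, rfl⟩ := h
  obtain ⟨⟨t, ht, rfl⟩, hne⟩ := hw
  have ht0 : 0 < t := lt_of_le_of_ne ht.1 fun h => hne (by simp [← h])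
  have ht1 : t < 1 := lt_of_le_of_ne ht.2 fun h => hne (by simp [h])
  have hnhds : Set.Ioo 0 1 ∩ γ ⁻¹' W ∈ nhds t := Filter.inter_mem (Ioo_mem_nhds ht0 ht1)
    ((hγ.continuousAt (Icc_mem_nhds ht0 ht1)).preimage_mem_nhds hW)
  obtain ⟨l, u, htlu, hlu⟩ := mem_nhds_iff_exists_Ioo_subset.1 hnhds
  obtain ⟨s₁, hls₁, hs₁t⟩ := exists_between htlu.1
  obtain ⟨s₂, hts₂, hs₂u⟩ := exists_between htlu.2
  have hs₁ := (hlu ⟨hls₁, hs₁t.trans htlu.2⟩).1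
  have hs₂ := (hlu ⟨htlu.1.trans hts₂, hs₂u⟩).1
  have hsub₁ : Set.Icc 0 s₁ ⊆ Set.Icc 0 1 := Set.Icc_subset_Icc le_rfl hs₁.2.le
  have hsub₂ : Set.Icc s₂ 1 ⊆ Set.Icc 0 1 := Set.Icc_subset_Icc hs₂.1.le le_rfl
  have hdiff : ∀ I ⊆ Set.Icc (0 : ℝ) 1, ∀ r ∈ Set.Icc (0 : ℝ) 1, t ∉ I → r ∉ I →
      γ '' I ⊆ γ '' Set.Icc 0 1 \ {γ t, γ r} := by
    rintro I hI r hr htI hrI _ ⟨s, hs, rfl⟩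
    refine ⟨⟨s, hI hs, rfl⟩, ?_⟩
    rintro (hst | hst)
    · exact htI (hinj (hI hs) ht hst ▸ hs)
    · exact hrI (hinj (hI hs) hr hst ▸ hs)
  refine ⟨γ '' Set.Icc 0 s₁, γ '' Set.Icc s₂ 1, γ s₁, γ s₂,
    isArc_image hs₁.1 (hγ.mono hsub₁) (hinj.mono hsub₁),
    isArc_image hs₂.2 (hγ.mono hsub₂) (hinj.mono hsub₂),
    hdiff _ hsub₁ 1 (by simp) (fun h => h.2.not_gt hs₁t) (fun h => h.2.not_gt hs₁.2),
    hdiff _ hsub₂ 0 (by simp) (fun h => h.1.not_gt hts₂) (fun h => h.1.not_gt hs₂.1), ?_, ?_⟩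
  · refine Set.disjoint_image_image fun r hr s hs hrs => ?_
    have := hinj (hsub₁ hr) (hsub₂ hs) hrs
    linarith [hr.2, hs.1]
  · rintro _ ⟨s, hs, rfl⟩
    rcases le_or_gt s s₁ with h₁ | h₁
    · exact .inl (.inl ⟨s, ⟨hs.1, h₁⟩, rfl⟩)
    rcases le_or_gt s₂ s with h₂ | h₂
    · exact .inl (.inr ⟨s, ⟨h₂, hs.2⟩, rfl⟩)
    · exact .inr (hlu ⟨hls₁.trans h₁, h₂.trans hs₂u⟩).2

end IsArc

/-! ### Separation of points by compact sets -/

theorem continuousOn_sub_div_sub {S : Set ℂ} {p q : ℂ} (hq : q ∉ S) :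
    ContinuousOn (fun z => (z - p) / (z - q)) S :=
  (continuousOn_id.sub continuousOn_const).div (continuousOn_id.sub continuousOn_const)
    fun _ hz h => hq (sub_eq_zero.1 h ▸ hz)

theorem sub_div_sub_ne_zero {S : Set ℂ} {p q : ℂ} (hp : p ∉ S) (hq : q ∉ S) :
    ∀ z ∈ S, (z - p) / (z - q) ≠ 0 := fun _ hz =>
  div_ne_zero (fun h => hp (sub_eq_zero.1 h ▸ hz)) (fun h => hq (sub_eq_zero.1 h ▸ hz))

theorem IsArc.hasLogOn_sub_div_sub {A : Set ℂ} {x y p q : ℂ} (h : IsArc A x y) (hp : p ∉ A)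
    (hq : q ∉ A) : HasLogOn A (fun z => (z - p) / (z - q)) :=
  h.hasLogOn (continuousOn_sub_div_sub hq) (sub_div_sub_ne_zero hp hq)

theorem HasLogOn.sub_div_sub_swap {S : Set ℂ} {p q : ℂ}
    (h : HasLogOn S (fun z => (z - p) / (z - q))) : HasLogOn S (fun z => (z - q) / (z - p)) :=
  h.inv.congr fun _ _ => inv_div _ _

theorem hasLogOn_sub_div_sub_of_ball_subset {K : Set ℂ} {p q : ℂ} {ε : ℝ}
    (hball : Metric.ball q ε ⊆ Kᶜ) (hp : p ∈ Metric.ball q ε) :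
    HasLogOn K (fun z => (z - p) / (z - q)) := by
  have hε : 0 < ε := dist_nonneg.trans_lt hp
  have hq : q ∉ K := hball (Metric.mem_ball_self hε)
  refine .of_mem_slitPlane (continuousOn_sub_div_sub hq) fun z hz => ?_
  have hzq : z - q ≠ 0 := fun h => hq (sub_eq_zero.1 h ▸ hz)
  have hle : ε ≤ ‖z - q‖ := le_of_not_gt fun h => hball (mem_ball_iff_norm.2 h) hz
  have hlt : ‖p - q‖ < ‖z - q‖ := (mem_ball_iff_norm.1 hp).trans_le hle
  have hsplit : (z - p) / (z - q) = 1 + -((p - q) / (z - q)) := by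
    field_simp
    ring
  rw [hsplit]
  apply Complex.mem_slitPlane_of_norm_lt_one
  rwa [norm_neg, norm_div, div_lt_one (norm_pos_iff.2 hzq)]

theorem hasLogOn_of_isPreconnected {K C : Set ℂ} (hK : IsClosed K) (hC : IsPreconnected C)
    (hCK : C ⊆ Kᶜ) {p q : ℂ} (hp : p ∈ C) (hq : q ∈ C) :
    HasLogOn K (fun z => (z - p) / (z - q)) := by
  refine hC.induction₂ (fun p q => HasLogOn K (fun z => (z - p) / (z - q))) ?_ ?_ ?_ hp hq
  · intro x hx
    obtain ⟨ε, hε, hball⟩ := Metric.isOpen_iff.1 hK.isOpen_compl x (hCK hx)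
    filter_upwards [nhdsWithin_le_nhds (Metric.ball_mem_nhds x hε)] with y hy
    exact (hasLogOn_sub_div_sub_of_ball_subset hball hy).sub_div_sub_swap
  · intro x y w _ hy _ h h'
    exact (h.mul h').congr fun z hz =>
      div_mul_div_cancel₀ fun hzy => hCK hy (sub_eq_zero.1 hzy ▸ hz)
  · exact fun _ _ _ _ h => h.sub_div_sub_swap

theorem isPreconnected_setOf_norm_sub_mem (c : ℂ) {S : Set ℝ} (hS : IsPreconnected S)
    (h0 : S ⊆ Set.Ici 0) : IsPreconnected {z : ℂ | ‖z - c‖ ∈ S} := by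
  have hpolar : {z : ℂ | ‖z - c‖ ∈ S} =
      (fun x : ℝ × ℝ => c + x.1 * Complex.exp (x.2 * Complex.I)) '' (S ×ˢ Set.univ) := by
    ext z
    constructor
    · intro hz
      exact ⟨(‖z - c‖, (z - c).arg), ⟨hz, trivial⟩, by
        simp only [Complex.norm_mul_exp_arg_mul_I, add_sub_cancel]⟩
    · rintro ⟨⟨s, θ⟩, ⟨hs, -⟩, rfl⟩
      simpa [abs_of_nonneg (Set.mem_Ici.1 (h0 hs))] using hs
  rw [hpolar]
  exact (hS.prod isPreconnected_univ).image _ (by fun_prop)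

theorem isPreconnected_compl_closedBall (c : ℂ) {r : ℝ} (hr : 0 ≤ r) :
    IsPreconnected (Metric.closedBall c r)ᶜ := by
  convert isPreconnected_setOf_norm_sub_mem c (isPreconnected_Ioi (a := r))
    fun _ h => hr.trans (le_of_lt h) using 1
  ext z
  simp [dist_eq_norm]

theorem isPreconnected_ball_diff_center (c : ℂ) (r : ℝ) :
    IsPreconnected (Metric.ball c r \ {c}) := by
  convert isPreconnected_setOf_norm_sub_mem c (isPreconnected_Ioo (a := 0) (b := r))
    fun _ h => h.1.le using 1
  ext z
  simp [dist_eq_norm, sub_eq_zero, and_comm]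

theorem mem_connectedComponentIn_of_mem_closure {K : Set ℂ} (hK : IsClosed K) {p z : ℂ}
    (hz : z ∈ closure (connectedComponentIn Kᶜ p)) (hzK : z ∉ K) :
    z ∈ connectedComponentIn Kᶜ p := by
  obtain ⟨w, hwz, hwp⟩ := mem_closure_iff.1 hz _ hK.isOpen_compl.connectedComponentIn
    (mem_connectedComponentIn hzK)
  rw [connectedComponentIn_eq hwp, ← connectedComponentIn_eq hwz]
  exact mem_connectedComponentIn hzK

theorem frontier_connectedComponentIn_subset {K : Set ℂ} (hK : IsClosed K) (p : ℂ) :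
    frontier (connectedComponentIn Kᶜ p) ⊆ K := by
  intro z hz
  by_contra hzK
  rw [hK.isOpen_compl.connectedComponentIn.frontier_eq] at hz
  exact hz.2 (mem_connectedComponentIn_of_mem_closure hK hz.1 hzK)

theorem exists_eq_zero_of_eqOn_compl_closedBall {F : ℂ → ℂ} (hF : Continuous F) {p : ℂ} {r : ℝ}
    (h : Set.EqOn F (fun z => z - p) (Metric.closedBall p r)ᶜ) : ∃ z, F z = 0 := by
  by_contra! h0
  obtain ⟨L, hL, hLF⟩ := exists_continuous_log hF h0
  let R : ℝ := max r 0 + 1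
  have hR : 0 < R := by positivity
  let circle : ℝ → ℂ := fun θ => p + R * Complex.exp (θ * Complex.I)
  have hcircle : ∀ θ, Complex.exp (L (circle θ)) =
      Complex.exp (Complex.log R + θ * Complex.I) := by
    intro θ
    have hout : circle θ ∈ (Metric.closedBall p r)ᶜ := by
      have : r < R := (le_max_left r 0).trans_lt (lt_add_one _)
      simpa [circle, dist_eq_norm, abs_of_pos hR] using this
    rw [hLF, h hout, Complex.exp_add, Complex.exp_log (by exact_mod_cast hR.ne'),
      show (fun z => z - p) (circle θ) = _ from add_sub_cancel_left _ _]
  have hjump := sub_eq_sub_of_exp_eq isPreconnected_univ (g := fun θ => L (circle θ))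
    (by fun_prop) (by fun_prop) (fun θ _ => hcircle θ) (Set.mem_univ 0)
    (Set.mem_univ (2 * Real.pi))
  simp [circle, Complex.exp_two_pi_mul_I, Real.pi_ne_zero] at hjump

theorem not_hasLogOn_of_isBounded {K : Set ℂ} (hK : IsClosed K) {p q : ℂ} (hp : p ∉ K) (hq : q ∉ K)
    (hpq : q ∉ connectedComponentIn Kᶜ p)
    (hb : Bornology.IsBounded (connectedComponentIn Kᶜ p)) :
    ¬ HasLogOn K (fun z => (z - p) / (z - q)) := by
  classical
  rintro ⟨g, hg, hgf⟩
  obtain ⟨L, hL⟩ := ContinuousMap.exists_restrict_eq hK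
    (⟨K.domRestrict g, continuousOn_iff_continuous_domRestrict.1 hg⟩ : C(K, ℂ))
  have hLg : ∀ z ∈ K, L z = g z := fun z hz => DFunLike.congr_fun hL ⟨z, hz⟩
  -- `z - p` continues into the component of `p` as a function without zeros.
  let F : ℂ → ℂ := (connectedComponentIn Kᶜ p).piecewise
    (fun z => (z - q) * Complex.exp (L z)) (fun z => z - p)
  have hF : Continuous F := by
    refine continuous_piecewise (fun z hz => ?_) (by fun_prop) (by fun_prop)
    have hzK : z ∈ K := frontier_connectedComponentIn_subset hK p hz
    rw [hLg z hzK, hgf z hzK]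
    exact mul_div_cancel₀ _ fun h => hq (sub_eq_zero.1 h ▸ hzK)
  obtain ⟨r, hr⟩ := (Metric.isBounded_iff_subset_closedBall p).1 hb
  obtain ⟨z, hz⟩ := exists_eq_zero_of_eqOn_compl_closedBall hF (p := p) (r := r)
    fun z hz => Set.piecewise_eq_of_notMem _ _ _ fun h => hz (hr h)
  by_cases hzU : z ∈ connectedComponentIn Kᶜ p
  · rw [show F z = (z - q) * Complex.exp (L z) from Set.piecewise_eq_of_mem _ _ _ hzU] at hz
    refine mul_ne_zero (sub_ne_zero.2 ?_) (Complex.exp_ne_zero _) hz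
    rintro rfl
    exact hpq hzU
  · rw [show F z = z - p from Set.piecewise_eq_of_notMem _ _ _ hzU] at hz
    obtain rfl := sub_eq_zero.1 hz
    exact hzU (mem_connectedComponentIn hp)

theorem mem_connectedComponentIn_of_not_isBounded {K : Set ℂ} (hK : Bornology.IsBounded K)
    {p q : ℂ} (hq : q ∉ K) (hpb : ¬ Bornology.IsBounded (connectedComponentIn Kᶜ p))
    (hqb : ¬ Bornology.IsBounded (connectedComponentIn Kᶜ q)) :
    q ∈ connectedComponentIn Kᶜ p := by
  obtain ⟨r, hr, hKr⟩ := hK.subset_closedBall_lt 0 0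
  have houtside : ∀ {S : Set ℂ}, ¬ Bornology.IsBounded S → ∃ x ∈ S, x ∉ Metric.closedBall 0 r :=
    fun hS => Set.not_subset.1 fun h => hS (Metric.isBounded_closedBall.subset h)
  obtain ⟨x, hx, hxr⟩ := houtside hpb
  obtain ⟨y, hy, hyr⟩ := houtside hqb
  have hyx : y ∈ connectedComponentIn Kᶜ x := (isPreconnected_compl_closedBall 0 hr.le)
    |>.subset_connectedComponentIn hxr (Set.compl_subset_compl.2 hKr) hyr
  rw [connectedComponentIn_eq hx, connectedComponentIn_eq hyx, ← connectedComponentIn_eq hy]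
  exact mem_connectedComponentIn hq

theorem mem_connectedComponentIn_of_hasLogOn {K : Set ℂ} (hK : IsCompact K) {p q : ℂ} (hp : p ∉ K)
    (hq : q ∉ K) (h : HasLogOn K (fun z => (z - p) / (z - q))) :
    q ∈ connectedComponentIn Kᶜ p := by
  by_contra hpq
  have hqp : p ∉ connectedComponentIn Kᶜ q := fun hcon =>
    hpq (connectedComponentIn_eq hcon ▸ mem_connectedComponentIn hq)
  exact hpq <| mem_connectedComponentIn_of_not_isBounded hK.isBounded hq
    (fun hb => not_hasLogOn_of_isBounded hK.isClosed hp hq hpq hb h)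
    (fun hb => not_hasLogOn_of_isBounded hK.isClosed hq hp hqp hb h.sub_div_sub_swap)

theorem mem_connectedComponentIn_union_isArc {K A : Set ℂ} {x y b p q : ℂ} (hK : IsCompact K)
    (hA : IsArc A x y) (hKA : K ∩ A ⊆ {b}) (hp : p ∉ K ∪ A) (hq : q ∉ K ∪ A)
    (h : q ∈ connectedComponentIn Kᶜ p) : q ∈ connectedComponentIn (K ∪ A)ᶜ p := by
  rw [Set.mem_union, not_or] at hp hq
  have hlogK := hasLogOn_of_isPreconnected hK.isClosed isPreconnected_connectedComponentIn
    (connectedComponentIn_subset _ _) (mem_connectedComponentIn hp.1) h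
  have hlogA := hA.hasLogOn_sub_div_sub hp.2 hq.2
  exact mem_connectedComponentIn_of_hasLogOn (hK.union hA.isCompact) (not_or.2 hp) (not_or.2 hq)
    (hlogK.union hK.isClosed hA.isClosed hKA hlogA)

/-- Otherwise some `w ∈ A` is away from the component `R` of `p`. Now `K` does not separate `p` from
`w`, as one can walk inside `R` to `A` and then along `A`; hence neither does `K` together with two
disjoint end pieces of `A`, and no point of `R` is near the remaining piece of `A`. -/
theorem IsArc.subset_closure_connectedComponentIn {A K : Set ℂ} {x y p z : ℂ} (hA : IsArc A x y)
    (hK : IsCompact K) (hKA : K ∩ A ⊆ {x, y}) (hp : p ∉ K ∪ A) (hz : z ∈ A \ {x, y})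
    (hzp : z ∈ closure (connectedComponentIn (K ∪ A)ᶜ p)) :
    A ⊆ closure (connectedComponentIn (K ∪ A)ᶜ p) := by
  refine hA.subset_closure_diff.trans (closure_minimal (fun w hw => ?_) isClosed_closure)
  by_contra hwcl
  have hpR := mem_connectedComponentIn (F := (K ∪ A)ᶜ) hp
  have hinner : A \ {x, y} ⊆ Kᶜ := fun v hv hvK => hv.2 (hKA ⟨hvK, hv.1⟩)
  have hwK : w ∈ connectedComponentIn Kᶜ p := by
    have hpath : IsPreconnected (insert z (connectedComponentIn (K ∪ A)ᶜ p) ∪ A \ {x, y}) :=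
      IsPreconnected.union z (Set.mem_insert z _) hz
        (isPreconnected_connectedComponentIn.subset_closure (Set.subset_insert _ _)
          (Set.insert_subset hzp subset_closure)) hA.isPreconnected_diff
    refine hpath.subset_connectedComponentIn (.inl (.inr hpR)) (Set.union_subset
      (Set.insert_subset (hinner hz) ((connectedComponentIn_subset _ _).trans
        (Set.compl_subset_compl.2 Set.subset_union_left))) hinner) (.inr hw)
  obtain ⟨A₁, A₂, a₁, a₂, hA₁, hA₂, hA₁A, hA₂A, hdisj, hcover⟩ :=
    hA.exists_cut hw (isClosed_closure.isOpen_compl.mem_nhds hwcl)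
  have hKA₁ : K ∩ A₁ ⊆ {x} := fun v hv =>
    (hKA ⟨hv.1, (hA₁A hv.2).1⟩).resolve_right fun h => (hA₁A hv.2).2 (.inr h)
  have hKA₂ : (K ∪ A₁) ∩ A₂ ⊆ {y} := by
    rintro v ⟨hv | hv, hv₂⟩
    · exact (hKA ⟨hv, (hA₂A hv₂).1⟩).resolve_left fun h => (hA₂A hv₂).2 (.inr h)
    · exact (Set.disjoint_left.1 hdisj hv hv₂).elim
  have hsub : K ∪ A₁ ∪ A₂ ⊆ K ∪ A := Set.union_subset
    (Set.union_subset_union_right K fun v hv => (hA₁A hv).1) fun v hv => .inr (hA₂A hv).1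
  have hpnot : p ∉ K ∪ A₁ ∪ A₂ := fun h => hp (hsub h)
  have hwnot : w ∉ K ∪ A₁ ∪ A₂ := by
    rintro ((h | h) | h)
    exacts [hinner hw h, (hA₁A h).2 (.inl rfl), (hA₂A h).2 (.inl rfl)]
  have hwcut := mem_connectedComponentIn_union_isArc (hK.union hA₁.isCompact) hA₂ hKA₂ hpnot hwnot
    (mem_connectedComponentIn_union_isArc hK hA₁ hKA₁ (fun h => hpnot (.inl h))
      (fun h => hwnot (.inl h)) hwK)
  have hKAcl : IsClosed (K ∪ A) := hK.isClosed.union hA.isClosed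
  refine hwcl (subset_closure (isPreconnected_connectedComponentIn.subset_of_closure_inter_subset
    hKAcl.isOpen_compl.connectedComponentIn ⟨p, mem_connectedComponentIn hpnot, hpR⟩ ?_ hwcut))
  rintro v ⟨hvcl, hv⟩
  have hvnot := connectedComponentIn_subset _ _ hv
  refine mem_connectedComponentIn_of_mem_closure hKAcl hvcl ?_
  rintro (hvK | hvA)
  · exact hvnot (.inl (.inl hvK))
  · rcases hcover hvA with (h | h) | h
    exacts [hvnot (.inl (.inr h)), hvnot (.inr h), h hvcl]

theorem norm_eq_of_mem_closure_compl {c b : ℂ} {r : ℝ} (hb : b ∈ Metric.closedBall c r)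
    (hb' : b ∈ closure (Metric.closedBall c r)ᶜ) : ‖b - c‖ = r := by
  have hsub : (Metric.closedBall c r)ᶜ ⊆ {z | r ≤ ‖z - c‖} := fun z hz =>
    (not_le.1 fun h => hz (mem_closedBall_iff_norm.2 h)).le
  exact le_antisymm (mem_closedBall_iff_norm.1 hb)
    (closure_minimal hsub (isClosed_le continuous_const (by fun_prop)) hb')

/-! ### Skeletons and regions of a plane graph -/

theorem exists_subsingleton_neighborSet_inter [Finite V] {H : SimpleGraph V} (hH : H.IsAcyclic)
    {S : Set V} (hS : S.Nonempty) : ∃ u ∈ S, (H.neighborSet u ∩ S).Subsingleton := by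
  classical
  obtain hsub | hnt := S.subsingleton_or_nontrivial
  · exact ⟨_, hS.some_mem, hsub.anti Set.inter_subset_right⟩
  have := Fintype.ofFinite S
  have := hnt.coe_sort
  obtain ⟨T, hle, -, hT⟩ :=
    (connected_top (V := S)).exists_isTree_le_of_le_of_isAcyclic le_top (hH.induce S)
  obtain ⟨u, hu⟩ := hT.exists_vert_degree_one_of_nontrivial
  obtain ⟨w, -, hw⟩ := degree_eq_one_iff_existsUnique_adj.1 hu
  have huniq : ∀ x ∈ H.neighborSet u ∩ S, x = w := fun x hx =>
    congrArg Subtype.val (hw ⟨x, hx.2⟩ (hle hx.1))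
  exact ⟨u, u.2, fun x hx y hy => (huniq x hx).trans (huniq y hy).symm⟩

namespace PlaneEmbedding

variable {G : SimpleGraph V} (E : PlaneEmbedding G)

/-- The vertices in `S` together with the arcs of the edges of `H` inside `S`. -/
def trace (H : SimpleGraph V) (S : Set V) : Set ℂ :=
  E.vtx '' S ∪ ⋃ (u ∈ S) (v ∈ S) (_ : H.Adj u v), E.arc u v

/-- The drawing of the subgraph `H`: all vertices, together with the arcs of the edges of `H`. -/
def skel (H : SimpleGraph V) : Set ℂ := E.trace H Set.univ

/-- The arc of an edge without its endpoints. -/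
def inner (u v : V) : Set ℂ := E.arc u v \ {E.vtx u, E.vtx v}

theorem isArc_arc {u v : V} (h : G.Adj u v) : IsArc (E.arc u v) (E.vtx u) (E.vtx v) :=
  E.arc_curve h

theorem mem_trace {H : SimpleGraph V} {S : Set V} {z : ℂ} : z ∈ E.trace H S ↔
    (∃ w ∈ S, E.vtx w = z) ∨ ∃ u ∈ S, ∃ v ∈ S, H.Adj u v ∧ z ∈ E.arc u v := by
  simp only [trace, Set.mem_union, Set.mem_image, Set.mem_iUnion, exists_prop]

theorem mem_skel {H : SimpleGraph V} {z : ℂ} :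
    z ∈ E.skel H ↔ (∃ w, E.vtx w = z) ∨ ∃ u v, H.Adj u v ∧ z ∈ E.arc u v := by
  simp [skel, mem_trace]

theorem inner_symm (u v : V) : E.inner u v = E.inner v u := by
  rw [inner, inner, E.arc_symm, Set.pair_comm]

theorem arc_eq_of_edge_eq {u v x y : V} (h : s(u, v) = s(x, y)) : E.arc u v = E.arc x y := by
  rcases Sym2.eq_iff.1 h with ⟨rfl, rfl⟩ | ⟨rfl, rfl⟩
  exacts [rfl, E.arc_symm _ _]

theorem vtx_mem_skel (H : SimpleGraph V) (w : V) : E.vtx w ∈ E.skel H :=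
  E.mem_skel.2 (.inl ⟨w, rfl⟩)

theorem arc_subset_skel {H : SimpleGraph V} {u v : V} (h : H.Adj u v) : E.arc u v ⊆ E.skel H :=
  fun _ hz => E.mem_skel.2 (.inr ⟨u, v, h, hz⟩)

theorem trace_mono (H : SimpleGraph V) {S T : Set V} (h : S ⊆ T) : E.trace H S ⊆ E.trace H T := by
  intro z hz
  rw [mem_trace] at hz ⊢
  exact hz.imp (fun ⟨w, hw, hz⟩ => ⟨w, h hw, hz⟩) fun ⟨u, hu, v, hv, hz⟩ => ⟨u, h hu, v, h hv, hz⟩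

theorem skel_mono {H H' : SimpleGraph V} (h : H ≤ H') : E.skel H ⊆ E.skel H' := by
  intro z hz
  rw [mem_skel] at hz ⊢
  exact hz.imp id fun ⟨u, v, huv, hz⟩ => ⟨u, v, h huv, hz⟩

theorem skel_eq_skel_deleteEdges_union {H : SimpleGraph V} {u v : V} (h : H.Adj u v) :
    E.skel H = E.skel (H.deleteEdges {s(u, v)}) ∪ E.arc u v := by
  refine Set.Subset.antisymm (fun z hz => ?_) (Set.union_subset (E.skel_mono (deleteEdges_le _))
    (E.arc_subset_skel h))
  rcases E.mem_skel.1 hz with ⟨w, rfl⟩ | ⟨x, y, hxy, hz⟩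
  · exact .inl (E.vtx_mem_skel _ w)
  · by_cases he : s(x, y) = s(u, v)
    · exact .inr (E.arc_eq_of_edge_eq he ▸ hz)
    · exact .inl (E.arc_subset_skel (by simp [hxy, he]) hz)

theorem left_mem_arc {u v : V} (h : G.Adj u v) : E.vtx u ∈ E.arc u v := (E.isArc_arc h).left_mem

theorem isCompact_trace [Finite V] {H : SimpleGraph V} (hH : H ≤ G) (S : Set V) :
    IsCompact (E.trace H S) := by
  refine ((Set.toFinite S).image _).isCompact.union ?_
  refine S.toFinite.isCompact_biUnion fun u _ => S.toFinite.isCompact_biUnion fun v _ => ?_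
  exact isCompact_iUnion fun h => (E.isArc_arc (hH h)).isCompact

theorem isCompact_skel [Finite V] {H : SimpleGraph V} (hH : H ≤ G) : IsCompact (E.skel H) :=
  E.isCompact_trace hH _

theorem vtx_notMem_inner {u v : V} (h : G.Adj u v) (w : V) : E.vtx w ∉ E.inner u v := by
  rintro ⟨h1, h2⟩
  rcases E.arc_vtx h w h1 with rfl | rfl <;> simp at h2

theorem edge_eq_of_mem_inner {u v x y : V} (h : G.Adj u v) (h' : G.Adj x y) {z : ℂ}
    (hz : z ∈ E.inner u v) (hz' : z ∈ E.arc x y) : s(u, v) = s(x, y) := by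
  by_contra hne
  exact hz.2 (E.arc_inter h h' hne ⟨hz.1, hz'⟩).1

theorem adj_of_mem_inner {H : SimpleGraph V} (hH : H ≤ G) {u v : V} (h : G.Adj u v) {z : ℂ}
    (hz : z ∈ E.inner u v) (hz' : z ∈ E.skel H) : H.Adj u v := by
  rcases E.mem_skel.1 hz' with ⟨w, rfl⟩ | ⟨x, y, hxy, hzxy⟩
  · exact absurd hz (E.vtx_notMem_inner h w)
  · have := E.edge_eq_of_mem_inner h (hH hxy) hz hzxy
    rwa [← SimpleGraph.mem_edgeSet, this]

theorem inner_nonempty {u v : V} (h : G.Adj u v) : (E.inner u v).Nonempty :=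
  (E.isArc_arc h).nonempty_diff

theorem arc_subset_closure_inner {u v : V} (h : G.Adj u v) : E.arc u v ⊆ closure (E.inner u v) :=
  (E.isArc_arc h).subset_closure_diff

theorem vtx_mem_trace_iff {H : SimpleGraph V} (hH : H ≤ G) {S : Set V} {w : V} :
    E.vtx w ∈ E.trace H S ↔ w ∈ S := by
  refine ⟨fun h => ?_, fun h => E.mem_trace.2 (.inl ⟨w, h, rfl⟩)⟩
  rcases E.mem_trace.1 h with ⟨x, hx, hxw⟩ | ⟨x, hx, y, hy, hxy, hw⟩
  · exact E.vtx_inj hxw ▸ hx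
  · rcases E.arc_vtx (hH hxy) w hw with rfl | rfl <;> assumption

theorem trace_inter_inner {H : SimpleGraph V} (hH : H ≤ G) {S : Set V} {u v : V} (h : G.Adj u v)
    (hu : u ∉ S) : E.trace H S ∩ E.inner u v = ∅ := by
  refine Set.eq_empty_of_forall_notMem fun z ⟨hzS, hz⟩ => ?_
  rcases E.mem_trace.1 hzS with ⟨w, -, rfl⟩ | ⟨x, hx, y, hy, hxy, hzxy⟩
  · exact E.vtx_notMem_inner h w hz
  · rcases Sym2.eq_iff.1 (E.edge_eq_of_mem_inner h (hH hxy) hz hzxy) with ⟨rfl, -⟩ | ⟨rfl, -⟩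
    exacts [hu hx, hu hy]

theorem trace_inter_arc_subset {H : SimpleGraph V} (hH : H ≤ G) {S : Set V} {u v : V}
    (h : G.Adj u v) (hu : u ∉ S) : E.trace H S ∩ E.arc u v ⊆ {E.vtx v} := by
  rintro z ⟨hzS, hz⟩
  by_cases hzi : z ∈ E.inner u v
  · exact absurd ⟨hzS, hzi⟩ (Set.eq_empty_iff_forall_notMem.1 (E.trace_inter_inner hH h hu) z)
  · rcases not_not.1 fun hz' => hzi ⟨hz, hz'⟩ with rfl | hzv
    · exact absurd ((E.vtx_mem_trace_iff hH).1 hzS) hu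
    · exact hzv

theorem trace_subset_trace_diff_union (H : SimpleGraph V) (S : Set V) (u : V) : E.trace H S ⊆
    E.trace H (S \ {u}) ∪ insert (E.vtx u) (⋃ w ∈ H.neighborSet u ∩ S, E.arc u w) := by
  intro z hz
  rcases E.mem_trace.1 hz with ⟨w, hw, rfl⟩ | ⟨x, hx, y, hy, hxy, hz⟩
  · by_cases h : w = u
    exacts [.inr (.inl (congrArg E.vtx h)), .inl (E.mem_trace.2 (.inl ⟨w, ⟨hw, h⟩, rfl⟩))]
  by_cases hxu : x = u
  · exact .inr (.inr (Set.mem_biUnion (x := y) ⟨hxu ▸ hxy, hy⟩ (hxu ▸ hz)))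
  by_cases hyu : y = u
  · exact .inr (.inr (Set.mem_biUnion (x := x) ⟨hyu ▸ hxy.symm, hx⟩ (hyu ▸ E.arc_symm x y ▸ hz)))
  exact .inl (E.mem_trace.2 (.inr ⟨x, ⟨hx, hxu⟩, y, ⟨hy, hyu⟩, hxy, hz⟩))

theorem hasLogOn_trace_of_isAcyclic [Finite V] {f : ℂ → ℂ} {H : SimpleGraph V} (hH : H ≤ G)
    (hac : H.IsAcyclic) (S : Set V) (hf : ContinuousOn f (E.trace H S))
    (h0 : ∀ z ∈ E.trace H S, f z ≠ 0) : HasLogOn (E.trace H S) f := by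
  induction S using WellFoundedLT.induction with
  | ind S ih =>
  obtain rfl | hS := S.eq_empty_or_nonempty
  · exact .of_finite (by simp [trace]) h0
  obtain ⟨u, hu, hleaf⟩ := exists_subsingleton_neighborSet_inter hac hS
  have hle : E.trace H (S \ {u}) ⊆ E.trace H S := E.trace_mono H Set.sdiff_subset
  have hlog : HasLogOn (E.trace H (S \ {u})) f := ih _ (Set.sdiff_singleton_ssubset.2 hu)
    (hf.mono hle) fun z hz => h0 z (hle hz)
  have hclosed := (E.isCompact_trace hH (S \ {u})).isClosed
  have hsub := E.trace_subset_trace_diff_union H S u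
  obtain hempty | ⟨v, hv⟩ := hleaf.eq_empty_or_singleton
  · simp only [hempty, Set.biUnion_empty, insert_empty_eq] at hsub
    have hu' : {E.vtx u} ⊆ E.trace H S := Set.singleton_subset_iff.2 ((E.vtx_mem_trace_iff hH).2 hu)
    exact (hlog.union hclosed isClosed_singleton Set.inter_subset_right
      (.of_finite (Set.finite_singleton _) fun z hz => h0 z (hu' hz))).mono hsub
  · obtain ⟨huv, hvS⟩ : v ∈ H.neighborSet u ∩ S := hv ▸ Set.mem_singleton v
    have harc : E.arc u v ⊆ E.trace H S := fun z hz =>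
      E.mem_trace.2 (.inr ⟨u, hu, v, hvS, huv, hz⟩)
    rw [hv, Set.biUnion_singleton, Set.insert_eq_of_mem (E.left_mem_arc (hH huv))] at hsub
    exact (hlog.union hclosed (E.isArc_arc (hH huv)).isClosed
      (E.trace_inter_arc_subset hH (hH huv) fun h => h.2 rfl)
      ((E.isArc_arc (hH huv)).hasLogOn (hf.mono harc) fun z hz => h0 z (harc hz))).mono hsub

/-- The connected component of the complement of the drawing of `H` that contains `p`; empty if
`p` lies on the drawing. -/
def region (H : SimpleGraph V) (p : ℂ) : Set ℂ := connectedComponentIn (E.skel H)ᶜ p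

/-- The graph of the edges of `H` on the boundary of a set `R` of points of the plane. -/
def bdry (H : SimpleGraph V) (R : Set ℂ) : SimpleGraph V where
  Adj u v := H.Adj u v ∧ (E.inner u v ∩ closure R).Nonempty
  symm := ⟨fun u v h => ⟨h.1.symm, by rw [E.inner_symm]; exact h.2⟩⟩
  loopless := ⟨fun u h => h.1.ne rfl⟩

theorem bdry_le (H : SimpleGraph V) (R : Set ℂ) : E.bdry H R ≤ H := fun _ _ h => h.1

theorem region_subset (H : SimpleGraph V) (p : ℂ) : E.region H p ⊆ (E.skel H)ᶜ :=
  connectedComponentIn_subset _ _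

theorem isPreconnected_region (H : SimpleGraph V) (p : ℂ) : IsPreconnected (E.region H p) :=
  isPreconnected_connectedComponentIn

theorem mem_region_self {H : SimpleGraph V} {p : ℂ} (hp : p ∉ E.skel H) : p ∈ E.region H p :=
  mem_connectedComponentIn hp

theorem region_eq {H : SimpleGraph V} {p q : ℂ} (h : q ∈ E.region H p) :
    E.region H p = E.region H q :=
  connectedComponentIn_eq h

theorem notMem_of_mem_region {H : SimpleGraph V} {p q : ℂ} (h : q ∈ E.region H p) :
    p ∉ E.skel H :=
  connectedComponentIn_nonempty_iff.1 ⟨q, h⟩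

theorem mem_region_symm {H : SimpleGraph V} {p q : ℂ} (h : q ∈ E.region H p) :
    p ∈ E.region H q := by
  rw [← E.region_eq h]
  exact E.mem_region_self (E.notMem_of_mem_region h)

theorem region_anti {H H' : SimpleGraph V} (h : H ≤ H') (p : ℂ) : E.region H' p ⊆ E.region H p :=
  connectedComponentIn_mono _ (Set.compl_subset_compl.2 (E.skel_mono h))

theorem mem_region_of_isPreconnected {H : SimpleGraph V} {C : Set ℂ} (hC : IsPreconnected C)
    (hCH : C ⊆ (E.skel H)ᶜ) {p q : ℂ} (hp : p ∈ C) (hq : q ∈ C) : q ∈ E.region H p :=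
  hC.subset_connectedComponentIn hp hCH hq

variable [Finite V]

theorem isOpen_region {H : SimpleGraph V} (hH : H ≤ G) (p : ℂ) : IsOpen (E.region H p) :=
  (E.isCompact_skel hH).isClosed.isOpen_compl.connectedComponentIn

theorem mem_region_of_mem_closure {H : SimpleGraph V} (hH : H ≤ G) {p z : ℂ}
    (hz : z ∈ closure (E.region H p)) (hz' : z ∉ E.skel H) : z ∈ E.region H p :=
  mem_connectedComponentIn_of_mem_closure (E.isCompact_skel hH).isClosed hz hz'

theorem mem_skel_bdry {H : SimpleGraph V} (hH : H ≤ G) {p z : ℂ}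
    (hz : z ∈ closure (E.region H p)) (hz' : z ∉ E.region H p) :
    z ∈ E.skel (E.bdry H (E.region H p)) := by
  have hzH : z ∈ E.skel H := by
    by_contra h
    exact hz' (E.mem_region_of_mem_closure hH hz h)
  rw [mem_skel] at hzH ⊢
  refine or_iff_not_imp_left.2 fun hw => ?_
  obtain ⟨u, v, huv, hzuv⟩ := hzH.resolve_left hw
  refine ⟨u, v, ⟨huv, z, ⟨hzuv, ?_⟩, hz⟩, hzuv⟩
  rintro (h | h)
  exacts [hw ⟨u, h.symm⟩, hw ⟨v, h.symm⟩]

theorem region_eq_of_bdry_le {H K : SimpleGraph V} (hH : H ≤ G) (hK : K ≤ H) {p : ℂ}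
    (hp : p ∉ E.skel H) (h : E.bdry H (E.region H p) ≤ K) : E.region K p = E.region H p := by
  refine Set.Subset.antisymm ?_ (E.region_anti hK p)
  have hpK : p ∉ E.skel K := fun h => hp (E.skel_mono hK h)
  refine (E.isPreconnected_region K p).subset_of_closure_inter_subset (E.isOpen_region hH p)
    ⟨p, E.mem_region_self hpK, E.mem_region_self hp⟩ ?_
  rintro z ⟨hz, hzK⟩
  by_contra hcon
  exact E.region_subset K p hzK (E.skel_mono h (E.mem_skel_bdry hH hz hcon))

theorem mem_region_of_isAcyclic {H : SimpleGraph V} (hH : H ≤ G) (hac : H.IsAcyclic) {p q : ℂ}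
    (hp : p ∉ E.skel H) (hq : q ∉ E.skel H) : q ∈ E.region H p :=
  mem_connectedComponentIn_of_hasLogOn (E.isCompact_skel hH) hp hq
    (E.hasLogOn_trace_of_isAcyclic hH hac _ (continuousOn_sub_div_sub hq)
      (sub_div_sub_ne_zero hp hq))

theorem not_isAcyclic_bdry {H : SimpleGraph V} (hH : H ≤ G) (hac : ¬ H.IsAcyclic) {p : ℂ}
    (hp : p ∉ E.skel H) : ¬ (E.bdry H (E.region H p)).IsAcyclic := by
  intro hB
  refine hac (hB.anti fun u v huv => ?_)
  obtain ⟨z, hz⟩ := E.inner_nonempty (hH huv)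
  have hle := E.bdry_le H (E.region H p)
  refine E.adj_of_mem_inner (hle.trans hH) (hH huv) hz ?_
  by_contra hzB
  have := E.mem_region_of_isAcyclic (hle.trans hH) hB (fun h => hp (E.skel_mono hle h)) hzB
  rw [E.region_eq_of_bdry_le hH hle hp le_rfl] at this
  exact E.region_subset _ _ this (E.arc_subset_skel huv hz.1)

theorem arc_subset_closure_region {H : SimpleGraph V} (hH : H ≤ G) {u v : V} {p : ℂ}
    (h : (E.bdry H (E.region H p)).Adj u v) : E.arc u v ⊆ closure (E.region H p) := by
  obtain ⟨huv, z, hz, hzR⟩ := h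
  have hp : p ∉ E.skel H := (closure_nonempty_iff.1 ⟨z, hzR⟩).elim fun _ => E.notMem_of_mem_region
  have hle : H.deleteEdges {s(u, v)} ≤ H := deleteEdges_le _
  have hinter : E.skel (H.deleteEdges {s(u, v)}) ∩ E.arc u v ⊆ {E.vtx u, E.vtx v} := by
    rintro y ⟨hyH, hy⟩
    by_contra hends
    have := E.adj_of_mem_inner (hle.trans hH) (hH huv) ⟨hy, hends⟩ hyH
    simp at this
  rw [region, E.skel_eq_skel_deleteEdges_union huv] at hzR ⊢
  rw [E.skel_eq_skel_deleteEdges_union huv] at hp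
  exact (E.isArc_arc (hH huv)).subset_closure_connectedComponentIn
    (E.isCompact_skel (hle.trans hH)) hinter hp hz hzR

theorem vtx_mem_closure_region {H : SimpleGraph V} (hH : H ≤ G) {u v : V} {p : ℂ}
    (h : (E.bdry H (E.region H p)).Adj u v) : E.vtx u ∈ closure (E.region H p) :=
  E.arc_subset_closure_region hH h (E.left_mem_arc (hH h.1))

theorem exists_ball_vtx {H : SimpleGraph V} (hH : H ≤ G) (x : V) :
    ∃ ε > 0, ∀ z ∈ Metric.ball (E.vtx x) ε, z ≠ E.vtx x → z ∈ E.skel H →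
      ∃ w, H.Adj x w ∧ z ∈ E.inner x w := by
  have hx : E.vtx x ∉ E.trace H {x}ᶜ := by simp [E.vtx_mem_trace_iff hH]
  obtain ⟨ε, hε, hball⟩ :=
    Metric.isOpen_iff.1 (E.isCompact_trace hH {x}ᶜ).isClosed.isOpen_compl _ hx
  refine ⟨ε, hε, fun z hz hzx hzH => ?_⟩
  rcases E.trace_subset_trace_diff_union H Set.univ x hzH with h | h | h
  · exact absurd (by rwa [Set.compl_eq_univ_sdiff]) (hball hz)
  · exact absurd h hzx
  · obtain ⟨w, ⟨hxw, -⟩, hzw⟩ := Set.mem_iUnion₂.1 h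
    refine ⟨w, hxw, hzw, ?_⟩
    rintro (h | rfl)
    · exact hzx h
    · exact hball hz ((E.vtx_mem_trace_iff hH).2 hxw.ne')

theorem exists_bdry_adj {H : SimpleGraph V} (hH : H ≤ G) {x v : V} (hxv : H.Adj x v) {p : ℂ}
    (hx : E.vtx x ∈ closure (E.region H p)) : ∃ w, (E.bdry H (E.region H p)).Adj x w := by
  by_contra! hcon
  obtain ⟨ε, hε, hball⟩ := E.exists_ball_vtx hH x
  have hsub : Metric.ball (E.vtx x) ε \ {E.vtx x} ⊆ E.region H p := by
    refine (isPreconnected_ball_diff_center _ _).subset_of_closure_inter_subset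
      (E.isOpen_region hH p) ?_ ?_
    · obtain ⟨y, hy, hyR⟩ := mem_closure_iff.1 hx _ Metric.isOpen_ball (Metric.mem_ball_self hε)
      refine ⟨y, ⟨hy, ?_⟩, hyR⟩
      rintro rfl
      exact E.region_subset _ _ hyR (E.vtx_mem_skel _ _)
    · rintro y ⟨hy, hyb, hyx⟩
      refine E.mem_region_of_mem_closure hH hy fun hyH => ?_
      obtain ⟨w, hw, hyw⟩ := hball y hyb hyx hyH
      exact hcon w ⟨hw, y, hyw, hy⟩
  obtain ⟨y, hy, hyi⟩ := mem_closure_iff.1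
    (E.arc_subset_closure_inner (hH hxv) (E.left_mem_arc (hH hxv))) _ Metric.isOpen_ball
    (Metric.mem_ball_self hε)
  refine E.region_subset _ _ (hsub ⟨hy, ?_⟩) (E.arc_subset_skel hxv hyi.1)
  rintro rfl
  exact E.vtx_notMem_inner (hH hxv) x hyi

end PlaneEmbedding

/-! ### Radial plane embeddings -/

theorem eq_of_mem_segment_of_norm_eq {c a b z : ℂ} {r : ℝ} (ha : ‖a - c‖ = r)
    (hb : ‖b - c‖ = r) (hza : z ∈ segment ℝ c a) (hzb : z ∈ segment ℝ c b) (hz : z ≠ c) :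
    a = b := by
  rw [segment_eq_image'] at hza hzb
  obtain ⟨s, hs, rfl⟩ := hza
  obtain ⟨t, ht, hst⟩ := hzb
  have hs0 : s ≠ 0 := fun h => hz (by simp [h])
  have hr : r ≠ 0 := by
    rintro rfl
    exact hz (by simp [norm_eq_zero.1 ha])
  have hst' : t • (b - c) = s • (a - c) := add_left_cancel hst
  obtain rfl : t = s := by
    have hnorm := congrArg norm hst'
    rw [norm_smul, norm_smul, ha, hb, Real.norm_of_nonneg hs.1, Real.norm_of_nonneg ht.1] at hnorm
    exact mul_right_cancel₀ hr hnorm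
  exact (sub_left_injective (smul_right_injective ℂ hs0 hst')).symm

theorem segment_subset_closedBall {c a : ℂ} {r : ℝ} (h : ‖a - c‖ = r) :
    segment ℝ c a ⊆ Metric.closedBall c r :=
  (convex_closedBall c r).segment_subset (Metric.mem_closedBall_self (h ▸ norm_nonneg _))
    (by simp [dist_eq_norm, h])

theorem IsArc.exists_subarc_of_disjoint_closedBall {A : Set ℂ} {x y : ℂ} {r : ℝ} (hA : IsArc A x y)
    (hr : 0 ≤ r) (hd : Disjoint (Metric.closedBall x r) (Metric.closedBall y r)) :
    ∃ M a b, IsArc M a b ∧ M ⊆ A ∧ ‖a - x‖ = r ∧ ‖b - y‖ = r ∧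
      M ∩ Metric.closedBall x r ⊆ {a} ∧ M ∩ Metric.closedBall y r ⊆ {b} := by
  have hx : x ∈ Metric.closedBall x r := Metric.mem_closedBall_self hr
  have hy : y ∈ Metric.closedBall y r := Metric.mem_closedBall_self hr
  obtain ⟨A', a, hA', hA'A, ha, hA'a, hacl⟩ := hA.symm.exists_first_hit
    Metric.isClosed_closedBall (hd.notMem_of_mem_right hy) hx
  obtain ⟨M, b, hM, hMA', hb, hMb, hbcl⟩ := hA'.symm.exists_first_hit
    Metric.isClosed_closedBall (hd.notMem_of_mem_left ha) hy
  exact ⟨M, a, b, hM, hMA'.trans hA'A, norm_eq_of_mem_closure_compl ha hacl,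
    norm_eq_of_mem_closure_compl hb hbcl, fun z hz => hA'a ⟨hMA' hz.1, hz.2⟩, hMb⟩

namespace PlaneEmbedding

variable {G : SimpleGraph V}

/-- The discs of radius `r` around the vertices are pairwise disjoint, and each of them meets only
the arcs at its center. -/
structure IsIsolating (E : PlaneEmbedding G) (r : ℝ) : Prop where
  pos : 0 < r
  disjoint_balls : ∀ u v, u ≠ v →
    Disjoint (Metric.closedBall (E.vtx u) r) (Metric.closedBall (E.vtx v) r)
  disjoint_arc : ∀ u v w, G.Adj u v → w ≠ u → w ≠ v →
    Disjoint (E.arc u v) (Metric.closedBall (E.vtx w) r)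

/-- In addition to `IsIsolating`, each arc at a vertex `u` meets the disc around `u` in a radius
of that disc. -/
structure IsRadial (E : PlaneEmbedding G) (r : ℝ) : Prop extends E.IsIsolating r where
  arc_inter_ball : ∀ u v, G.Adj u v → ∃ a, ‖a - E.vtx u‖ = r ∧
    E.arc u v ∩ Metric.closedBall (E.vtx u) r = segment ℝ (E.vtx u) a

theorem IsIsolating.vtx_mem {E : PlaneEmbedding G} {r : ℝ} (hE : E.IsIsolating r) (u : V) :
    E.vtx u ∈ Metric.closedBall (E.vtx u) r :=
  Metric.mem_closedBall_self hE.pos.le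

theorem exists_isIsolating [Finite V] (E : PlaneEmbedding G) : ∃ r, E.IsIsolating r := by
  choose ε hε hball using fun x => E.exists_ball_vtx le_rfl x
  obtain ⟨r, hrε, hr⟩ : ∃ r, (∀ x, 2 * r < ε x) ∧ 0 < r := by
    refine Filter.Eventually.exists (f := nhdsWithin 0 (Set.Ioi 0)) (.and ?_ self_mem_nhdsWithin)
    refine Filter.eventually_all.2 fun x => ?_
    filter_upwards [Ioo_mem_nhdsGT (half_pos (hε x))] with r hr
    linarith [hr.2]
  have hdist : ∀ x y, x ≠ y → ε x ≤ dist (E.vtx x) (E.vtx y) := by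
    intro x y hxy
    by_contra! hlt
    rw [_root_.dist_comm] at hlt
    obtain ⟨w, hw, hin⟩ := hball x (E.vtx y) hlt (fun h => hxy (E.vtx_inj h).symm)
      (E.vtx_mem_skel _ _)
    exact E.vtx_notMem_inner hw y hin
  refine ⟨r, hr, fun u v huv => ?_, fun u v w huv hwu hwv => Set.disjoint_left.2 fun z hz hzw => ?_⟩
  · exact Metric.closedBall_disjoint_closedBall (by linarith [hdist u v huv, hrε u])
  · have hzne : z ≠ E.vtx w := fun h => (E.arc_vtx huv w (h ▸ hz)).elim hwu hwv
    obtain ⟨x, hwx, hin⟩ := hball w z (Metric.closedBall_subset_ball (by linarith [hrε w]) hzw) hzne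
      (E.arc_subset_skel huv hz)
    rcases Sym2.eq_iff.1 (E.edge_eq_of_mem_inner hwx huv hin hz) with ⟨h, -⟩ | ⟨h, -⟩
    exacts [hwu h, hwv h]

/-- `A` is obtained from the arc of `uv` by replacing its parts near `u` and `v` by radii of the
discs of radius `r` around `u` and `v`. -/
structure IsStraightening (E : PlaneEmbedding G) (r : ℝ) (u v : V) (A : Set ℂ) : Prop where
  isArc : IsArc A (E.vtx u) (E.vtx v)
  left : ∃ a ∈ E.arc u v, ‖a - E.vtx u‖ = r ∧
    A ∩ Metric.closedBall (E.vtx u) r = segment ℝ (E.vtx u) a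
  right : ∃ a ∈ E.arc u v, ‖a - E.vtx v‖ = r ∧
    A ∩ Metric.closedBall (E.vtx v) r = segment ℝ (E.vtx v) a
  subset : A ⊆ E.arc u v ∪ (Metric.closedBall (E.vtx u) r ∪ Metric.closedBall (E.vtx v) r)

variable {E : PlaneEmbedding G} {r : ℝ} {u v w x y : V} {A B : Set ℂ} {z : ℂ}

theorem IsStraightening.symm (h : E.IsStraightening r u v A) : E.IsStraightening r v u A where
  isArc := h.isArc.symm
  left := by rw [E.arc_symm]; exact h.right
  right := by rw [E.arc_symm]; exact h.left
  subset := by rw [E.arc_symm, Set.union_comm (Metric.closedBall (E.vtx v) r)]; exact h.subset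

theorem isStraightening_of_segments {M : Set ℂ} {a b : ℂ} (hr : 0 < r)
    (hd : Disjoint (Metric.closedBall (E.vtx u) r) (Metric.closedBall (E.vtx v) r))
    (hM : IsArc M a b) (hMsub : M ⊆ E.arc u v) (ha : ‖a - E.vtx u‖ = r) (hb : ‖b - E.vtx v‖ = r)
    (hMa : M ∩ Metric.closedBall (E.vtx u) r ⊆ {a})
    (hMb : M ∩ Metric.closedBall (E.vtx v) r ⊆ {b}) :
    E.IsStraightening r u v (segment ℝ (E.vtx u) a ∪ M ∪ segment ℝ (E.vtx v) b) := by
  have hsa := segment_subset_closedBall ha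
  have hsb := segment_subset_closedBall hb
  have hua : E.vtx u ≠ a := fun h => hr.ne (by simpa [h] using ha)
  have hvb : E.vtx v ≠ b := fun h => hr.ne (by simpa [h] using hb)
  refine ⟨((isArc_segment hua).union hM ?_).union (isArc_segment hvb).symm ?_,
    ⟨a, hMsub hM.left_mem, ha, Set.Subset.antisymm ?_ fun z hz => ⟨.inl (.inl hz), hsa hz⟩⟩,
    ⟨b, hMsub hM.right_mem, hb, Set.Subset.antisymm ?_ fun z hz => ⟨.inr hz, hsb hz⟩⟩, ?_⟩
  · exact fun z hz => hMa ⟨hz.2, hsa hz.1⟩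
  · rintro z ⟨hz | hz, hz'⟩
    exacts [absurd (hsb hz') (hd.notMem_of_mem_left (hsa hz)), hMb ⟨hz, hsb hz'⟩]
  · rintro z ⟨(hz | hz) | hz, hzu⟩
    exacts [hz, hMa ⟨hz, hzu⟩ ▸ right_mem_segment _ _ _,
      absurd (hsb hz) (hd.notMem_of_mem_left hzu)]
  · rintro z ⟨(hz | hz) | hz, hzv⟩
    exacts [absurd hzv (hd.notMem_of_mem_left (hsa hz)), hMb ⟨hz, hzv⟩ ▸ right_mem_segment _ _ _,
      hz]
  · rintro z ((hz | hz) | hz)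
    exacts [.inr (.inl (hsa hz)), .inl (hMsub hz), .inr (.inr (hsb hz))]

namespace IsIsolating

theorem exists_isStraightening (hE : E.IsIsolating r) (h : G.Adj u v) :
    ∃ A, E.IsStraightening r u v A := by
  have hd := hE.disjoint_balls u v h.ne
  obtain ⟨M, a, b, hM, hMsub, ha, hb, hMa, hMb⟩ :=
    (E.isArc_arc h).exists_subarc_of_disjoint_closedBall hE.pos.le hd
  exact ⟨_, isStraightening_of_segments hE.pos hd hM hMsub ha hb hMa hMb⟩

theorem exists_forall_isStraightening (hE : E.IsIsolating r) :
    ∃ A : Sym2 V → Set ℂ, ∀ u v, G.Adj u v → E.IsStraightening r u v (A s(u, v)) := by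
  have hex : ∀ e : Sym2 V, ∃ A, ∀ u v, G.Adj u v → s(u, v) = e → E.IsStraightening r u v A := by
    refine Sym2.ind fun x y => ?_
    by_cases hxy : G.Adj x y
    · obtain ⟨A, hA⟩ := hE.exists_isStraightening hxy
      refine ⟨A, fun u v _ he => ?_⟩
      rcases Sym2.eq_iff.1 he with ⟨rfl, rfl⟩ | ⟨rfl, rfl⟩
      exacts [hA, hA.symm]
    · exact ⟨∅, fun u v huv he => absurd ((G.adj_congr_of_sym2 he).1 huv) hxy⟩
  choose A hA using hex
  exact ⟨A, fun u v h => hA _ u v h rfl⟩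

theorem disjoint_closedBall_of_isStraightening (hE : E.IsIsolating r) (huv : G.Adj u v)
    (hA : E.IsStraightening r u v A) (hwu : w ≠ u) (hwv : w ≠ v) :
    Disjoint A (Metric.closedBall (E.vtx w) r) := by
  refine Disjoint.mono_left hA.subset (Set.disjoint_union_left.2 ⟨hE.disjoint_arc u v w huv hwu hwv,
    Set.disjoint_union_left.2 ⟨?_, ?_⟩⟩)
  exacts [hE.disjoint_balls u w hwu.symm, hE.disjoint_balls v w hwv.symm]

theorem eq_vtx_of_isStraightening (hE : E.IsIsolating r) (huv : G.Adj u v) (huw : G.Adj u w)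
    (hvw : v ≠ w) (hA : E.IsStraightening r u v A) (hB : E.IsStraightening r u w B) (hzA : z ∈ A)
    (hzB : z ∈ B) (hz : z ∈ Metric.closedBall (E.vtx u) r) : z = E.vtx u := by
  by_contra hne
  obtain ⟨a, ha, har, hAseg⟩ := hA.left
  obtain ⟨b, hb, hbr, hBseg⟩ := hB.left
  obtain rfl : a = b :=
    eq_of_mem_segment_of_norm_eq har hbr (hAseg ▸ ⟨hzA, hz⟩) (hBseg ▸ ⟨hzB, hz⟩) hne
  have hau : a ∈ Metric.closedBall (E.vtx u) r := by simp [dist_eq_norm, har]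
  rcases (E.arc_inter huv huw (by simp [hvw, huv.ne']) ⟨ha, hb⟩).1 with rfl | rfl
  · exact hE.pos.ne (by simpa using har)
  · exact (hE.disjoint_balls u v huv.ne).notMem_of_mem_left hau (hE.vtx_mem v)

theorem eq_vtx_and_mem_of_isStraightening (hE : E.IsIsolating r) (huv : G.Adj u v)
    (hxy : G.Adj x y) (hne : s(u, v) ≠ s(x, y)) (hA : E.IsStraightening r u v A)
    (hB : E.IsStraightening r x y B) (hzA : z ∈ A) (hzB : z ∈ B)
    (hz : z ∈ Metric.closedBall (E.vtx u) r) :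
    z = E.vtx u ∧ z ∈ ({E.vtx x, E.vtx y} : Set ℂ) := by
  by_cases hux : u = x
  · subst hux
    have := hE.eq_vtx_of_isStraightening huv hxy (by rintro rfl; exact hne rfl) hA hB hzA hzB hz
    exact ⟨this, .inl this⟩
  by_cases huy : u = y
  · subst huy
    have := hE.eq_vtx_of_isStraightening huv hxy.symm (by rintro rfl; exact hne Sym2.eq_swap) hA
      hB.symm hzA hzB hz
    exact ⟨this, .inr this⟩
  exact absurd hz
    ((hE.disjoint_closedBall_of_isStraightening hxy hB hux huy).notMem_of_mem_left hzB)

theorem inter_subset_of_isStraightening (hE : E.IsIsolating r) (huv : G.Adj u v)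
    (hxy : G.Adj x y) (hne : s(u, v) ≠ s(x, y)) (hA : E.IsStraightening r u v A)
    (hB : E.IsStraightening r x y B) :
    A ∩ B ⊆ ({E.vtx u, E.vtx v} : Set ℂ) ∩ ({E.vtx x, E.vtx y} : Set ℂ) := by
  rintro z ⟨hzA, hzB⟩
  rcases hA.subset hzA with hzuv | hzu | hzv
  · rcases hB.subset hzB with hzxy | hzx | hzy
    · exact E.arc_inter huv hxy hne ⟨hzuv, hzxy⟩
    · have := hE.eq_vtx_and_mem_of_isStraightening hxy huv hne.symm hB hA hzB hzA hzx
      exact ⟨this.2, .inl this.1⟩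
    · rw [Sym2.eq_swap (a := x)] at hne
      have := hE.eq_vtx_and_mem_of_isStraightening hxy.symm huv hne.symm hB.symm hA hzB hzA hzy
      exact ⟨this.2, .inr this.1⟩
  · have := hE.eq_vtx_and_mem_of_isStraightening huv hxy hne hA hB hzA hzB hzu
    exact ⟨.inl this.1, this.2⟩
  · rw [Sym2.eq_swap] at hne
    have := hE.eq_vtx_and_mem_of_isStraightening huv.symm hxy hne hA.symm hB hzA hzB hzv
    exact ⟨.inr this.1, this.2⟩

end IsIsolating

theorem exists_isRadial [Finite V] (h : PlanarGraph G) :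
    ∃ (E : PlaneEmbedding G) (r : ℝ), E.IsRadial r := by
  obtain ⟨E⟩ := h
  obtain ⟨r, hE⟩ := E.exists_isIsolating
  obtain ⟨A, hA⟩ := hE.exists_forall_isStraightening
  have hdisj : ∀ u v w, G.Adj u v → w ≠ u → w ≠ v →
      Disjoint (A s(u, v)) (Metric.closedBall (E.vtx w) r) := fun u v w huv =>
    hE.disjoint_closedBall_of_isStraightening huv (hA u v huv)
  let E' : PlaneEmbedding G :=
    { vtx := E.vtx
      arc := fun u v => A s(u, v)
      vtx_inj := E.vtx_inj
      arc_symm := fun u v => by rw [Sym2.eq_swap]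
      arc_curve := fun u v h => (hA u v h).isArc
      arc_inter := fun u v x y huv hxy hne =>
        hE.inter_subset_of_isStraightening huv hxy hne (hA u v huv) (hA x y hxy)
      arc_vtx := fun u v huv w hw => by
        by_contra! hcon
        exact (hdisj u v w huv hcon.1 hcon.2).notMem_of_mem_left hw (hE.vtx_mem w) }
  refine ⟨E', r, ⟨hE.pos, hE.disjoint_balls, hdisj⟩, fun u v huv => ?_⟩
  obtain ⟨a, -, ha⟩ := (hA u v huv).left
  exact ⟨a, ha⟩

end PlaneEmbedding

/-! ### Vertices on a common region of a maximal plane graph are adjacent -/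

theorem mem_segment_of_add_smul_mem {u a z : ℂ} {t : ℝ} (hz : ‖z - u‖ ≤ ‖a - u‖) (ht : 0 < t)
    (h : u + t • (z - u) ∈ segment ℝ u a) : z ∈ segment ℝ u a := by
  rw [segment_eq_image'] at h ⊢
  obtain ⟨s, hs, hst⟩ := h
  have hst' : s • (a - u) = t • (z - u) := by simpa using hst
  have hzu : z - u = (s / t) • (a - u) := by
    rw [div_eq_inv_mul, mul_smul, hst', smul_smul, inv_mul_cancel₀ ht.ne', one_smul]
  rcases eq_or_ne a u with rfl | hau
  · exact ⟨0, by simp, by simpa [sub_eq_zero, eq_comm] using hzu⟩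
  refine ⟨s / t, ⟨div_nonneg hs.1 ht.le, ?_⟩, by simp only [← hzu]; ring⟩
  rw [hzu, norm_smul, Real.norm_of_nonneg (div_nonneg hs.1 ht.le)] at hz
  exact (mul_le_iff_le_one_left (norm_pos_iff.2 (sub_ne_zero.2 hau))).1 hz

theorem IsArc.exists_extend {A B : Set ℂ} {x q w : ℂ} (hA : IsArc A x q) (hB : IsClosed B)
    (hconv : Convex ℝ B) (hx : x ∉ B) (hq : q ∈ B) (hw : w ∈ B) :
    ∃ A' b, IsArc A' x w ∧ b ∈ A ∩ B ∧ A' ⊆ A ∪ segment ℝ b w := by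
  obtain ⟨M, b, hM, hMA, hb, hMB, -⟩ := hA.exists_first_hit hB hx hq
  by_cases hbw : b = w
  · subst hbw
    exact ⟨M, b, hM, ⟨hMA hM.right_mem, hb⟩, hMA.trans Set.subset_union_left⟩
  · refine ⟨M ∪ segment ℝ b w, b, hM.union (isArc_segment hbw) ?_, ⟨hMA hM.right_mem, hb⟩,
      Set.union_subset_union_left _ hMA⟩
    rintro z ⟨hz, hz'⟩
    exact hMB ⟨hz, hconv.segment_subset hb hw hz'⟩

theorem exists_isArc_subset_insert_of_isOpen {R : Set ℂ} (hR : IsOpen R) (hpre : IsPreconnected R)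
    {x z q : ℂ} (hx : x ∉ R) (hz : z ∈ R) (hseg : segment ℝ x z ⊆ insert x R) (hq : q ∈ R) :
    ∃ A, IsArc A x q ∧ A ⊆ insert x R := by
  let Q : Set ℂ := {q | q ∈ R ∧ ∃ A, IsArc A x q ∧ A ⊆ insert x R}
  have hstep : ∀ q ∈ R, ∃ ε > 0, (Q ∩ Metric.closedBall q ε).Nonempty →
      Metric.closedBall q ε ⊆ Q := by
    intro q hq
    obtain ⟨ε, hε, hball⟩ := Metric.nhds_basis_closedBall.mem_iff.1 (hR.mem_nhds hq)
    refine ⟨ε, hε, ?_⟩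
    rintro ⟨q', ⟨-, A, hA, hAR⟩, hq'⟩ w hw
    obtain ⟨A', b, hA', ⟨-, hbB⟩, hsub⟩ := hA.exists_extend Metric.isClosed_closedBall
      (convex_closedBall q ε) (fun h => hx (hball h)) hq' hw
    refine ⟨hball hw, A', hA', hsub.trans (Set.union_subset hAR ?_)⟩
    exact (((convex_closedBall q ε).segment_subset hbB hw).trans hball).trans
      (Set.subset_insert _ _)
  have hopen : IsOpen Q := by
    rw [Metric.isOpen_iff]
    intro q hq
    obtain ⟨ε, hε, h⟩ := hstep q hq.1
    exact ⟨ε, hε, Metric.ball_subset_closedBall.trans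
      (h ⟨q, hq, Metric.mem_closedBall_self hε.le⟩)⟩
  have hzQ : z ∈ Q := ⟨hz, segment ℝ x z, isArc_segment (by rintro rfl; exact hx hz), hseg⟩
  refine (hpre.subset_of_closure_inter_subset hopen ⟨z, hz, hzQ⟩ ?_ hq).2
  rintro q ⟨hq, hqR⟩
  obtain ⟨ε, hε, h⟩ := hstep q hqR
  obtain ⟨q', hq', hqQ⟩ := mem_closure_iff.1 hq _ Metric.isOpen_ball (Metric.mem_ball_self hε)
  exact h ⟨q', hqQ, Metric.ball_subset_closedBall hq'⟩ (Metric.mem_closedBall_self hε.le)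

namespace PlaneEmbedding

variable {G : SimpleGraph V} {E : PlaneEmbedding G} {r : ℝ}

theorem IsIsolating.eq_of_vtx_mem (hE : E.IsIsolating r) {u v : V}
    (h : E.vtx u ∈ Metric.closedBall (E.vtx v) r) : u = v := by
  by_contra huv
  exact (hE.disjoint_balls u v huv).notMem_of_mem_left (hE.vtx_mem u) h

theorem IsRadial.add_smul_notMem_arc (hE : E.IsRadial r) {u v : V} {z : ℂ}
    (huv : G.Adj u v) (hz : z ∈ Metric.closedBall (E.vtx u) r) (hzG : z ∉ E.arc u v) {t : ℝ}
    (ht : t ∈ Set.Ioc 0 1) : E.vtx u + t • (z - E.vtx u) ∉ E.arc u v := by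
  intro hmem
  obtain ⟨a, ha, hseg⟩ := hE.arc_inter_ball u v huv
  have hball : E.vtx u + t • (z - E.vtx u) ∈ Metric.closedBall (E.vtx u) r :=
    (convex_closedBall _ _).segment_subset (hE.vtx_mem u) hz
      (segment_eq_image' ℝ (E.vtx u) z ▸ ⟨t, ⟨ht.1.le, ht.2⟩, rfl⟩)
  have hzseg : z ∈ segment ℝ (E.vtx u) a :=
    mem_segment_of_add_smul_mem (by simpa [ha, dist_eq_norm] using hz) ht.1 (hseg ▸ ⟨hmem, hball⟩)
  rw [← hseg] at hzseg
  exact hzG hzseg.1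

theorem IsRadial.add_smul_notMem_skel (hE : E.IsRadial r) {u : V} {z : ℂ}
    (hz : z ∈ Metric.closedBall (E.vtx u) r) (hzG : z ∉ E.skel G) {t : ℝ} (ht : t ∈ Set.Ioc 0 1) :
    E.vtx u + t • (z - E.vtx u) ∉ E.skel G := by
  intro hmem
  have hball : E.vtx u + t • (z - E.vtx u) ∈ Metric.closedBall (E.vtx u) r :=
    (convex_closedBall _ _).segment_subset (hE.vtx_mem u) hz
      (segment_eq_image' ℝ (E.vtx u) z ▸ ⟨t, ⟨ht.1.le, ht.2⟩, rfl⟩)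
  have harc : ∀ v, G.Adj u v → E.vtx u + t • (z - E.vtx u) ∉ E.arc u v := fun v huv =>
    hE.add_smul_notMem_arc huv hz (fun h => hzG (E.arc_subset_skel huv h)) ht
  rcases E.mem_skel.1 hmem with ⟨w, hw⟩ | ⟨a, b, hab, hmem'⟩
  · obtain rfl : w = u := hE.eq_of_vtx_mem (hw ▸ hball :)
    have hzw : t • (z - E.vtx w) = 0 := by simpa using hw.symm
    rw [sub_eq_zero.1 ((smul_eq_zero.1 hzw).resolve_left ht.1.ne')] at hzG
    exact hzG (E.vtx_mem_skel _ _)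
  · by_cases hau : u = a
    · subst hau
      exact harc b hab hmem'
    by_cases hbu : u = b
    · subst hbu
      rw [E.arc_symm] at hmem'
      exact harc a hab.symm hmem'
    exact (hE.disjoint_arc a b u hab hau hbu).notMem_of_mem_left hmem' hball

theorem IsRadial.segment_subset (hE : E.IsRadial r) {u : V} {p z : ℂ}
    (hz : z ∈ Metric.closedBall (E.vtx u) r) (hzR : z ∈ E.region G p) :
    segment ℝ (E.vtx u) z ⊆ insert (E.vtx u) (E.region G p) := by
  have hzG : z ∉ E.skel G := E.region_subset _ _ hzR
  have hpre : IsPreconnected ((fun t : ℝ => E.vtx u + t • (z - E.vtx u)) '' Set.Ioc 0 1) :=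
    isPreconnected_Ioc.image _ (by fun_prop)
  have hsub : (fun t : ℝ => E.vtx u + t • (z - E.vtx u)) '' Set.Ioc 0 1 ⊆ E.region G p := by
    rintro _ ⟨t, ht, rfl⟩
    rw [E.region_eq hzR]
    refine E.mem_region_of_isPreconnected hpre ?_ ⟨1, by simp, by simp⟩ ⟨t, ht, rfl⟩
    rintro _ ⟨t, ht, rfl⟩
    exact hE.add_smul_notMem_skel hz hzG ht
  rw [segment_eq_image']
  rintro _ ⟨t, ht, rfl⟩
  rcases ht.1.eq_or_lt with rfl | h
  · simp
  · exact Or.inr (hsub ⟨t, ⟨h, ht.2⟩, rfl⟩)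

theorem IsRadial.exists_mem_closedBall (hE : E.IsRadial r) {u : V} {p : ℂ}
    (hu : E.vtx u ∈ closure (E.region G p)) :
    ∃ z ∈ E.region G p, z ∈ Metric.closedBall (E.vtx u) r := by
  obtain ⟨z, hz, hzR⟩ := mem_closure_iff.1 hu _ Metric.isOpen_ball (Metric.mem_ball_self hE.pos)
  exact ⟨z, hzR, Metric.ball_subset_closedBall hz⟩

theorem IsRadial.exists_isArc [Finite V] (hE : E.IsRadial r) {p : ℂ} {x y : V} (hxy : x ≠ y)
    (hx : E.vtx x ∈ closure (E.region G p)) (hy : E.vtx y ∈ closure (E.region G p)) :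
    ∃ A, IsArc A (E.vtx x) (E.vtx y) ∧ A ⊆ E.region G p ∪ {E.vtx x, E.vtx y} := by
  have hxR : E.vtx x ∉ E.region G p := fun h => E.region_subset _ _ h (E.vtx_mem_skel _ _)
  have hxB : E.vtx x ∉ Metric.closedBall (E.vtx y) r := fun h => hxy (hE.eq_of_vtx_mem h)
  obtain ⟨z, hzR, hz⟩ := hE.exists_mem_closedBall hx
  obtain ⟨q, hqR, hq⟩ := hE.exists_mem_closedBall hy
  obtain ⟨A, hA, hAR⟩ := exists_isArc_subset_insert_of_isOpen (E.isOpen_region le_rfl p)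
    (E.isPreconnected_region G p) hxR hzR (hE.segment_subset hz hzR) hqR
  obtain ⟨A', b, hA', ⟨hbA, hbB⟩, hsub⟩ := hA.exists_extend Metric.isClosed_closedBall
    (convex_closedBall (E.vtx y) r) hxB hq (hE.vtx_mem y)
  have hbR : b ∈ E.region G p := (hAR hbA).resolve_left fun h => hxB (h ▸ hbB)
  refine ⟨A', hA', fun w hw => ?_⟩
  rcases hsub hw with h | h
  · rcases hAR h with rfl | h
    · simp
    · exact Or.inl h
  · rw [segment_symm] at h
    rcases hE.segment_subset hbB hbR h with rfl | h
    · simp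
    · exact Or.inl h

theorem mem_inter_of_mem_arc {x y u v : V} {A : Set ℂ}
    (hAG : A ⊆ (E.skel G)ᶜ ∪ {E.vtx x, E.vtx y}) (huv : G.Adj u v) {z : ℂ} (hz : z ∈ A)
    (hz' : z ∈ E.arc u v) :
    z ∈ ({E.vtx x, E.vtx y} : Set ℂ) ∩ {E.vtx u, E.vtx v} := by
  have hzxy : z ∈ ({E.vtx x, E.vtx y} : Set ℂ) :=
    (hAG hz).resolve_left fun h => h (E.arc_subset_skel huv hz')
  refine ⟨hzxy, ?_⟩
  rcases hzxy with rfl | rfl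
  · rcases E.arc_vtx huv x hz' with rfl | rfl <;> simp
  · rcases E.arc_vtx huv y hz' with rfl | rfl <;> simp

theorem planarGraph_sup_of_isArc {x y : V} {A : Set ℂ} (hA : IsArc A (E.vtx x) (E.vtx y))
    (hAG : A ⊆ (E.skel G)ᶜ ∪ {E.vtx x, E.vtx y}) :
    PlanarGraph (G ⊔ fromEdgeSet {s(x, y)}) := by
  classical
  have hold {u v : V} (h : (G ⊔ fromEdgeSet {s(x, y)}).Adj u v) (hne : s(u, v) ≠ s(x, y)) :
      G.Adj u v := by simpa [hne] using h
  have hnew {u v : V} (h : s(u, v) = s(x, y)) : IsArc A (E.vtx u) (E.vtx v) ∧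
      ({E.vtx u, E.vtx v} : Set ℂ) = {E.vtx x, E.vtx y} := by
    rcases Sym2.eq_iff.1 h with ⟨rfl, rfl⟩ | ⟨rfl, rfl⟩
    exacts [⟨hA, rfl⟩, ⟨hA.symm, Set.pair_comm _ _⟩]
  refine ⟨{ vtx := E.vtx
            arc := fun u v => if s(u, v) = s(x, y) then A else E.arc u v
            vtx_inj := E.vtx_inj
            arc_symm := fun u v => by rw [Sym2.eq_swap, E.arc_symm]
            arc_curve := fun {u v} h => ?_
            arc_inter := fun {u v a b} huv hab hne => ?_
            arc_vtx := fun {u v} huv w hw => ?_ }⟩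
  · split_ifs with he
    exacts [(hnew he).1, E.arc_curve (hold h he)]
  · split_ifs with he he'
    · exact absurd (he.trans he'.symm) hne
    · rw [(hnew he).2]
      exact fun z hz => mem_inter_of_mem_arc hAG (hold hab he') hz.1 hz.2
    · rename_i he'
      rw [(hnew he').2, Set.inter_comm {E.vtx u, E.vtx v}]
      exact fun z hz => mem_inter_of_mem_arc hAG (hold huv he) hz.2 hz.1
    · exact E.arc_inter (hold huv he) (hold hab (by assumption)) hne
  · split_ifs at hw with he
    · have hwxy := (hAG hw).resolve_left fun h => h (E.vtx_mem_skel _ _)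
      rw [← (hnew he).2] at hwxy
      exact hwxy.imp (fun h => E.vtx_inj h) fun h => E.vtx_inj h
    · exact E.arc_vtx (hold huv he) w hw

theorem IsRadial.adj_of_mem_closure [Finite V] (hE : E.IsRadial r) (hG : MaximalPlanar G) {p : ℂ}
    {x y : V} (hxy : x ≠ y) (hx : E.vtx x ∈ closure (E.region G p))
    (hy : E.vtx y ∈ closure (E.region G p)) : G.Adj x y := by
  by_contra hadj
  obtain ⟨A, hA, hAR⟩ := hE.exists_isArc hxy hx hy
  exact hG.2 x y hxy hadj (planarGraph_sup_of_isArc hA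
    (hAR.trans (Set.union_subset_union_left _ (E.region_subset _ _))))

end PlaneEmbedding

/-! ### The two sides of an edge -/

section Crossing

open Filter Topology

variable {σ : ℝ}

-- The fibre of the Möbius map over `-t`, with `0 ≤ t`, is `σ * (1 - t) / (1 + t) * I`.
theorem sub_div_add_mem_slitPlane (hσ : 0 < σ) {w : ℂ}
    (hw : ∀ s : ℝ, |s| ≤ σ → w ≠ s * Complex.I) :
    (w - σ * Complex.I) / (w + σ * Complex.I) ∈ Complex.slitPlane := by
  by_contra hmem
  have hw0 : w + σ * Complex.I ≠ 0 := by
    intro h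
    refine hw (-σ) (by rw [abs_neg, abs_of_pos hσ]) ?_
    push_cast
    linear_combination h
  rw [Complex.mem_slitPlane_iff_not_le_zero, not_not, Complex.nonpos_iff] at hmem
  obtain ⟨hre, him⟩ := hmem
  obtain ⟨t, ht⟩ : ∃ t : ℝ, (w - σ * Complex.I) / (w + σ * Complex.I) = -(t : ℂ) :=
    ⟨-((w - σ * Complex.I) / (w + σ * Complex.I)).re, Complex.ext (by simp) (by simp [him])⟩
  have ht0 : 0 ≤ t := by simpa [ht] using hre
  rw [div_eq_iff hw0] at ht
  have h1t : (1 + t : ℂ) ≠ 0 := by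
    norm_cast
    linarith
  refine hw (σ * (1 - t) / (1 + t)) ?_ ?_
  · rw [abs_div, abs_mul, abs_of_pos hσ, abs_of_pos (by linarith : 0 < 1 + t),
      div_le_iff₀ (by linarith)]
    refine mul_le_mul_of_nonneg_left ?_ hσ.le
    rw [abs_le]
    constructor <;> linarith
  · push_cast
    field_simp
    linear_combination ht

theorem ofReal_add_mul_I_ne_zero (hσ : σ ≠ 0) (t : ℝ) : (t : ℂ) + σ * Complex.I ≠ 0 := by
  intro h
  simpa [hσ] using congrArg Complex.im h

theorem im_sub_div_add (σ t : ℝ) :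
    ((t - σ * Complex.I) / (t + σ * Complex.I)).im = -(2 * σ * t) / (t ^ 2 + σ ^ 2) := by
  have hnorm : Complex.normSq (t + σ * Complex.I) = t ^ 2 + σ ^ 2 := Complex.normSq_add_mul_I t σ
  simp only [Complex.div_im, hnorm, Complex.sub_re, Complex.sub_im, Complex.add_re, Complex.add_im,
    Complex.re_ofReal_mul, Complex.im_ofReal_mul, Complex.I_re, Complex.I_im, Complex.ofReal_re,
    Complex.ofReal_im]
  ring

theorem tendsto_sub_div_add (hσ : σ ≠ 0) :
    Tendsto (fun t : ℝ => ((t - σ * Complex.I) / (t + σ * Complex.I) : ℂ)) (𝓝 0) (𝓝 (-1)) := by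
  have h : Tendsto (fun t : ℝ => ((t - σ * Complex.I) / (t + σ * Complex.I) : ℂ)) (𝓝 0)
      (𝓝 ((((0 : ℝ) : ℂ) - σ * Complex.I) / (((0 : ℝ) : ℂ) + σ * Complex.I))) :=
    Continuous.tendsto (.div (by fun_prop) (by fun_prop) (ofReal_add_mul_I_ne_zero hσ)) 0
  convert h using 2
  have : (σ : ℂ) * Complex.I ≠ 0 := by simp [hσ]
  simp [neg_div, div_self this]

theorem tendsto_log_sub_div_add_nhdsGT (hσ : 0 < σ) :
    Tendsto (fun t : ℝ => Complex.log ((t - σ * Complex.I) / (t + σ * Complex.I))) (𝓝[>] 0)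
      (𝓝 (-(Real.pi * Complex.I))) := by
  have hlog := Complex.tendsto_log_nhdsWithin_im_neg_of_re_neg_of_im_zero (z := -1) (by simp)
    (by simp)
  rw [norm_neg, norm_one, Real.log_one, Complex.ofReal_zero, zero_sub] at hlog
  refine hlog.comp (tendsto_nhdsWithin_iff.2
    ⟨(tendsto_sub_div_add hσ.ne').mono_left nhdsWithin_le_nhds, ?_⟩)
  filter_upwards [self_mem_nhdsWithin] with t (ht : 0 < t)
  rw [im_sub_div_add]
  exact div_neg_of_neg_of_pos (by simpa using by positivity) (by positivity)

theorem tendsto_log_sub_div_add_nhdsLT (hσ : 0 < σ) :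
    Tendsto (fun t : ℝ => Complex.log ((t - σ * Complex.I) / (t + σ * Complex.I))) (𝓝[<] 0)
      (𝓝 (Real.pi * Complex.I)) := by
  have hlog := (Complex.continuousWithinAt_log_of_re_neg_of_im_zero (z := -1) (by simp)
    (by simp)).tendsto
  rw [Complex.log_neg_one] at hlog
  refine hlog.comp (tendsto_nhdsWithin_iff.2
    ⟨(tendsto_sub_div_add hσ.ne').mono_left nhdsWithin_le_nhds, ?_⟩)
  filter_upwards [self_mem_nhdsWithin] with t (ht : t < 0)
  rw [im_sub_div_add]
  exact div_nonneg (by nlinarith) (by positivity)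

theorem exists_eqOn_log_add_const {C : Set ℂ} {f g : ℂ → ℂ} (hC : IsPreconnected C)
    (hf : ContinuousOn f C) (hslit : ∀ z ∈ C, f z ∈ Complex.slitPlane) (hg : ContinuousOn g C)
    (hgf : ∀ z ∈ C, Complex.exp (g z) = f z) :
    ∃ k : ℂ, Set.EqOn g (fun z => Complex.log (f z) + k) C := by
  obtain rfl | ⟨x, hx⟩ := C.eq_empty_or_nonempty
  · exact ⟨0, Set.eqOn_empty _ _⟩
  refine ⟨g x - Complex.log (f x), fun z hz => ?_⟩
  have := sub_eq_sub_of_exp_eq hC hg (hf.clog hslit)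
    (fun w hw => by rw [hgf w hw, Complex.exp_log (Complex.slitPlane_ne_zero (hslit w hw))]) hz hx
  linear_combination this

-- Along `C` the principal branch of the logarithm jumps by `2πi` at the origin.
theorem not_hasLogOn_of_crossing_zero {C : Set ℂ} {ρ : ℝ} (hσ : 0 < σ) (hρ : 0 < ρ)
    (hreal : ∀ t : ℝ, |t| < ρ → (t : ℂ) ∈ C)
    (himag : ∀ s : ℝ, |s| ≤ σ → s ≠ 0 → s * Complex.I ∉ C) (hC : IsPreconnected (C \ {0})) :
    ¬ HasLogOn C (fun z => (z - σ * Complex.I) / (z + σ * Complex.I)) := by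
  rintro ⟨g, hg, hgf⟩
  have hslit : ∀ z ∈ C \ {0}, (z - σ * Complex.I) / (z + σ * Complex.I) ∈ Complex.slitPlane := by
    refine fun z hz => sub_div_add_mem_slitPlane hσ fun s hs hzs => ?_
    by_cases hs0 : s = 0
    · exact hz.2 (by simp [hzs, hs0])
    · exact himag s hs hs0 (hzs ▸ hz.1)
  have hcont : ContinuousOn (fun z : ℂ => (z - σ * Complex.I) / (z + σ * Complex.I)) (C \ {0}) :=
    .div (by fun_prop) (by fun_prop) fun z hz h0 =>
      Complex.zero_notMem_slitPlane (by simpa [h0] using hslit z hz)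
  obtain ⟨k, hk⟩ := exists_eqOn_log_add_const hC hcont hslit (hg.mono Set.sdiff_subset)
    fun z hz => hgf z hz.1
  have hC0 : ∀ᶠ t : ℝ in 𝓝 0, (t : ℂ) ∈ C := by
    filter_upwards [Metric.ball_mem_nhds 0 hρ] with t ht
    exact hreal t (by simpa using ht)
  have hlim {l : Filter ℝ} [l.NeBot] {a : ℂ} (hl : l ≤ 𝓝[≠] 0)
      (ha : Tendsto (fun t : ℝ => Complex.log ((t - σ * Complex.I) / (t + σ * Complex.I))) l
        (𝓝 a)) : g 0 = a + k := by
    have hg0 : Tendsto (fun t : ℝ => g t) l (𝓝 (g 0)) := by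
      refine (hg 0 (by simpa using hreal 0 (by simpa using hρ))).tendsto.comp
        (tendsto_nhdsWithin_iff.2 ⟨?_, hl.trans nhdsWithin_le_nhds hC0⟩)
      simpa using (Complex.continuous_ofReal.tendsto 0).mono_left (hl.trans nhdsWithin_le_nhds)
    refine tendsto_nhds_unique hg0 ((ha.add_const k).congr' ?_)
    filter_upwards [hl self_mem_nhdsWithin, hl.trans nhdsWithin_le_nhds hC0] with t ht0 htC
    exact (hk ⟨htC, by simpa using ht0⟩).symm
  have hright := hlim (nhdsGT_le_nhdsNE 0) (tendsto_log_sub_div_add_nhdsGT hσ)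
  have hleft := hlim (nhdsLT_le_nhdsNE 0) (tendsto_log_sub_div_add_nhdsLT hσ)
  exact Complex.two_pi_I_ne_zero (by linear_combination hright - hleft)

theorem not_hasLogOn_of_crossing {C : Set ℂ} {c d : ℂ} {ρ : ℝ} (hd : d ≠ 0) (hσ : 0 < σ)
    (hρ : 0 < ρ) (hreal : ∀ t : ℝ, |t| < ρ → c + t * d ∈ C)
    (himag : ∀ s : ℝ, |s| ≤ σ → s ≠ 0 → c + s * Complex.I * d ∉ C)
    (hC : IsPreconnected (C \ {c})) :
    ¬ HasLogOn C (fun z => (z - (c + σ * Complex.I * d)) / (z - (c - σ * Complex.I * d))) := by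
  intro h
  let φ : ℂ ≃ₜ ℂ := (Homeomorph.mulRight₀ d hd).trans (Homeomorph.addLeft c)
  have hφ (z : ℂ) : φ z = c + z * d := rfl
  have hdiff : φ ⁻¹' C \ {0} = φ ⁻¹' (C \ {c}) := by
    ext z
    simp [hφ, hd]
  refine not_hasLogOn_of_crossing_zero (C := φ ⁻¹' C) hσ hρ hreal himag
    (hdiff ▸ φ.isPreconnected_preimage.2 hC) ((h.comp φ.continuous.continuousOn
      (Set.mapsTo_preimage φ C)).congr fun w _ => ?_)
  have hnum : c + w * d - (c + σ * Complex.I * d) = (w - σ * Complex.I) * d := by ring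
  have hden : c + w * d - (c - σ * Complex.I * d) = (w + σ * Complex.I) * d := by ring
  simp only [Function.comp_apply, hφ]
  rw [hnum, hden, mul_div_mul_right _ _ hd]

end Crossing

theorem IsArc.exists_diff_singleton_eq_union {A : Set ℂ} {x y c : ℂ} (hA : IsArc A x y)
    (hc : c ∈ A \ {x, y}) :
    ∃ L R, IsPreconnected L ∧ IsPreconnected R ∧ x ∈ L ∧ y ∈ R ∧ A \ {c} = L ∪ R := by
  obtain ⟨γ, hγ, hinj, rfl, rfl, rfl⟩ := hA
  obtain ⟨⟨t, ht, rfl⟩, hne⟩ := hc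
  have ht0 : 0 < t := ht.1.lt_of_ne (by rintro rfl; exact hne (.inl rfl))
  have ht1 : t < 1 := ht.2.lt_of_ne (by rintro rfl; exact hne (.inr rfl))
  refine ⟨γ '' Set.Ico 0 t, γ '' Set.Ioc t 1, ?_, ?_, ⟨0, ⟨le_rfl, ht0⟩, rfl⟩,
    ⟨1, ⟨ht1, le_rfl⟩, rfl⟩, ?_⟩
  · exact isPreconnected_Ico.image _ (hγ.mono fun _ hs => ⟨hs.1, hs.2.le.trans ht.2⟩)
  · exact isPreconnected_Ioc.image _ (hγ.mono fun _ hs => ⟨ht.1.trans hs.1.le, hs.2⟩)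
  · have hIcc : Set.Icc (0 : ℝ) 1 \ {t} = Set.Ico 0 t ∪ Set.Ioc t 1 := by
      ext s
      simp only [Set.mem_sdiff, Set.mem_Icc, Set.mem_singleton_iff, Set.mem_union, Set.mem_Ico,
        Set.mem_Ioc]
      grind
    rw [← Set.image_union, ← hIcc, hinj.image_sdiff,
      Set.inter_eq_right.2 (Set.singleton_subset_iff.2 ht), Set.image_singleton]

theorem IsArc.isPreconnected_union_diff_singleton {A B : Set ℂ} {x y c : ℂ} (hA : IsArc A x y)
    (hc : c ∈ A \ {x, y}) (hB : IsPreconnected B) (hx : x ∈ B) (hy : y ∈ B) (hcB : c ∉ B) :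
    IsPreconnected ((A ∪ B) \ {c}) := by
  obtain ⟨L, R, hL, hR, hxL, hyR, hLR⟩ := hA.exists_diff_singleton_eq_union hc
  rw [Set.union_sdiff_distrib, hLR, Set.sdiff_singleton_eq_self hcB, Set.union_assoc]
  exact hL.union x hxL (.inr hx) (hR.union y hyR hy hB)

theorem add_mul_mem_segment_iff {e d z : ℂ} (hd : d ≠ 0) (hz : ‖z‖ < 1 / 2) :
    e + 1 / 2 * d + z * d ∈ segment ℝ e (e + d) ↔ z.im = 0 := by
  rw [segment_eq_image']
  simp only [Complex.real_smul, add_sub_cancel_left]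
  constructor
  · rintro ⟨s, -, hs⟩
    have hzs : (z - (s - 1 / 2 : ℝ)) * d = 0 := by push_cast; linear_combination -hs
    rw [sub_eq_zero.1 ((mul_eq_zero.1 hzs).resolve_right hd), Complex.ofReal_im]
  · intro him
    have hre := abs_lt.1 ((Complex.abs_re_le_norm z).trans_lt hz)
    refine ⟨1 / 2 + z.re, ⟨by linarith, by linarith⟩, ?_⟩
    have hz' : (z.re : ℂ) = z := Complex.ext rfl (by simp [him])
    push_cast
    rw [hz']
    ring

theorem norm_half_mul_add_mul_lt {d z : ℂ} (hd : d ≠ 0) (hz : ‖z‖ < 1 / 2) :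
    ‖1 / 2 * d + z * d‖ < ‖d‖ := by
  have hle : ‖1 / 2 + z‖ < 1 := by
    have h := norm_add_le (1 / 2) z
    norm_num at h
    linarith
  rw [← add_mul, norm_mul]
  exact mul_lt_of_lt_one_left (norm_pos_iff.2 hd) hle

/-- The open half-disc above the diameter in the direction `d` of the disc with centre `c` and
radius `ρ * ‖d‖`. -/
def halfDisc (c d : ℂ) (ρ : ℝ) : Set ℂ :=
  (fun z => c + z * d) '' (Metric.ball 0 ρ ∩ {z | 0 < z.im})

theorem isPreconnected_halfDisc (c d : ℂ) (ρ : ℝ) : IsPreconnected (halfDisc c d ρ) :=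
  ((convex_ball (0 : ℂ) ρ).inter (convex_halfSpace_im_gt 0)).isPreconnected.image _ (by fun_prop)

theorem add_mul_I_mul_mem_halfDisc (c d : ℂ) {ρ s : ℝ} (hs : s ∈ Set.Ioo 0 ρ) :
    c + s * Complex.I * d ∈ halfDisc c d ρ :=
  ⟨s * Complex.I, ⟨by simpa [abs_of_pos hs.1] using hs.2, by simpa using hs.1⟩, rfl⟩

theorem mem_closure_halfDisc (c d : ℂ) {ρ : ℝ} (hρ : 0 < ρ) : c ∈ closure (halfDisc c d ρ) := by
  have hcont : Continuous fun s : ℝ => c + s * Complex.I * d := by fun_prop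
  have hmem := map_mem_closure (t := halfDisc c d ρ) hcont
    (closure_Ioo hρ.ne ▸ Set.left_mem_Icc.2 hρ.le) fun s hs => add_mul_I_mul_mem_halfDisc c d hs
  simpa using hmem

namespace PlaneEmbedding

variable {G : SimpleGraph V} {E : PlaneEmbedding G} {r : ℝ}

/-- In the affine coordinate `z` of the point `c + z * d`, the drawing agrees with the real axis in
the disc of radius `ρ` about the origin, and there it belongs to the edge `uv`. -/
structure IsChart (E : PlaneEmbedding G) (u v : V) (c d : ℂ) (ρ : ℝ) : Prop where
  ne_zero : d ≠ 0
  pos : 0 < ρ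
  mem_inner : ∀ ⦃z : ℂ⦄, ‖z‖ < ρ → z.im = 0 → c + z * d ∈ E.inner u v
  notMem_skel : ∀ ⦃z : ℂ⦄, ‖z‖ < ρ → z.im ≠ 0 → c + z * d ∉ E.skel G

theorem IsRadial.exists_mem_inner_iff_im_eq_zero (hE : E.IsRadial r) {u v : V} (h : G.Adj u v) :
    ∃ c d : ℂ, d ≠ 0 ∧ ∀ z : ℂ, ‖z‖ < 1 / 2 → (c + z * d ∈ E.inner u v ↔ z.im = 0) := by
  obtain ⟨a, ha, hseg⟩ := hE.arc_inter_ball u v h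
  obtain ⟨d, rfl⟩ : ∃ d, a = E.vtx u + d := ⟨a - E.vtx u, by ring⟩
  rw [add_sub_cancel_left] at ha
  have hd : d ≠ 0 := norm_pos_iff.1 (ha ▸ hE.pos)
  refine ⟨E.vtx u + 1 / 2 * d, d, hd, fun z hz => ?_⟩
  have hball : E.vtx u + 1 / 2 * d + z * d ∈ Metric.closedBall (E.vtx u) r := by
    rw [mem_closedBall_iff_norm, add_assoc, add_sub_cancel_left, ← ha]
    exact (norm_half_mul_add_mul_lt hd hz).le
  rw [← add_mul_mem_segment_iff hd hz, ← hseg]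
  refine ⟨fun h' => ⟨h'.1, hball⟩, fun h' => ⟨h'.1, ?_⟩⟩
  rintro (hu | hv)
  · have hzero : (1 / 2 + z) * d = 0 := by linear_combination hu
    rw [eq_neg_of_add_eq_zero_right ((mul_eq_zero.1 hzero).resolve_right hd)] at hz
    norm_num at hz
  · exact h.ne' (hE.eq_of_vtx_mem (hv ▸ hball :))

theorem IsRadial.exists_isChart [Finite V] (hE : E.IsRadial r) {u v : V} (h : G.Adj u v) :
    ∃ c d ρ, E.IsChart u v c d ρ := by
  obtain ⟨c, d, hd, hin⟩ := hE.exists_mem_inner_iff_im_eq_zero h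
  have hcin : c ∈ E.inner u v := by simpa using (hin 0 (by norm_num)).2 rfl
  have hle : G.deleteEdges {s(u, v)} ≤ G := deleteEdges_le _
  have hcK : c ∉ E.skel (G.deleteEdges {s(u, v)}) := fun hmem => by
    simpa using E.adj_of_mem_inner hle h hcin hmem
  obtain ⟨ε, hε, hεK⟩ := Metric.isOpen_iff.1 (E.isCompact_skel hle).isClosed.isOpen_compl c hcK
  refine ⟨c, d, min (1 / 2) (ε / ‖d‖), hd, by positivity, fun z hz => ?_, fun z hz him hmem => ?_⟩
  · exact (hin z (hz.trans_le (min_le_left _ _))).2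
  have hzK : c + z * d ∉ E.skel (G.deleteEdges {s(u, v)}) := by
    refine hεK ?_
    rw [mem_ball_iff_norm, add_sub_cancel_left, norm_mul]
    exact (lt_div_iff₀ (norm_pos_iff.2 hd)).1 (hz.trans_le (min_le_right _ _))
  rw [E.skel_eq_skel_deleteEdges_union h] at hmem
  refine him ((hin z (hz.trans_le (min_le_left _ _))).1 ⟨hmem.resolve_left hzK, ?_⟩)
  rintro (hzu | hzv)
  exacts [hzK (hzu ▸ E.vtx_mem_skel _ _), hzK (hzv ▸ E.vtx_mem_skel _ _)]

namespace IsChart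

variable {u v : V} {c d : ℂ} {ρ : ℝ}

theorem neg (h : E.IsChart u v c d ρ) : E.IsChart u v c (-d) ρ where
  ne_zero := neg_ne_zero.2 h.ne_zero
  pos := h.pos
  mem_inner z hz him := by
    simpa using h.mem_inner (z := -z) (by simpa using hz) (by simpa using him)
  notMem_skel z hz him := by
    simpa using h.notMem_skel (z := -z) (by simpa using hz) (by simpa using him)

theorem center_mem_inner (h : E.IsChart u v c d ρ) : c ∈ E.inner u v := by
  simpa using h.mem_inner (z := 0) (by simpa using h.pos) rfl

theorem add_mul_I_mul_notMem_skel (h : E.IsChart u v c d ρ) {s : ℝ} (hs : |s| < ρ) (hs0 : s ≠ 0) :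
    c + s * Complex.I * d ∉ E.skel G :=
  h.notMem_skel (by simpa using hs) (by simpa using hs0)

theorem halfDisc_subset (h : E.IsChart u v c d ρ) : halfDisc c d ρ ⊆ (E.skel G)ᶜ := by
  rintro _ ⟨z, ⟨hz, him⟩, rfl⟩
  exact h.notMem_skel (by simpa using hz) (ne_of_gt him)

theorem halfDisc_subset_region (h : E.IsChart u v c d ρ) {H : SimpleGraph V} (hH : H ≤ G)
    {x y : ℂ} (hy : y ∈ halfDisc c d ρ) (hyx : y ∈ E.region H x) :
    halfDisc c d ρ ⊆ E.region H x := by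
  intro z hz
  rw [E.region_eq hyx]
  exact E.mem_region_of_isPreconnected (isPreconnected_halfDisc c d ρ)
    (h.halfDisc_subset.trans (Set.compl_subset_compl.2 (E.skel_mono hH))) hy hz

theorem image_ball_mem_nhds (h : E.IsChart u v c d ρ) :
    (fun z => c + z * d) '' Metric.ball 0 ρ ∈ nhds c := by
  let φ : ℂ ≃ₜ ℂ := (Homeomorph.mulRight₀ d h.ne_zero).trans (Homeomorph.addLeft c)
  have himage := φ.isOpenMap.image_mem_nhds (Metric.ball_mem_nhds 0 h.pos)
  have hφ : φ 0 = c := by simp [φ]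
  rwa [hφ] at himage

theorem exists_mem_region (h : E.IsChart u v c d ρ) {H : SimpleGraph V} (huv : H.Adj u v) {x : ℂ}
    (hx : c ∈ closure (E.region H x)) :
    (halfDisc c d ρ ∩ E.region H x).Nonempty ∨ (halfDisc c (-d) ρ ∩ E.region H x).Nonempty := by
  obtain ⟨_, ⟨z, hz, rfl⟩, hzR⟩ := mem_closure_iff_nhds.1 hx _ h.image_ball_mem_nhds
  rcases lt_trichotomy z.im 0 with him | him | him
  · exact .inr ⟨_, ⟨-z, ⟨by simpa using hz, by simpa using him⟩, by simp⟩, hzR⟩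
  · exact absurd (E.arc_subset_skel huv (h.mem_inner (by simpa using hz) him).1)
      (E.region_subset _ _ hzR)
  · exact .inl ⟨_, ⟨z, ⟨hz, him⟩, rfl⟩, hzR⟩

theorem bdry_adj_of_mem_region (h : E.IsChart u v c d ρ) {H : SimpleGraph V} (hH : H ≤ G)
    (huv : H.Adj u v) {x y : ℂ} (hy : y ∈ halfDisc c d ρ) (hyx : y ∈ E.region H x) :
    (E.bdry H (E.region H x)).Adj u v :=
  ⟨huv, c, h.center_mem_inner,
    closure_mono (h.halfDisc_subset_region hH hy hyx) (mem_closure_halfDisc c d h.pos)⟩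

theorem bdry_adj_iff [Finite V] (h : E.IsChart u v c d ρ) {H : SimpleGraph V} (hH : H ≤ G)
    (huv : H.Adj u v) {p q : ℂ} (hp : p ∈ halfDisc c d ρ) (hq : q ∈ halfDisc c (-d) ρ) (x : ℂ) :
    (E.bdry H (E.region H x)).Adj u v ↔ p ∈ E.region H x ∨ q ∈ E.region H x := by
  refine ⟨fun hb => ?_, ?_⟩
  · have hc : c ∈ closure (E.region H x) :=
      E.arc_subset_closure_region hH hb h.center_mem_inner.1
    rcases h.exists_mem_region huv hc with ⟨y, hy, hyx⟩ | ⟨y, hy, hyx⟩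
    exacts [.inl (h.halfDisc_subset_region hH hy hyx hp),
      .inr (h.neg.halfDisc_subset_region hH hy hyx hq)]
  · rintro (hpx | hqx)
    exacts [h.bdry_adj_of_mem_region hH huv hp hpx, h.neg.bdry_adj_of_mem_region hH huv hq hqx]

theorem mem_region_of_not_adj (h : E.IsChart u v c d ρ) (huv : G.Adj u v) {H : SimpleGraph V}
    (hH : H ≤ G) (hHuv : ¬ H.Adj u v) {σ : ℝ} (hσ : σ ∈ Set.Ioo 0 ρ) :
    c - σ * Complex.I * d ∈ E.region H (c + σ * Complex.I * d) := by
  have hpre : IsPreconnected ((fun s : ℝ => c + s * Complex.I * d) '' Set.Icc (-σ) σ) :=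
    isPreconnected_Icc.image _ (by fun_prop)
  refine E.mem_region_of_isPreconnected hpre ?_ ⟨σ, ⟨by linarith [hσ.1], le_rfl⟩, rfl⟩
    ⟨-σ, ⟨le_rfl, by linarith [hσ.1]⟩, by push_cast; ring⟩
  rintro _ ⟨s, hs, rfl⟩ hmem
  by_cases hs0 : s = 0
  · exact hHuv (E.adj_of_mem_inner hH huv h.center_mem_inner (by simpa [hs0] using hmem))
  · exact h.add_mul_I_mul_notMem_skel ((abs_le.2 hs).trans_lt hσ.2) hs0 (E.skel_mono hH hmem)

end IsChart

theorem isPreconnected_triangle_diff {u v w : V} (huv : G.Adj u v) (huw : G.Adj u w)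
    (hvw : G.Adj v w) {c : ℂ} (hc : c ∈ E.inner u v) :
    IsPreconnected ((E.arc u v ∪ (E.arc u w ∪ E.arc v w)) \ {c}) := by
  refine (E.isArc_arc huv).isPreconnected_union_diff_singleton hc ?_ (.inl (E.left_mem_arc huw))
    (.inr (E.left_mem_arc hvw)) ?_
  · exact IsPreconnected.union (E.vtx w) (E.isArc_arc huw).right_mem (E.isArc_arc hvw).right_mem
      (E.isArc_arc huw).isPreconnected (E.isArc_arc hvw).isPreconnected
  · rintro (hcw | hcw)
    · have := E.edge_eq_of_mem_inner huv huw hc hcw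
      grind [hvw.ne, huw.ne, Sym2.eq_iff]
    · have := E.edge_eq_of_mem_inner huv hvw hc hcw
      grind [hvw.ne, huw.ne, Sym2.eq_iff]

theorem IsChart.notMem_region_of_triangle [Finite V] {u v w : V} {c d : ℂ} {ρ σ : ℝ}
    (h : E.IsChart u v c d ρ) {H : SimpleGraph V} (hH : H ≤ G) (huv : H.Adj u v)
    (huw : H.Adj u w) (hvw : H.Adj v w) (hσ : σ ∈ Set.Ioo 0 ρ) :
    c - σ * Complex.I * d ∉ E.region H (c + σ * Complex.I * d) := by
  intro hqp
  have hCH : E.arc u v ∪ (E.arc u w ∪ E.arc v w) ⊆ E.skel H :=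
    Set.union_subset (E.arc_subset_skel huv)
      (Set.union_subset (E.arc_subset_skel huw) (E.arc_subset_skel hvw))
  have hCc : IsCompact (E.arc u v ∪ (E.arc u w ∪ E.arc v w)) :=
    (E.isArc_arc (hH huv)).isCompact.union
      ((E.isArc_arc (hH huw)).isCompact.union (E.isArc_arc (hH hvw)).isCompact)
  have hnot {s : ℝ} (hs : |s| ≤ σ) (hs0 : s ≠ 0) : c + s * Complex.I * d ∉ E.skel H := fun hmem =>
    h.add_mul_I_mul_notMem_skel (hs.trans_lt hσ.2) hs0 (E.skel_mono hH hmem)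
  refine not_hasLogOn_of_crossing h.ne_zero hσ.1 h.pos (fun t ht => Or.inl ?_)
    (fun s hs hs0 hmem => hnot hs hs0 (hCH hmem))
    (isPreconnected_triangle_diff (hH huv) (hH huw) (hH hvw) h.center_mem_inner) ?_
  · exact (h.mem_inner (by simpa using ht) (by simp)).1
  · exact hasLogOn_of_isPreconnected hCc.isClosed (E.isPreconnected_region H _)
      ((E.region_subset H _).trans (Set.compl_subset_compl.2 hCH))
      (E.mem_region_self (hnot (abs_of_pos hσ.1).le hσ.1.ne')) hqp

/-- The points `p` and `q` lie on the two different sides of the edge `uv`, as seen by every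
subgraph. -/
structure IsSides (E : PlaneEmbedding G) (u v : V) (p q : ℂ) : Prop where
  left_notMem : p ∉ E.skel G
  right_notMem : q ∉ E.skel G
  bdry_adj_iff : ∀ {H : SimpleGraph V}, H ≤ G → H.Adj u v → ∀ x,
    (E.bdry H (E.region H x)).Adj u v ↔ p ∈ E.region H x ∨ q ∈ E.region H x
  mem_region : ∀ {H : SimpleGraph V}, H ≤ G → ¬ H.Adj u v → q ∈ E.region H p
  notMem_region : ∀ {H : SimpleGraph V}, H ≤ G → ∀ w, H.Adj u v → H.Adj u w → H.Adj v w →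
    q ∉ E.region H p

theorem IsRadial.exists_isSides [Finite V] (hE : E.IsRadial r) {u v : V} (h : G.Adj u v) :
    ∃ p q, E.IsSides u v p q := by
  obtain ⟨c, d, ρ, hch⟩ := hE.exists_isChart h
  have hσ : ρ / 2 ∈ Set.Ioo 0 ρ := ⟨half_pos hch.pos, half_lt_self hch.pos⟩
  have hp := add_mul_I_mul_mem_halfDisc c d hσ
  have hq := add_mul_I_mul_mem_halfDisc c (-d) hσ
  rw [mul_neg, ← sub_eq_add_neg] at hq
  exact ⟨_, _, hch.halfDisc_subset hp, hch.neg.halfDisc_subset hq,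
    fun hH huv => hch.bdry_adj_iff hH huv hp hq,
    fun hH hHuv => hch.mem_region_of_not_adj h hH hHuv hσ,
    fun hH w huv huw hvw => hch.notMem_region_of_triangle hH huv huw hvw hσ⟩

end PlaneEmbedding

/-! ### Small graphs containing a cycle -/

/-- The complete graph on the vertices in `S`; the vertices outside `S` are isolated. -/
def cliqueOn (S : Finset V) : SimpleGraph V where
  Adj u v := u ∈ S ∧ v ∈ S ∧ u ≠ v
  symm := ⟨fun _ _ h => ⟨h.2.1, h.1, h.2.2.symm⟩⟩
  loopless := ⟨fun _ h => h.2.2 rfl⟩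

theorem cliqueOn_mono {S T : Finset V} (h : S ⊆ T) : cliqueOn S ≤ cliqueOn T :=
  fun _ _ huv => ⟨h huv.1, h huv.2.1, huv.2.2⟩

theorem cliqueOn_le {G : SimpleGraph V} {S : Finset V} (h : G.IsClique S) : cliqueOn S ≤ G :=
  fun _ _ huv => h huv.1 huv.2.1 huv.2.2

theorem card_edgeFinset_cliqueOn_le (S : Finset V) [Fintype (cliqueOn S).edgeSet] :
    (cliqueOn S).edgeFinset.card ≤ S.card.choose 2 := by
  classical
  rw [← Sym2.card_image_offDiag]
  refine Finset.card_le_card fun e he => ?_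
  induction e with
  | _ u v =>
    rw [mem_edgeFinset, mem_edgeSet] at he
    exact Finset.mem_image.2 ⟨(u, v), Finset.mem_offDiag.2 he, rfl⟩

theorem not_isAcyclic_cliqueOn {S : Finset V} (hS : 3 ≤ S.card) : ¬ (cliqueOn S).IsAcyclic := by
  obtain ⟨a, ha, b, hb, c, hc, hab, hac, hbc⟩ := Finset.two_lt_card.1 hS
  have h₁ : (cliqueOn S).Adj a b := ⟨ha, hb, hab⟩
  have h₂ : (cliqueOn S).Adj b c := ⟨hb, hc, hbc⟩
  have h₃ : (cliqueOn S).Adj c a := ⟨hc, ha, hac.symm⟩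
  intro hacyclic
  refine hacyclic (Walk.cons h₁ (Walk.cons h₂ (Walk.cons h₃ Walk.nil))) ?_
  simp [Walk.isCycle_def, Walk.isTrail_def, hab, hac, hbc, hab.symm, hac.symm]

theorem exists_isCycle_of_not_isAcyclic {B : SimpleGraph V} (hB : ¬ B.IsAcyclic) :
    ∃ (a : V) (c : B.Walk a a), c.IsCycle := by
  simpa only [IsAcyclic, not_forall, not_not] using hB

theorem card_toFinset_edges_of_isCycle [DecidableEq V] {B : SimpleGraph V} {a : V} {c : B.Walk a a}
    (hc : c.IsCycle) : c.edges.toFinset.card = c.length := by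
  rw [List.toFinset_card_of_nodup hc.isTrail.edges_nodup, Walk.length_edges]

theorem toFinset_edges_subset_edgeFinset [DecidableEq V] {B : SimpleGraph V} [Fintype B.edgeSet]
    {a b : V} (c : B.Walk a b) : c.edges.toFinset ⊆ B.edgeFinset := fun _ he =>
  mem_edgeFinset.2 (c.edges_subset_edgeSet (List.mem_toFinset.1 he))

theorem three_le_card_edgeFinset {B : SimpleGraph V} [Fintype B.edgeSet] (hB : ¬ B.IsAcyclic) :
    3 ≤ B.edgeFinset.card := by
  classical
  obtain ⟨a, c, hc⟩ := exists_isCycle_of_not_isAcyclic hB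
  calc
    3 ≤ c.edges.toFinset.card := by
      rw [card_toFinset_edges_of_isCycle hc]
      exact hc.three_le_length
    _ ≤ _ := Finset.card_le_card (toFinset_edges_subset_edgeFinset c)

theorem four_le_card_edgeFinset {B : SimpleGraph V} [Fintype B.edgeSet] (hB : ¬ B.IsAcyclic)
    {S : Finset V} (hS : ∀ u ∈ S, ∃ v, B.Adj u v) (hcard : 4 ≤ S.card) :
    4 ≤ B.edgeFinset.card := by
  classical
  obtain ⟨a, c, hc⟩ := exists_isCycle_of_not_isAcyclic hB
  by_contra hlt
  have hlen := hc.three_le_length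
  have hsub := toFinset_edges_subset_edgeFinset c
  have hedges := card_toFinset_edges_of_isCycle hc
  have heq : c.edges.toFinset = B.edgeFinset := Finset.eq_of_subset_of_card_le hsub (by omega)
  have hsupp : S ⊆ c.support.tail.toFinset := fun u hu => by
    obtain ⟨v, hv⟩ := hS u hu
    have he : s(u, v) ∈ c.edges.toFinset := heq ▸ mem_edgeFinset.2 hv
    have hus := c.fst_mem_support_of_mem_edges (List.mem_toFinset.1 he)
    rcases c.mem_support_iff.1 hus with rfl | h
    · exact List.mem_toFinset.2 (Walk.end_mem_tail_support hc.not_nil)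
    · exact List.mem_toFinset.2 h
  have hS' : S.card ≤ c.length := by
    calc
      S.card ≤ c.support.tail.length := (Finset.card_le_card hsupp).trans (List.toFinset_card_le _)
      _ = c.length := by rw [List.length_tail, Walk.length_support, Nat.add_sub_cancel]
  have := Finset.card_le_card hsub
  omega

theorem card_eq_three_and_eq_cliqueOn [Finite V] {B : SimpleGraph V} (hB : ¬ B.IsAcyclic)
    {S : Finset V} (hS : B ≤ cliqueOn S) (hcard : S.card ≤ 3) : S.card = 3 ∧ B = cliqueOn S := by
  classical
  have := Fintype.ofFinite V
  have hsub : B.edgeFinset ⊆ (cliqueOn S).edgeFinset := edgeFinset_mono hS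
  have h₁ := three_le_card_edgeFinset hB
  have h₂ := Finset.card_le_card hsub
  have h₃ := card_edgeFinset_cliqueOn_le S
  have hS3 : S.card = 3 := by
    by_contra hne
    have : S.card.choose 2 ≤ Nat.choose 2 2 := Nat.choose_le_choose 2 (by omega)
    rw [Nat.choose_self] at this
    omega
  rw [hS3, show Nat.choose 3 2 = 3 from rfl] at h₃
  exact ⟨hS3, edgeFinset_inj.1 (Finset.eq_of_subset_of_card_le hsub (h₃.trans h₁))⟩

/-! ### Faces of a plane triangulation -/

theorem encard_image_add_one_le {α β γ : Type*} {s : Set α} {f : α → β} {g : α → γ}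
    (h : ∀ x ∈ s, ∀ y ∈ s, g x = g y → f x = f y) {p q : α} (hp : p ∈ s) (hq : q ∈ s)
    (hf : f p = f q) (hg : g p ≠ g q) : (f '' s).encard + 1 ≤ (g '' s).encard := by
  have : Nonempty α := ⟨p⟩
  have hinv {x : α} (hx : x ∈ s) : f (Function.invFunOn g s (g x)) = f x :=
    h _ (Function.invFunOn_mem ⟨x, hx, rfl⟩) _ hx (Function.invFunOn_eq ⟨x, hx, rfl⟩)
  have hsub : f '' s ⊆ (f ∘ Function.invFunOn g s) '' (g '' s \ {g q}) := by
    rintro _ ⟨x, hx, rfl⟩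
    by_cases hxq : g x = g q
    · exact ⟨g p, ⟨⟨p, hp, rfl⟩, hg⟩, (hinv hp).trans (hf.trans (h x hx q hq hxq).symm)⟩
    · exact ⟨g x, ⟨⟨x, hx, rfl⟩, hxq⟩, hinv hx⟩
  calc
    (f '' s).encard + 1 ≤ (g '' s \ {g q}).encard + 1 :=
      add_le_add_left ((Set.encard_le_encard hsub).trans (Set.encard_image_le _ _)) 1
    _ = (g '' s).encard := Set.encard_sdiff_singleton_add_one ⟨q, hq, rfl⟩

namespace PlaneEmbedding

variable {G : SimpleGraph V} {E : PlaneEmbedding G} {r : ℝ}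

theorem exists_notMem_skel [Finite V] (E : PlaneEmbedding G) : ∃ x, x ∉ E.skel G := by
  rw [← Set.ne_univ_iff_exists_notMem]
  exact fun h => noncompact_univ ℂ (h ▸ E.isCompact_skel le_rfl)

theorem mem_region_congr {H : SimpleGraph V} {x p q : ℂ} (h : q ∈ E.region H p) :
    p ∈ E.region H x ↔ q ∈ E.region H x := by
  constructor
  · intro hp
    rwa [E.region_eq hp]
  · intro hq
    rw [E.region_eq hq]
    exact E.mem_region_symm h

theorem IsSides.mem_region_iff {u v : V} {p q : ℂ} (hs : E.IsSides u v p q) {H : SimpleGraph V}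
    (hH : H ≤ G) (huv : ¬ H.Adj u v) (x : ℂ) : p ∈ E.region H x ↔ q ∈ E.region H x :=
  mem_region_congr (hs.mem_region hH huv)

theorem IsSides.card_le_two {u v : V} {p q : ℂ} (hs : E.IsSides u v p q) {H : SimpleGraph V}
    (hH : H ≤ G) (𝓡 : Finset (Set ℂ))
    (h𝓡 : ∀ R ∈ 𝓡, (∃ x, R = E.region H x) ∧ (E.bdry H R).Adj u v) : 𝓡.card ≤ 2 := by
  classical
  have hsub : 𝓡 ⊆ {E.region H p, E.region H q} := by
    intro R hR
    obtain ⟨⟨x, rfl⟩, hb⟩ := h𝓡 R hR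
    rw [Finset.mem_insert, Finset.mem_singleton]
    exact ((hs.bdry_adj_iff hH hb.1 x).1 hb).imp E.region_eq E.region_eq
  exact (Finset.card_le_card hsub).trans Finset.card_le_two

/-- The regions of a subgraph `H` of `G`. Taking only points off the whole drawing loses no region,
and makes every region of a subgraph of `H` contain a region of `H`. -/
def regions (E : PlaneEmbedding G) (H : SimpleGraph V) : Set (Set ℂ) :=
  E.region H '' (E.skel G)ᶜ

theorem IsRadial.encard_regions_add_one_le [Finite V] (hE : E.IsRadial r) {H H' : SimpleGraph V}
    (hH' : H' ≤ H) (hH : H ≤ G) {u v w : V} (huv : H.Adj u v) (huw : H.Adj u w)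
    (hvw : H.Adj v w) (hnot : ¬ H'.Adj u v) :
    (E.regions H').encard + 1 ≤ (E.regions H).encard := by
  obtain ⟨p, q, hs⟩ := hE.exists_isSides (hH huv)
  refine encard_image_add_one_le (fun x _ y hy hxy => ?_) hs.left_notMem hs.right_notMem
    (E.region_eq (hs.mem_region (hH'.trans hH) hnot)) fun hpq => ?_
  · have hyx : y ∈ E.region H x :=
      hxy ▸ E.mem_region_self fun hmem => hy (E.skel_mono hH hmem)
    exact E.region_eq (E.region_anti hH' x hyx)
  · exact hs.notMem_region hH w huv huw hvw
      (hpq ▸ E.mem_region_self fun hmem => hs.right_notMem (E.skel_mono hH hmem))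

/-- Deleting a triangle from the complete graph on four vertices leaves a star, and restoring the
edges of that triangle one at a time closes a triangle with the centre of the star each time. -/
theorem IsRadial.four_le_encard_regions [Finite V] (hE : E.IsRadial r) {S : Finset V}
    (hS : S.card = 4) (hSG : cliqueOn S ≤ G) : 4 ≤ (E.regions (cliqueOn S)).encard := by
  classical
  obtain ⟨a, b, c, d, hab, hac, had, hbc, hbd, hcd, rfl⟩ := Finset.card_eq_four.1 hS
  set K := cliqueOn {a, b, c, d}
  have hstar : 1 ≤ (E.regions (K.deleteEdges {s(b, c), s(b, d), s(c, d)})).encard :=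
    Set.one_le_encard_iff_nonempty.2 (Set.Nonempty.image _ E.exists_notMem_skel)
  have hbc' : (E.regions (K.deleteEdges {s(b, c), s(b, d), s(c, d)})).encard + 1 ≤
      (E.regions (K.deleteEdges {s(b, d), s(c, d)})).encard :=
    hE.encard_regions_add_one_le (u := b) (v := c) (w := a) (K.deleteEdges_anti (by simp))
      ((K.deleteEdges_le _).trans hSG) (by simp [K, cliqueOn, *, Ne.symm])
      (by simp [K, cliqueOn, *, Ne.symm]) (by simp [K, cliqueOn, *, Ne.symm]) (by simp)
  have hbd' : (E.regions (K.deleteEdges {s(b, d), s(c, d)})).encard + 1 ≤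
      (E.regions (K.deleteEdges {s(c, d)})).encard :=
    hE.encard_regions_add_one_le (u := b) (v := d) (w := a) (K.deleteEdges_anti (by simp))
      ((K.deleteEdges_le _).trans hSG) (by simp [K, cliqueOn, *, Ne.symm])
      (by simp [K, cliqueOn, *, Ne.symm]) (by simp [K, cliqueOn, *, Ne.symm]) (by simp)
  have hcd' : (E.regions (K.deleteEdges {s(c, d)})).encard + 1 ≤ (E.regions K).encard :=
    hE.encard_regions_add_one_le (u := c) (v := d) (w := a) (K.deleteEdges_le _) hSG
      (by simp [K, cliqueOn, *]) (by simp [K, cliqueOn, *, Ne.symm])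
      (by simp [K, cliqueOn, *, Ne.symm]) (by simp)
  calc
    (4 : ℕ∞) = 1 + 1 + 1 + 1 := by norm_num
    _ ≤ (E.regions (K.deleteEdges {s(b, c), s(b, d), s(c, d)})).encard + 1 + 1 + 1 := by gcongr
    _ ≤ (E.regions (K.deleteEdges {s(b, d), s(c, d)})).encard + 1 + 1 := by gcongr
    _ ≤ (E.regions (K.deleteEdges {s(c, d)})).encard + 1 := by gcongr
    _ ≤ (E.regions K).encard := hcd'

theorem edgeFinset_bdry_eq_filter (H : SimpleGraph V) (R : Set ℂ)
    [Fintype H.edgeSet] [Fintype (E.bdry H R).edgeSet] [DecidablePred (· ∈ (E.bdry H R).edgeSet)] :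
    H.edgeFinset.filter (· ∈ (E.bdry H R).edgeSet) = (E.bdry H R).edgeFinset := by
  ext e
  rw [Finset.mem_filter, mem_edgeFinset, mem_edgeFinset]
  exact and_iff_right_of_imp fun he => edgeSet_mono (E.bdry_le H R) he

open Classical in
theorem IsRadial.sum_card_edgeFinset_bdry_le [Fintype V] (hE : E.IsRadial r) {H : SimpleGraph V}
    (hH : H ≤ G) (𝓡 : Finset (Set ℂ)) (h𝓡 : ∀ R ∈ 𝓡, ∃ x, R = E.region H x) :
    ∑ R ∈ 𝓡, (E.bdry H R).edgeFinset.card ≤ H.edgeFinset.card * 2 := by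
  calc
    ∑ R ∈ 𝓡, (E.bdry H R).edgeFinset.card =
        ∑ e ∈ H.edgeFinset, (𝓡.filter fun R => e ∈ (E.bdry H R).edgeSet).card := by
      simp only [← edgeFinset_bdry_eq_filter]
      exact Finset.sum_card_bipartiteAbove_eq_sum_card_bipartiteBelow _
    _ ≤ H.edgeFinset.card * 2 := by
      rw [← smul_eq_mul]
      refine Finset.sum_le_card_nsmul _ _ _ fun e he => ?_
      induction e with
      | _ u v =>
        obtain ⟨p, q, hs⟩ := hE.exists_isSides (hH (mem_edgeFinset.1 he))
        exact hs.card_le_two hH _ fun R hR =>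
          ⟨h𝓡 R (Finset.mem_filter.1 hR).1, (Finset.mem_filter.1 hR).2⟩

/-- Otherwise four regions would have at least `4 + 3 + 3 + 3` edges on their boundaries, while the
six edges of the complete graph lie on the boundaries of at most two regions each. -/
theorem IsRadial.not_forall_mem_closure_region [Finite V] (hE : E.IsRadial r) {S : Finset V}
    (hS : S.card = 4) (hSG : cliqueOn S ≤ G) {x : ℂ} (hx : x ∉ E.skel G) :
    ¬ ∀ v ∈ S, E.vtx v ∈ closure (E.region (cliqueOn S) x) := by
  classical
  have := Fintype.ofFinite V
  intro hcl
  set K := cliqueOn S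
  have hxR : {E.region K x} ⊆ E.regions K := Set.singleton_subset_iff.2 ⟨x, hx, rfl⟩
  obtain ⟨𝓢, hx𝓢, h𝓢, hcard⟩ := Set.exists_superset_subset_encard_eq (k := 4) hxR
    (by simp) (hE.four_le_encard_regions hS hSG)
  lift 𝓢 to Finset (Set ℂ) using Set.finite_of_encard_eq_coe hcard
  rw [Set.encard_coe_eq_coe_finsetCard] at hcard
  have hac : ¬ K.IsAcyclic := not_isAcyclic_cliqueOn (by omega)
  have hbdry {y : ℂ} (hy : y ∉ E.skel G) : ¬ (E.bdry K (E.region K y)).IsAcyclic :=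
    E.not_isAcyclic_bdry hSG hac fun hmem => hy (E.skel_mono hSG hmem)
  have hfour : 4 ≤ (E.bdry K (E.region K x)).edgeFinset.card := by
    refine four_le_card_edgeFinset (hbdry hx) (S := S) (fun u hu => ?_) hS.ge
    obtain ⟨v, hv, hvu⟩ := Finset.exists_mem_ne (show 1 < S.card by omega) u
    exact E.exists_bdry_adj hSG (v := v) ⟨hu, hv, hvu.symm⟩ (hcl u hu)
  have hlower : 3 * 3 + 4 ≤ ∑ R ∈ 𝓢, (E.bdry K R).edgeFinset.card := by
    have hmem : E.region K x ∈ 𝓢 := hx𝓢 rfl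
    rw [← Finset.sum_erase_add _ _ hmem]
    have herase : (𝓢.erase (E.region K x)).card = 3 := by
      rw [Finset.card_erase_of_mem hmem, Nat.cast_injective hcard]
    refine add_le_add ?_ hfour
    nth_rw 1 [← herase, ← smul_eq_mul]
    refine Finset.card_nsmul_le_sum _ _ 3 fun R hR => ?_
    obtain ⟨y, hy, rfl⟩ := h𝓢 (Finset.mem_of_mem_erase hR)
    exact three_le_card_edgeFinset (hbdry hy)
  have hupper := hE.sum_card_edgeFinset_bdry_le hSG 𝓢 fun R hR =>
    (h𝓢 hR).imp fun y hy => hy.2.symm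
  have hedges : K.edgeFinset.card ≤ Nat.choose 4 2 := hS ▸ card_edgeFinset_cliqueOn_le S
  rw [show Nat.choose 4 2 = 6 from rfl] at hedges
  omega

end PlaneEmbedding

open Classical in
/-- A family of triangles behaving like the faces of a triangulation of the sphere: every edge is in
exactly two of them, every triangle is a sum of them modulo two, and four of them form a tetrahedron
only if there are no further vertices. -/
structure IsFaceSystem [Fintype V] (G : SimpleGraph V) (F : Finset (Finset V)) : Prop where
  isNClique : ∀ t ∈ F, G.IsNClique 3 t
  card_eq_two : ∀ u v, G.Adj u v → (F.filter fun t => u ∈ t ∧ v ∈ t).card = 2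
  exists_odd : ∀ T, G.IsNClique 3 T → ∃ D ⊆ F, ∀ u v, G.Adj u v →
    (Odd (D.filter fun t => u ∈ t ∧ v ∈ t).card ↔ u ∈ T ∧ v ∈ T)
  eq_univ : ∀ S : Finset V, S.card = 4 → (∀ t ⊆ S, t.card = 3 → t ∈ F) → S = Finset.univ

theorem exists_mem_ne_ne {T : Finset V} (hT : T.card = 3) (u v : V) :
    ∃ w ∈ T, u ≠ w ∧ v ≠ w := by
  classical
  obtain ⟨w, hw, hwuv⟩ := Finset.exists_mem_notMem_of_card_lt_card (s := {u, v}) (t := T)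
    (hT ▸ Finset.card_le_two.trans_lt (by norm_num))
  simp only [Finset.mem_insert, Finset.mem_singleton, not_or] at hwuv
  exact ⟨w, hw, Ne.symm hwuv.1, Ne.symm hwuv.2⟩

theorem odd_card_filter_pair_iff {α : Type*} [DecidableEq α] {a b : α} (hab : a ≠ b)
    (P : α → Prop) [DecidablePred P] :
    Odd (({a, b} : Finset α).filter P).card ↔ Xor (P a) (P b) := by
  rw [Finset.filter_insert, Finset.filter_singleton]
  by_cases ha : P a <;> by_cases hb : P b <;>
    simp [ha, hb, hab, xor_true, Nat.odd_iff]

theorem subset_of_card_filter_eq_two [DecidableEq V] {F : Finset (Finset V)} {S : Finset V}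
    (hS : S.card = 4) (hF : ∀ t ⊆ S, t.card = 3 → t ∈ F) {u v : V} (hu : u ∈ S) (hv : v ∈ S)
    (huv : u ≠ v) (h2 : (F.filter fun t => u ∈ t ∧ v ∈ t).card = 2) {t : Finset V} (ht : t ∈ F)
    (hut : u ∈ t) (hvt : v ∈ t) : t ⊆ S := by
  obtain ⟨a, b, hab, hSab⟩ := Finset.card_eq_two.1 (show ((S.erase u).erase v).card = 2 by
    rw [Finset.card_erase_of_mem (Finset.mem_erase.2 ⟨huv.symm, hv⟩), Finset.card_erase_of_mem hu,
      hS])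
  obtain ⟨ha, hb⟩ : (a ≠ v ∧ a ≠ u ∧ a ∈ S) ∧ b ≠ v ∧ b ≠ u ∧ b ∈ S := by
    simp only [← Finset.mem_erase, hSab, Finset.mem_insert, Finset.mem_singleton, true_or, or_true,
      and_self]
  have hmem {c : V} (hc : c ≠ v ∧ c ≠ u ∧ c ∈ S) :
      {u, v, c} ∈ F.filter fun t => u ∈ t ∧ v ∈ t :=
    Finset.mem_filter.2 ⟨hF _ (by grind)
      (Finset.card_eq_three.2 ⟨u, v, c, huv, hc.2.1.symm, hc.1.symm, rfl⟩), by simp⟩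
  have hne : ({u, v, a} : Finset V) ≠ {u, v, b} := by grind
  have hfilter : {{u, v, a}, {u, v, b}} = F.filter fun t => u ∈ t ∧ v ∈ t :=
    Finset.eq_of_subset_of_card_le
      (Finset.insert_subset (hmem ha) (Finset.singleton_subset_iff.2 (hmem hb)))
      (h2.trans (Finset.card_pair hne).symm).le
  have ht' : t ∈ ({{u, v, a}, {u, v, b}} : Finset (Finset V)) :=
    hfilter ▸ Finset.mem_filter.2 ⟨ht, hut, hvt⟩
  grind

namespace PlaneEmbedding

variable {G : SimpleGraph V} {E : PlaneEmbedding G} {r : ℝ}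

theorem bdry_cliqueOn_eq [Finite V] {T : Finset V} (hT : G.IsNClique 3 T) {x : ℂ}
    (hx : x ∉ E.skel G) :
    E.bdry (cliqueOn T) (E.region (cliqueOn T) x) = cliqueOn T :=
  have hTG := cliqueOn_le hT.isClique
  (card_eq_three_and_eq_cliqueOn (E.not_isAcyclic_bdry hTG (not_isAcyclic_cliqueOn hT.card_eq.ge)
    fun hmem => hx (E.skel_mono hTG hmem)) (E.bdry_le _ _) hT.card_eq.le).2

theorem IsSides.xor_mem_region_cliqueOn [Finite V] {u v : V} {p q : ℂ} (hs : E.IsSides u v p q)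
    (huv : u ≠ v) {T : Finset V} (hT : G.IsNClique 3 T) {x : ℂ} (hx : x ∉ E.skel G) :
    Xor (p ∈ E.region (cliqueOn T) x) (q ∈ E.region (cliqueOn T) x) ↔ u ∈ T ∧ v ∈ T := by
  have hTG := cliqueOn_le hT.isClique
  by_cases hmem : u ∈ T ∧ v ∈ T
  · have hadj : (cliqueOn T).Adj u v := ⟨hmem.1, hmem.2, huv⟩
    obtain ⟨w, hw, huw, hvw⟩ := exists_mem_ne_ne hT.card_eq u v
    have hor := (hs.bdry_adj_iff hTG hadj x).1 ((bdry_cliqueOn_eq hT hx).symm ▸ hadj)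
    refine iff_of_true ((xor_iff_or_and_not_and _ _).2 ⟨hor, ?_⟩) hmem
    rintro ⟨hp, hq⟩
    rw [E.region_eq hp] at hq
    exact hs.notMem_region hTG w hadj ⟨hmem.1, hw, huw⟩ ⟨hmem.2, hw, hvw⟩ hq
  · refine iff_of_false ((xor_iff_not_iff _ _).not.2 (not_not.2 ?_)) hmem
    exact hs.mem_region_iff hTG (fun h => hmem ⟨h.1, h.2.1⟩) x

theorem IsRadial.exists_mem_closure_region [Finite V] (hE : E.IsRadial r) (v : V) :
    ∃ x, x ∉ E.skel G ∧ E.vtx v ∈ closure (E.region G x) := by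
  by_cases hdeg : ∃ w, G.Adj v w
  · obtain ⟨w, hw⟩ := hdeg
    obtain ⟨p, q, hs⟩ := hE.exists_isSides hw
    exact ⟨p, hs.left_notMem, E.vtx_mem_closure_region le_rfl ((hs.bdry_adj_iff le_rfl hw p).2
      (.inl (E.mem_region_self hs.left_notMem)))⟩
  · obtain ⟨ε, hε, hball⟩ := E.exists_ball_vtx le_rfl v
    have hsub : Metric.ball (E.vtx v) ε \ {E.vtx v} ⊆ (E.skel G)ᶜ := by
      rintro z ⟨hz, hzv⟩ hmem
      exact hdeg ((hball z hz hzv hmem).imp fun _ hw => hw.1)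
    have hcl : E.vtx v ∈ closure (Metric.ball (E.vtx v) ε \ {E.vtx v}) :=
      Metric.isOpen_ball.inter_closure
        ⟨Metric.mem_ball_self hε, (closure_compl_singleton (E.vtx v)).symm ▸ trivial⟩
    obtain ⟨x, hx⟩ := closure_nonempty_iff.1 ⟨_, hcl⟩
    exact ⟨x, hsub hx, closure_mono (fun z hz => E.mem_region_of_isPreconnected
      (isPreconnected_ball_diff_center _ _) hsub hx hz) hcl⟩

variable [Fintype V]

open Classical in
/-- The vertices on the boundary of the region containing `x`. -/
noncomputable def face (E : PlaneEmbedding G) (x : ℂ) : Finset V :=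
  Finset.univ.filter fun v => E.vtx v ∈ closure (E.region G x)

open Classical in
/-- The vertex sets of the faces of the drawing. -/
noncomputable def faces (E : PlaneEmbedding G) : Finset (Finset V) :=
  Finset.univ.filter fun t => ∃ x, x ∉ E.skel G ∧ E.face x = t

theorem mem_face {x : ℂ} {v : V} : v ∈ E.face x ↔ E.vtx v ∈ closure (E.region G x) := by
  simp [face]

theorem mem_faces {t : Finset V} : t ∈ E.faces ↔ ∃ x, x ∉ E.skel G ∧ E.face x = t := by
  simp [faces]

theorem face_eq {x y : ℂ} (h : y ∈ E.region G x) : E.face x = E.face y := by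
  rw [face, face, E.region_eq h]

theorem IsRadial.exists_mem_face (hE : E.IsRadial r) (v : V) : ∃ x, x ∉ E.skel G ∧ v ∈ E.face x :=
  (hE.exists_mem_closure_region v).imp fun _ h => ⟨h.1, mem_face.2 h.2⟩

theorem IsRadial.isClique_face (hE : E.IsRadial r) (hG : MaximalPlanar G) (x : ℂ) :
    G.IsClique (E.face x) := fun _ hu _ hv huv =>
  hE.adj_of_mem_closure hG huv (mem_face.1 hu) (mem_face.1 hv)

theorem IsRadial.card_face_le (hE : E.IsRadial r) (hG : MaximalPlanar G) {x : ℂ}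
    (hx : x ∉ E.skel G) : (E.face x).card ≤ 3 := by
  by_contra! hcon
  obtain ⟨S, hS, hcard⟩ := Finset.exists_subset_card_eq (Nat.succ_le_of_lt hcon)
  have hSG : cliqueOn S ≤ G := cliqueOn_le ((hE.isClique_face hG x).subset hS)
  exact hE.not_forall_mem_closure_region hcard hSG hx fun v hv =>
    closure_mono (E.region_anti hSG x) (mem_face.1 (hS hv))

theorem IsRadial.not_isAcyclic (hE : E.IsRadial r) (hG : MaximalPlanar G)
    (hV : 4 ≤ Fintype.card V) : ¬ G.IsAcyclic := by
  intro hac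
  obtain ⟨x, hx⟩ := E.exists_notMem_skel
  have huniv : E.face x = Finset.univ := by
    refine Finset.eq_univ_of_forall fun v => ?_
    obtain ⟨y, hy, hv⟩ := hE.exists_mem_face v
    rwa [face_eq (E.mem_region_of_isAcyclic le_rfl hac hx hy)]
  have hle := hE.card_face_le hG hx
  rw [huniv, Finset.card_univ] at hle
  omega

theorem IsRadial.triangle_face (hE : E.IsRadial r) (hG : MaximalPlanar G)
    (hV : 4 ≤ Fintype.card V) {x : ℂ} (hx : x ∉ E.skel G) :
    (E.face x).card = 3 ∧ E.bdry G (E.region G x) = cliqueOn (E.face x) :=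
  have hsupp {u v : V} (h : (E.bdry G (E.region G x)).Adj u v) : u ∈ E.face x :=
    mem_face.2 (E.vtx_mem_closure_region le_rfl h)
  card_eq_three_and_eq_cliqueOn (E.not_isAcyclic_bdry le_rfl (hE.not_isAcyclic hG hV) hx)
    (fun _ _ h => ⟨hsupp h, hsupp h.symm, h.ne⟩) (hE.card_face_le hG hx)

theorem IsRadial.isNClique_face (hE : E.IsRadial r) (hG : MaximalPlanar G)
    (hV : 4 ≤ Fintype.card V) {x : ℂ} (hx : x ∉ E.skel G) : G.IsNClique 3 (E.face x) :=
  ⟨hE.isClique_face hG x, (hE.triangle_face hG hV hx).1⟩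

theorem IsRadial.region_eq_of_face_subset (hE : E.IsRadial r) (hG : MaximalPlanar G)
    (hV : 4 ≤ Fintype.card V) {x : ℂ} (hx : x ∉ E.skel G) {S : Finset V} (hS : E.face x ⊆ S)
    (hSG : cliqueOn S ≤ G) : E.region (cliqueOn S) x = E.region G x :=
  E.region_eq_of_bdry_le le_rfl hSG hx
    ((hE.triangle_face hG hV hx).2.trans_le (cliqueOn_mono hS))

theorem IsRadial.mem_region_of_face_eq (hE : E.IsRadial r) (hG : MaximalPlanar G)
    (hV : 4 ≤ Fintype.card V) {x y : ℂ} (hx : x ∉ E.skel G) (hy : y ∉ E.skel G)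
    (hxy : E.face x = E.face y) : y ∈ E.region G x := by
  set K := cliqueOn (E.face x)
  have hT := hE.isNClique_face hG hV hx
  have hK : K ≤ G := cliqueOn_le hT.isClique
  have hself {z : ℂ} (hz : z ∉ E.skel G) : z ∈ E.region K z :=
    E.mem_region_self fun hmem => hz (E.skel_mono hK hmem)
  have hKx : E.region K x = E.region G x := hE.region_eq_of_face_subset hG hV hx subset_rfl hK
  have hKy : E.region K y = E.region G y := hE.region_eq_of_face_subset hG hV hy hxy.ge hK
  obtain ⟨u, hu, v, hv, huv⟩ := Finset.one_lt_card.1 (hT.card_eq.symm ▸ Nat.one_lt_ofNat)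
  obtain ⟨p, q, hs⟩ := hE.exists_isSides (hK ⟨hu, hv, huv⟩)
  have htwo (z : ℂ) (hz : z ∉ E.skel G) :
      E.region K z = E.region K p ∨ E.region K z = E.region K q :=
    ((hs.bdry_adj_iff hK ⟨hu, hv, huv⟩ z).1 ((bdry_cliqueOn_eq hT hz).symm ▸ ⟨hu, hv, huv⟩)).imp
      E.region_eq E.region_eq
  by_contra hnot
  have hne : E.region K x ≠ E.region K y := fun h => hnot (hKx ▸ h ▸ hself hy)
  have huniv : E.face x = Finset.univ := by
    refine Finset.eq_univ_of_forall fun w => ?_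
    obtain ⟨z, hz, hw⟩ := hE.exists_mem_face w
    have hzxy : E.region K z = E.region K x ∨ E.region K z = E.region K y := by
      grind only [htwo x hx, htwo y hy, htwo z hz]
    rcases hzxy with h | h
    · rwa [face_eq (hKx ▸ h ▸ hself hz : z ∈ E.region G x)]
    · rwa [hxy, face_eq (hKy ▸ h ▸ hself hz : z ∈ E.region G y)]
  have hcard := hT.card_eq
  rw [huniv, Finset.card_univ] at hcard
  omega

theorem IsRadial.mem_face_iff (hE : E.IsRadial r) (hG : MaximalPlanar G)
    (hV : 4 ≤ Fintype.card V) {u v : V} {p q x : ℂ} (hs : E.IsSides u v p q) (h : G.Adj u v)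
    (hx : x ∉ E.skel G) :
    (u ∈ E.face x ∧ v ∈ E.face x) ↔ p ∈ E.region G x ∨ q ∈ E.region G x := by
  rw [← hs.bdry_adj_iff le_rfl h, (hE.triangle_face hG hV hx).2]
  exact ⟨fun h' => ⟨h'.1, h'.2, h.ne⟩, fun h' => ⟨h'.1, h'.2.1⟩⟩

theorem IsRadial.face_ne_face (hE : E.IsRadial r) (hG : MaximalPlanar G)
    (hV : 4 ≤ Fintype.card V) {u v : V} {p q : ℂ} (hs : E.IsSides u v p q) (h : G.Adj u v) :
    E.face p ≠ E.face q := by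
  intro heq
  have hT := hE.isNClique_face hG hV hs.left_notMem
  obtain ⟨hu, hv⟩ := (hE.mem_face_iff hG hV hs h hs.left_notMem).2
    (.inl (E.mem_region_self hs.left_notMem))
  obtain ⟨w, hw, huw, hvw⟩ := exists_mem_ne_ne hT.card_eq u v
  exact hs.notMem_region le_rfl w h (hT.isClique hu hw huw) (hT.isClique hv hw hvw)
    (hE.mem_region_of_face_eq hG hV hs.left_notMem hs.right_notMem heq)

theorem IsRadial.filter_eq_filter_pair [DecidableEq V] (hE : E.IsRadial r) (hG : MaximalPlanar G)
    (hV : 4 ≤ Fintype.card V) {u v : V} {p q : ℂ} (hs : E.IsSides u v p q) (h : G.Adj u v)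
    {D : Finset (Finset V)} (hD : D ⊆ E.faces) :
    (D.filter fun t => u ∈ t ∧ v ∈ t) =
      ({E.face p, E.face q} : Finset (Finset V)).filter (· ∈ D) := by
  ext t
  simp only [Finset.mem_filter, Finset.mem_insert, Finset.mem_singleton]
  constructor
  · rintro ⟨ht, huv⟩
    obtain ⟨x, hx, rfl⟩ := mem_faces.1 (hD ht)
    exact ⟨((hE.mem_face_iff hG hV hs h hx).1 huv).imp face_eq face_eq, ht⟩
  · rintro ⟨rfl | rfl, ht⟩
    · exact ⟨ht, (hE.mem_face_iff hG hV hs h hs.left_notMem).2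
        (.inl (E.mem_region_self hs.left_notMem))⟩
    · exact ⟨ht, (hE.mem_face_iff hG hV hs h hs.right_notMem).2
        (.inr (E.mem_region_self hs.right_notMem))⟩

theorem IsRadial.card_filter_faces [DecidableEq V] (hE : E.IsRadial r) (hG : MaximalPlanar G)
    (hV : 4 ≤ Fintype.card V) {u v : V} (h : G.Adj u v) :
    (E.faces.filter fun t => u ∈ t ∧ v ∈ t).card = 2 := by
  obtain ⟨p, q, hs⟩ := hE.exists_isSides h
  rw [hE.filter_eq_filter_pair hG hV hs h subset_rfl, Finset.filter_true_of_mem,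
    Finset.card_pair (hE.face_ne_face hG hV hs h)]
  simp only [Finset.forall_mem_insert, Finset.mem_singleton, forall_eq]
  exact ⟨mem_faces.2 ⟨p, hs.left_notMem, rfl⟩, mem_faces.2 ⟨q, hs.right_notMem, rfl⟩⟩

/-- The faces inside one of the regions of a triangle sum to that triangle. -/
theorem IsRadial.exists_subset_faces_odd_iff [DecidableEq V] (hE : E.IsRadial r)
    (hG : MaximalPlanar G) (hV : 4 ≤ Fintype.card V) {T : Finset V} (hT : G.IsNClique 3 T) :
    ∃ D ⊆ E.faces, ∀ u v, G.Adj u v →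
      (Odd (D.filter fun t => u ∈ t ∧ v ∈ t).card ↔ u ∈ T ∧ v ∈ T) := by
  classical
  obtain ⟨x₀, hx₀⟩ := E.exists_notMem_skel
  set R := E.region (cliqueOn T) x₀
  set D := E.faces.filter fun t => ∃ x, x ∉ E.skel G ∧ E.face x = t ∧ x ∈ R
  have hD : D ⊆ E.faces := Finset.filter_subset _ _
  have hmem {p : ℂ} (hp : p ∉ E.skel G) : E.face p ∈ D ↔ p ∈ R := by
    refine Finset.mem_filter.trans ⟨?_, fun h => ⟨mem_faces.2 ⟨p, hp, rfl⟩, p, hp, rfl, h⟩⟩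
    rintro ⟨-, x, hx', hpx, hxR⟩
    exact (mem_region_congr (E.region_anti (cliqueOn_le hT.isClique) x
      (hE.mem_region_of_face_eq hG hV hx' hp hpx))).1 hxR
  refine ⟨D, hD, fun u v h => ?_⟩
  obtain ⟨p, q, hs⟩ := hE.exists_isSides h
  rw [hE.filter_eq_filter_pair hG hV hs h hD,
    odd_card_filter_pair_iff (hE.face_ne_face hG hV hs h), hmem hs.left_notMem,
    hmem hs.right_notMem, hs.xor_mem_region_cliqueOn h.ne hT hx₀]

/-- Every region of a tetrahedron all of whose triangles are faces is itself a face. -/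
theorem IsRadial.eq_univ_of_forall_mem_faces (hE : E.IsRadial r) (hG : MaximalPlanar G)
    (hV : 4 ≤ Fintype.card V) {S : Finset V} (hS : S.card = 4)
    (hF : ∀ t ⊆ S, t.card = 3 → t ∈ E.faces) : S = Finset.univ := by
  classical
  have hSG : cliqueOn S ≤ G := by
    rintro u v ⟨hu, hv, huv⟩
    obtain ⟨t, hut, htS, ht⟩ := Finset.exists_subsuperset_card_eq (s := {u, v}) (t := S) (n := 3)
      (by simp [Finset.insert_subset_iff, hu, hv]) (Finset.card_le_two.trans (by norm_num))
      (by omega)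
    obtain ⟨x, -, rfl⟩ := mem_faces.1 (hF t htS ht)
    exact hE.isClique_face hG x (hut (by simp)) (hut (by simp)) huv
  refine Finset.eq_univ_of_forall fun w => ?_
  obtain ⟨z, hz, hw⟩ := hE.exists_mem_face w
  have hbdry : E.bdry (cliqueOn S) (E.region (cliqueOn S) z) ≠ ⊥ := fun h =>
    E.not_isAcyclic_bdry hSG (not_isAcyclic_cliqueOn (by omega))
      (fun hmem => hz (E.skel_mono hSG hmem)) (h ▸ isAcyclic_bot)
  obtain ⟨u, v, huv⟩ := ne_bot_iff_exists_adj.1 hbdry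
  obtain ⟨p, q, hs⟩ := hE.exists_isSides (hSG huv.1)
  have hin {y : ℂ} (hy : y ∉ E.skel G) (hyR : p ∈ E.region G y ∨ q ∈ E.region G y)
      (hyz : y ∈ E.region (cliqueOn S) z) : w ∈ S := by
    obtain ⟨huy, hvy⟩ := (hE.mem_face_iff hG hV hs (hSG huv.1) hy).2 hyR
    have hyS : E.face y ⊆ S := subset_of_card_filter_eq_two hS hF huv.1.1 huv.1.2.1 huv.1.2.2
      (hE.card_filter_faces hG hV (hSG huv.1)) (mem_faces.2 ⟨y, hy, rfl⟩) huy hvy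
    have hzy := E.mem_region_symm hyz
    rw [hE.region_eq_of_face_subset hG hV hy hyS hSG] at hzy
    exact hyS (face_eq hzy ▸ hw)
  rcases (hs.bdry_adj_iff hSG huv.1 z).1 huv with hp | hq
  · exact hin hs.left_notMem (.inl (E.mem_region_self hs.left_notMem)) hp
  · exact hin hs.right_notMem (.inr (E.mem_region_self hs.right_notMem)) hq

open Classical in
theorem IsRadial.isFaceSystem_faces (hE : E.IsRadial r) (hG : MaximalPlanar G)
    (hV : 4 ≤ Fintype.card V) : IsFaceSystem G E.faces where
  isNClique t ht := by
    obtain ⟨x, hx, rfl⟩ := mem_faces.1 ht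
    exact hE.isNClique_face hG hV hx
  card_eq_two _ _ h := hE.card_filter_faces hG hV h
  exists_odd _ hT := hE.exists_subset_faces_odd_iff hG hV hT
  eq_univ _ hS hF := hE.eq_univ_of_forall_mem_faces hG hV hS hF

end PlaneEmbedding

theorem MaximalPlanar.exists_isFaceSystem [Fintype V] {G : SimpleGraph V} (hG : MaximalPlanar G)
    (hV : 4 ≤ Fintype.card V) : ∃ F, IsFaceSystem G F := by
  obtain ⟨E, r, hE⟩ := PlaneEmbedding.exists_isRadial hG.1
  exact ⟨E.faces, hE.isFaceSystem_faces hG hV⟩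

/-! ### Independent sets in subcubic graphs -/

section IndependentSet

variable {α : Type*} {D : SimpleGraph α} {S : Finset α}

open Classical in
/-- The neighbours of `x` in `D` that lie in `S`. -/
noncomputable def nbhdIn (D : SimpleGraph α) (S : Finset α) (x : α) : Finset α :=
  S.filter (D.Adj x)

/-- The induced subgraph of `D` on `S` is subcubic and has no clique of order four. -/
structure IsSubcubicOn (D : SimpleGraph α) (S : Finset α) : Prop where
  card_nbhdIn_le : ∀ x ∈ S, (nbhdIn D S x).card ≤ 3
  not_isClique : ∀ K ⊆ S, K.card = 4 → ¬ D.IsClique K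

/-- `D` has an independent set inside `S` containing at least a third of `S`. -/
def HasThirdIndep (D : SimpleGraph α) (S : Finset α) : Prop :=
  ∃ I ⊆ S, D.IsIndepSet I ∧ S.card ≤ 3 * I.card

theorem mem_nbhdIn {x y : α} : y ∈ nbhdIn D S x ↔ y ∈ S ∧ D.Adj x y := by
  simp [nbhdIn]

theorem nbhdIn_mono {T : Finset α} (h : T ⊆ S) (x : α) : nbhdIn D T x ⊆ nbhdIn D S x := fun _ hy =>
  mem_nbhdIn.2 ⟨h (mem_nbhdIn.1 hy).1, (mem_nbhdIn.1 hy).2⟩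

theorem IsSubcubicOn.subset (h : IsSubcubicOn D S) {T : Finset α} (hT : T ⊆ S) :
    IsSubcubicOn D T where
  card_nbhdIn_le x hx := (Finset.card_le_card (nbhdIn_mono hT x)).trans (h.card_nbhdIn_le x (hT hx))
  not_isClique K hK := h.not_isClique K (hK.trans hT)

theorem isIndepSet_union {s t : Set α} : D.IsIndepSet (s ∪ t) ↔
    D.IsIndepSet s ∧ D.IsIndepSet t ∧ ∀ x ∈ s, ∀ y ∈ t, ¬ D.Adj x y := by
  refine Set.pairwise_union.trans (and_congr_right fun _ => and_congr_right fun _ => ?_)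
  exact ⟨fun h x hx y hy hxy => (h x hx y hy hxy.ne).1 hxy,
    fun h x hx y hy _ => ⟨h x hx y hy, fun hyx => h x hx y hy hyx.symm⟩⟩

theorem exists_isIndepSet_forall_card_le (D : SimpleGraph α) (S : Finset α) :
    ∃ I ⊆ S, D.IsIndepSet I ∧ ∀ J ⊆ S, D.IsIndepSet J → J.card ≤ I.card := by
  classical
  obtain ⟨I, hI, hmax⟩ := Finset.exists_max_image
    (S.powerset.filter fun J : Finset α => D.IsIndepSet (J : Set α)) Finset.card ⟨∅, by simp⟩
  rw [Finset.mem_filter, Finset.mem_powerset] at hI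
  exact ⟨I, hI.1, hI.2, fun J hJ hJi =>
    hmax J (Finset.mem_filter.2 ⟨Finset.mem_powerset.2 hJ, hJi⟩)⟩

theorem card_le_card_biUnion_nbhdIn [DecidableEq α] {I J : Finset α} (hI : I ⊆ S)
    (hind : D.IsIndepSet I) (hmax : ∀ J ⊆ S, D.IsIndepSet J → J.card ≤ I.card) (hJ : J ⊆ S \ I)
    (hJind : D.IsIndepSet J) : J.card ≤ (J.biUnion (nbhdIn D I)).card := by
  set N := J.biUnion (nbhdIn D I)
  have hN : N ⊆ I := Finset.biUnion_subset.2 fun _ _ _ hy => (mem_nbhdIn.1 hy).1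
  have hdisj : Disjoint (I \ N) J := Finset.disjoint_left.2 fun x hx hxJ =>
    (Finset.mem_sdiff.1 (hJ hxJ)).2 (Finset.mem_sdiff.1 hx).1
  have hexch : D.IsIndepSet ((I \ N ∪ J : Finset α) : Set α) := by
    rw [Finset.coe_union, isIndepSet_union]
    refine ⟨hind.mono (Finset.coe_subset.2 Finset.sdiff_subset), hJind, fun x hx y hy hxy => ?_⟩
    obtain ⟨hxI, hxN⟩ := Finset.mem_sdiff.1 (Finset.mem_coe.1 hx)
    exact hxN (Finset.mem_biUnion.2 ⟨y, hy, mem_nbhdIn.2 ⟨hxI, hxy.symm⟩⟩)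
  have hle := hmax _
    (Finset.union_subset (Finset.sdiff_subset.trans hI) (hJ.trans Finset.sdiff_subset)) hexch
  rw [Finset.card_union_of_disjoint hdisj, Finset.card_sdiff_of_subset hN] at hle
  have := Finset.card_le_card hN
  omega

/-- In a maximum independent set `I`, two vertices with the same unique neighbour in `I` could be
exchanged for it. -/
theorem card_filter_card_nbhdIn_eq_one_le [DecidableEq α] {I : Finset α} (hI : I ⊆ S)
    (hind : D.IsIndepSet I) (hmax : ∀ J ⊆ S, D.IsIndepSet J → J.card ≤ I.card)
    (hfree : ∀ x ∈ S, D.IsIndepSet (nbhdIn D S x)) :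
    ((S \ I).filter fun u => (nbhdIn D I u).card = 1).card ≤ I.card := by
  refine Finset.card_le_card_of_forall_subsingleton (fun u v => nbhdIn D I u = {v}) ?_ ?_
  · intro u hu
    obtain ⟨v, hv⟩ := Finset.card_eq_one.1 (Finset.mem_filter.1 hu).2
    exact ⟨v, (mem_nbhdIn.1 (hv ▸ Finset.mem_singleton_self v)).1, hv⟩
  · rintro v hv u ⟨hu, huv⟩ u' ⟨hu', huv'⟩
    by_contra hne
    have hmem {w : α} (hw : w ∈ S \ I) (hwv : nbhdIn D I w = {v}) : w ∈ nbhdIn D S v :=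
      mem_nbhdIn.2 ⟨(Finset.mem_sdiff.1 hw).1,
        (mem_nbhdIn.1 (hwv ▸ Finset.mem_singleton_self v)).2.symm⟩
    have huO := (Finset.mem_filter.1 hu).1
    have huO' := (Finset.mem_filter.1 hu').1
    have hle := card_le_card_biUnion_nbhdIn (J := {u, u'}) hI hind hmax
      (Finset.insert_subset huO (Finset.singleton_subset_iff.2 huO')) <| by
        refine (hfree v (hI hv)).mono ?_
        rw [Finset.coe_pair, Set.pair_subset_iff]
        exact ⟨hmem huO huv, hmem huO' huv'⟩
    simp [huv, huv', Finset.card_pair hne] at hle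

theorem hasThirdIndep_of_isIndepSet_nbhdIn (hdeg : ∀ x ∈ S, (nbhdIn D S x).card ≤ 3)
    (hfree : ∀ x ∈ S, D.IsIndepSet (nbhdIn D S x)) : HasThirdIndep D S := by
  classical
  obtain ⟨I, hI, hind, hmax⟩ := exists_isIndepSet_forall_card_le D S
  refine ⟨I, hI, hind, ?_⟩
  have hdom : ∀ u ∈ S \ I, 1 ≤ (nbhdIn D I u).card := fun u hu => by
    simpa using card_le_card_biUnion_nbhdIn (J := {u}) hI hind hmax
      (Finset.singleton_subset_iff.2 hu) (by simp)
  have hbelow : ∀ v ∈ I, ((S \ I).bipartiteBelow D.Adj v).card ≤ 3 := fun v hv => by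
    refine (Finset.card_le_card fun u hu => ?_).trans (hdeg v (hI hv))
    obtain ⟨huO, huv⟩ := Finset.mem_filter.1 hu
    exact mem_nbhdIn.2 ⟨(Finset.mem_sdiff.1 huO).1, huv.symm⟩
  have hupper : ∑ u ∈ S \ I, (nbhdIn D I u).card ≤ I.card * 3 :=
    (Finset.sum_card_bipartiteAbove_eq_sum_card_bipartiteBelow D.Adj).trans_le
      (Finset.sum_le_card_nsmul _ _ _ hbelow)
  have hlower : (S \ I).card * 2 ≤ ∑ u ∈ S \ I, (nbhdIn D I u).card +
      ((S \ I).filter fun u => (nbhdIn D I u).card = 1).card := by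
    rw [Finset.card_filter, ← Finset.sum_add_distrib, ← smul_eq_mul]
    refine Finset.card_nsmul_le_sum _ _ _ fun u hu => ?_
    have := hdom u hu
    split_ifs with h <;> omega
  have hpriv := card_filter_card_nbhdIn_eq_one_le hI hind hmax hfree
  have hcard := Finset.card_sdiff_add_card_eq_card hI
  omega

/-- An independent set `J` whose closed neighbourhood has at most `3 * J.card` vertices can be set
aside. -/
theorem hasThirdIndep_of_nbhdIn_subset (ih : ∀ S' ⊂ S, HasThirdIndep D S') {J T : Finset α}
    (hJ : J.Nonempty) (hJS : J ⊆ S) (hind : D.IsIndepSet J) (hJT : J ⊆ T)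
    (hT : ∀ x ∈ J, nbhdIn D S x ⊆ T) (hcard : T.card ≤ 3 * J.card) : HasThirdIndep D S := by
  classical
  obtain ⟨x₀, hx₀⟩ := hJ
  obtain ⟨I, hI, hIind, hIcard⟩ := ih (S \ T) <| Finset.ssubset_iff_subset_ne.2
    ⟨Finset.sdiff_subset, fun h => (Finset.mem_sdiff.1 (h ▸ hJS hx₀)).2 (hJT hx₀)⟩
  have hIST (x : α) (hx : x ∈ I) : x ∈ S ∧ x ∉ T := Finset.mem_sdiff.1 (hI hx)
  refine ⟨I ∪ J, Finset.union_subset (fun x hx => (hIST x hx).1) hJS, ?_, ?_⟩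
  · rw [Finset.coe_union, isIndepSet_union]
    exact ⟨hIind, hind, fun x hx y hy hxy =>
      (hIST x hx).2 (hT y hy (mem_nbhdIn.2 ⟨(hIST x hx).1, hxy.symm⟩))⟩
  · rw [Finset.card_union_of_disjoint
      (Finset.disjoint_left.2 fun x hx hxJ => (hIST x hx).2 (hJT hxJ))]
    have := Finset.card_le_card_sdiff_add_card (s := S) (t := T)
    omega

theorem hasThirdIndep_of_card_nbhdIn_le_two (ih : ∀ S' ⊂ S, HasThirdIndep D S') {x : α}
    (hx : x ∈ S) (hdeg : (nbhdIn D S x).card ≤ 2) : HasThirdIndep D S := by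
  classical
  refine hasThirdIndep_of_nbhdIn_subset ih (J := {x}) (T := insert x (nbhdIn D S x))
    (Finset.singleton_nonempty x) (Finset.singleton_subset_iff.2 hx) (by simp) (by simp)
    (by simp) ?_
  have := Finset.card_insert_le x (nbhdIn D S x)
  rw [Finset.card_singleton]
  omega

theorem IsSubcubicOn.hasThirdIndep_of_nontrivial_inter [DecidableEq α] (h : IsSubcubicOn D S)
    (ih : ∀ S' ⊂ S, HasThirdIndep D S') {p q : α} (hp : p ∈ S) (hq : q ∈ S) (hpq : p ≠ q)
    (hnadj : ¬ D.Adj p q) (hcommon : (nbhdIn D S p ∩ nbhdIn D S q).Nontrivial) :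
    HasThirdIndep D S := by
  refine hasThirdIndep_of_nbhdIn_subset ih (J := {p, q})
    (T := {p, q} ∪ (nbhdIn D S p ∪ nbhdIn D S q)) ⟨p, by simp⟩
    (Finset.insert_subset hp (Finset.singleton_subset_iff.2 hq)) ?_ Finset.subset_union_left ?_ ?_
  · rw [Finset.coe_pair, isIndepSet_iff, Set.pairwise_pair]
    exact fun _ => ⟨hnadj, fun hqp => hnadj hqp.symm⟩
  · simp only [Finset.forall_mem_insert, Finset.mem_singleton, forall_eq]
    exact ⟨Finset.subset_union_left.trans Finset.subset_union_right,
      Finset.subset_union_right.trans Finset.subset_union_right⟩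
  · have hinter := Finset.one_lt_card_iff_nontrivial.2 hcommon
    have hunion := Finset.card_union_add_card_inter (nbhdIn D S p) (nbhdIn D S q)
    have hle := Finset.card_union_le {p, q} (nbhdIn D S p ∪ nbhdIn D S q)
    rw [Finset.card_pair hpq] at hle ⊢
    have := h.card_nbhdIn_le p hp
    have := h.card_nbhdIn_le q hq
    omega

theorem IsSubcubicOn.card_nbhdIn_sup_edge_le [DecidableEq α] (h : IsSubcubicOn D S) {a a' b' : α}
    {T : Finset α} (ha : a ∈ S) (haT : a ∈ T) (ha' : a' ∈ S) (haa' : D.Adj a a') (hb' : a' ≠ b') :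
    (nbhdIn (D ⊔ edge a' b') (S \ T) a').card ≤ 3 := by
  have hsub : nbhdIn (D ⊔ edge a' b') (S \ T) a' ⊆ insert b' ((nbhdIn D S a').erase a) := by
    intro y hy
    obtain ⟨hyS, hadj⟩ := mem_nbhdIn.1 hy
    rw [sup_adj, edge_adj] at hadj
    simp only [Finset.mem_insert, Finset.mem_erase, mem_nbhdIn]
    grind
  refine (Finset.card_le_card hsub).trans ((Finset.card_insert_le _ _).trans ?_)
  rw [Finset.card_erase_add_one (mem_nbhdIn.2 ⟨ha, haa'.symm⟩)]
  exact h.card_nbhdIn_le a' ha'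

theorem IsSubcubicOn.sup_edge [DecidableEq α] (h : IsSubcubicOn D S) {a b a' b' : α} {T : Finset α}
    (ha : a ∈ S) (hb : b ∈ S) (haT : a ∈ T) (hbT : b ∈ T) (ha' : a' ∈ S) (hb' : b' ∈ S)
    (haa' : D.Adj a a') (hbb' : D.Adj b b') (hne : a' ≠ b')
    (hcommon : (nbhdIn D S a' ∩ nbhdIn D S b').Nontrivial → D.Adj a' b') :
    IsSubcubicOn (D ⊔ edge a' b') (S \ T) where
  card_nbhdIn_le x hx := by
    rcases eq_or_ne x a' with rfl | hxa
    · exact h.card_nbhdIn_sup_edge_le ha haT ha' haa' hne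
    rcases eq_or_ne x b' with rfl | hxb
    · rw [edge_comm]
      exact h.card_nbhdIn_sup_edge_le hb hbT hb' hbb' hne.symm
    refine (Finset.card_le_card fun y hy => ?_).trans
      (h.card_nbhdIn_le x (Finset.sdiff_subset hx))
    rw [mem_nbhdIn, sup_adj, edge_adj] at hy
    exact mem_nbhdIn.2 ⟨Finset.sdiff_subset hy.1, by grind⟩
  not_isClique K hK hK4 hclique := by
    have hKS := hK.trans Finset.sdiff_subset
    have hor {x y : α} (hx : x ∈ K) (hy : y ∈ K) (hxy : x ≠ y) :
        D.Adj x y ∨ x = a' ∧ y = b' ∨ x = b' ∧ y = a' := by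
      have hadj := hclique hx hy hxy
      rw [sup_adj, edge_adj] at hadj
      exact hadj.imp_right And.left
    have hadj (haK : a' ∈ K) (hbK : b' ∈ K) : D.Adj a' b' := by
      have hpair : ({a', b'} : Finset α).card < (K.card - 1) := by
        rw [Finset.card_pair hne, hK4]
        norm_num
      have hsub : K \ {a', b'} ⊆ nbhdIn D S a' ∩ nbhdIn D S b' := fun z hz => by
        obtain ⟨hzK, hzab⟩ := Finset.mem_sdiff.1 hz
        simp only [Finset.mem_insert, Finset.mem_singleton, not_or] at hzab
        exact Finset.mem_inter.2 ⟨mem_nbhdIn.2 ⟨hKS hzK, by grind⟩,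
          mem_nbhdIn.2 ⟨hKS hzK, by grind⟩⟩
      refine hcommon (Finset.one_lt_card_iff_nontrivial.1 (lt_of_lt_of_le ?_
        (Finset.card_le_card hsub)))
      have := Finset.card_le_card_sdiff_add_card (s := K) (t := {a', b'})
      omega
    refine h.not_isClique K hKS hK4 fun x hx y hy hxy => ?_
    rcases hor hx hy hxy with hD | ⟨rfl, rfl⟩ | ⟨rfl, rfl⟩
    · exact hD
    · exact hadj hx hy
    · exact (hadj hy hx).symm

theorem hasThirdIndep_of_sdiff_triangle [DecidableEq α] {a b c a' : α} {I : Finset α} (ha : a ∈ S)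
    (hI : I ⊆ S \ {a, b, c}) (hind : D.IsIndepSet I) (hcard : (S \ {a, b, c}).card ≤ 3 * I.card)
    (hN : nbhdIn D S a ⊆ {b, c, a'}) (ha' : a' ∉ I) : HasThirdIndep D S := by
  have hIS (x : α) (hx : x ∈ I) : x ∈ S ∧ x ∉ ({a, b, c} : Finset α) := Finset.mem_sdiff.1 (hI hx)
  refine ⟨{a} ∪ I, Finset.union_subset (Finset.singleton_subset_iff.2 ha)
    (hI.trans Finset.sdiff_subset), ?_, ?_⟩
  · rw [Finset.coe_union, Finset.coe_singleton, isIndepSet_union]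
    refine ⟨Set.pairwise_singleton _ _, hind, ?_⟩
    rintro _ rfl y hy hay
    have := hN (mem_nbhdIn.2 ⟨(hIS y hy).1, hay⟩)
    have := (hIS y hy).2
    grind
  · rw [Finset.card_union_of_disjoint (Finset.disjoint_singleton_left.2 fun haI =>
      (hIS a haI).2 (by simp)), Finset.card_singleton]
    have := Finset.card_le_card_sdiff_add_card (s := S) (t := {a, b, c})
    have : ({a, b, c} : Finset α).card ≤ 3 := Finset.card_le_three
    omega

theorem IsSubcubicOn.exists_nbhdIn_subset_of_triangle [DecidableEq α] (h : IsSubcubicOn D S)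
    (hcommon : ∀ p ∈ S, ∀ q ∈ S, p ≠ q → (nbhdIn D S p ∩ nbhdIn D S q).Nontrivial → D.Adj p q)
    {a b c : α} (ha : a ∈ S) (hb : b ∈ S) (hc : c ∈ S) (hdeg : 2 < (nbhdIn D S a).card)
    (hab : D.Adj a b) (hac : D.Adj a c) (hbc : D.Adj b c) :
    ∃ a' ∈ S, D.Adj a a' ∧ ¬ D.Adj b a' ∧ nbhdIn D S a ⊆ {b, c, a'} := by
  have hbN : b ∈ nbhdIn D S a := mem_nbhdIn.2 ⟨hb, hab⟩
  have hcN : c ∈ (nbhdIn D S a).erase b :=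
    Finset.mem_erase.2 ⟨hbc.ne', mem_nbhdIn.2 ⟨hc, hac⟩⟩
  obtain ⟨a', ha'⟩ := Finset.card_eq_one.1 (show (((nbhdIn D S a).erase b).erase c).card = 1 by
    rw [Finset.card_erase_of_mem hcN, Finset.card_erase_of_mem hbN]
    have := h.card_nbhdIn_le a ha
    omega)
  obtain ⟨hca', -, haN'⟩ : a' ≠ c ∧ a' ≠ b ∧ a' ∈ nbhdIn D S a := by
    simp only [← Finset.mem_erase, ha', Finset.mem_singleton]
  obtain ⟨ha'S, haa'⟩ := mem_nbhdIn.1 haN'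
  refine ⟨a', ha'S, haa', fun hba => ?_, ?_⟩
  · have hca : D.Adj c a' := hcommon c hc a' ha'S hca'.symm ⟨a, by simp [mem_nbhdIn, *, D.adj_comm],
      b, by simp [mem_nbhdIn, *, D.adj_comm], hab.ne⟩
    have hclique : D.IsNClique 4 (insert a' {a, b, c}) :=
      (is3Clique_triple_iff.2 ⟨hab, hac, hbc⟩).insert (by simp [*, D.adj_comm])
    exact h.not_isClique _ (by simp [Finset.insert_subset_iff, *]) hclique.card_eq hclique.isClique
  · rw [Finset.subset_insert_iff, Finset.subset_insert_iff, ha']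

/-- Deleting a triangle costs nothing: the outer neighbours of two of its vertices can be made
adjacent, so an independent set of the rest misses one of them. -/
theorem IsSubcubicOn.hasThirdIndep_of_triangle (h : IsSubcubicOn D S)
    (ih : ∀ (D' : SimpleGraph α), ∀ S' ⊂ S, IsSubcubicOn D' S' → HasThirdIndep D' S') {a b c : α}
    (ha : a ∈ S) (hb : b ∈ S) (hc : c ∈ S) (hab : D.Adj a b) (hac : D.Adj a c)
    (hbc : D.Adj b c) : HasThirdIndep D S := by
  classical
  have ihD : ∀ S' ⊂ S, HasThirdIndep D S' := fun S' hS' => ih D S' hS' (h.subset hS'.subset)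
  by_contra hcon
  have hdeg : ∀ x ∈ S, 2 < (nbhdIn D S x).card := fun x hx => by
    by_contra! hle
    exact hcon (hasThirdIndep_of_card_nbhdIn_le_two ihD hx hle)
  have hcommon : ∀ p ∈ S, ∀ q ∈ S, p ≠ q → (nbhdIn D S p ∩ nbhdIn D S q).Nontrivial →
      D.Adj p q := fun p hp q hq hpq hnt => by
    by_contra hnadj
    exact hcon (h.hasThirdIndep_of_nontrivial_inter ihD hp hq hpq hnadj hnt)
  obtain ⟨a', ha', haa', hba', hNa⟩ :=
    h.exists_nbhdIn_subset_of_triangle hcommon ha hb hc (hdeg a ha) hab hac hbc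
  obtain ⟨b', hb', hbb', -, hNb⟩ :=
    h.exists_nbhdIn_subset_of_triangle hcommon hb ha hc (hdeg b hb) hab.symm hbc hac
  have hne : a' ≠ b' := fun heq => hba' (heq ▸ hbb')
  obtain ⟨I, hI, hind, hcard⟩ := ih (D ⊔ edge a' b') (S \ {a, b, c})
    (Finset.sdiff_ssubset (by simp [Finset.insert_subset_iff, *]) ⟨a, by simp⟩)
    (h.sup_edge ha hb (by simp) (by simp) ha' hb' haa' hbb' hne (hcommon a' ha' b' hb' hne))
  have hindD : D.IsIndepSet I := hind.mono' fun _ _ hxy hD => hxy (.inl hD)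
  by_cases haI : a' ∈ I
  · rw [Finset.insert_comm] at hI hcard
    refine hcon (hasThirdIndep_of_sdiff_triangle hb hI hindD hcard hNb fun hbI => ?_)
    exact hind haI hbI hne (.inr ((edge_adj _ _ _ _).2 ⟨.inl ⟨rfl, rfl⟩, hne⟩))
  · exact hcon (hasThirdIndep_of_sdiff_triangle ha hI hindD hcard hNa haI)

theorem IsSubcubicOn.hasThirdIndep (h : IsSubcubicOn D S) : HasThirdIndep D S := by
  induction S using Finset.strongInduction generalizing D with
  | H S ih =>
  by_cases hfree : ∀ x ∈ S, D.IsIndepSet (nbhdIn D S x)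
  · exact hasThirdIndep_of_isIndepSet_nbhdIn h.card_nbhdIn_le hfree
  · simp only [isIndepSet_iff, Set.Pairwise, Finset.mem_coe, mem_nbhdIn] at hfree
    push Not at hfree
    obtain ⟨a, ha, b, ⟨hb, hab⟩, c, ⟨hc, hac⟩, -, hbc⟩ := hfree
    exact h.hasThirdIndep_of_triangle (fun D' S' hS' h' => ih S' hS' h') ha hb hc hab hac hbc

end IndependentSet

/-! ### Counting incidences between edges and faces -/

section Incidence

open Classical in
/-- The edges in `X` with both ends in `t`. -/
noncomputable def edgesIn (X : Finset (Sym2 V)) (t : Finset V) : Finset (Sym2 V) :=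
  X.filter (· ∈ t.sym2)

open Classical in
/-- The members of `A` containing both ends of `e`. -/
noncomputable def facesAt (A : Finset (Finset V)) (e : Sym2 V) : Finset (Finset V) :=
  A.filter (e ∈ ·.sym2)

theorem mem_edgesIn {X : Finset (Sym2 V)} {t : Finset V} {e : Sym2 V} :
    e ∈ edgesIn X t ↔ e ∈ X ∧ e ∈ t.sym2 := by
  simp [edgesIn]

theorem mem_facesAt {A : Finset (Finset V)} {t : Finset V} {e : Sym2 V} :
    t ∈ facesAt A e ↔ t ∈ A ∧ e ∈ t.sym2 := by
  simp [facesAt]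

theorem facesAt_mono {A B : Finset (Finset V)} (h : A ⊆ B) (e : Sym2 V) :
    facesAt A e ⊆ facesAt B e := fun _ ht =>
  mem_facesAt.2 ⟨h (mem_facesAt.1 ht).1, (mem_facesAt.1 ht).2⟩

theorem facesAt_mk [DecidableEq V] (A : Finset (Finset V)) (u v : V) :
    facesAt A s(u, v) = A.filter fun t => u ∈ t ∧ v ∈ t := by
  ext t
  rw [mem_facesAt, Finset.mem_filter, Finset.mk_mem_sym2_iff]

theorem sum_card_facesAt (X : Finset (Sym2 V)) (A : Finset (Finset V)) :
    ∑ e ∈ X, (facesAt A e).card = ∑ t ∈ A, (edgesIn X t).card := by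
  classical
  exact Finset.sum_card_bipartiteAbove_eq_sum_card_bipartiteBelow fun e (t : Finset V) => e ∈ t.sym2

variable {G : SimpleGraph V}

theorem card_inter_le_two [DecidableEq V] {s t : Finset V} (hs : G.IsNClique 3 s)
    (ht : G.IsNClique 3 t) (hne : s ≠ t) : (s ∩ t).card ≤ 2 := by
  by_contra! hlt
  have hst : s ∩ t = s := Finset.eq_of_subset_of_card_le Finset.inter_subset_left
    (hs.card_eq.trans_le hlt)
  have hts : s ∩ t = t := Finset.eq_of_subset_of_card_le Finset.inter_subset_right
    (ht.card_eq.trans_le hlt)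
  exact hne (hst.symm.trans hts)

variable [Finite V]

/-- The edges of `G` as a finite set, without decidability assumptions. -/
noncomputable def edges (G : SimpleGraph V) : Finset (Sym2 V) := G.edgeSet.toFinite.toFinset

theorem mem_edges {e : Sym2 V} : e ∈ edges G ↔ e ∈ G.edgeSet := Set.Finite.mem_toFinset _

theorem mk_mem_edges {u v : V} : s(u, v) ∈ edges G ↔ G.Adj u v := mem_edges

theorem edgesIn_edges_triple [DecidableEq V] {a b c : V} (hab : G.Adj a b) (hac : G.Adj a c)
    (hbc : G.Adj b c) : edgesIn (edges G) {a, b, c} = {s(a, b), s(a, c), s(b, c)} := by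
  ext e
  induction e with
  | _ u v =>
  rw [mem_edgesIn, mk_mem_edges, Finset.mk_mem_sym2_iff]
  simp only [Finset.mem_insert, Finset.mem_singleton, Sym2.eq_iff]
  constructor
  · rintro ⟨huv, hu, hv⟩
    have := huv.ne
    grind
  · have := G.adj_comm
    grind

theorem card_edgesIn_of_isNClique {t : Finset V} (ht : G.IsNClique 3 t) :
    (edgesIn (edges G) t).card = 3 := by
  classical
  obtain ⟨a, b, c, hab, hac, hbc, rfl⟩ := is3Clique_iff.1 ht
  rw [edgesIn_edges_triple hab hac hbc]
  refine Finset.card_eq_three.2 ⟨s(a, b), s(a, c), s(b, c), ?_, ?_, ?_, rfl⟩ <;>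
    simp [hab.ne, hac.ne, hbc.ne]

theorem even_card_edgesIn_star [DecidableEq V] {t : Finset V} (ht : G.IsNClique 3 t) (v : V) :
    Even (edgesIn ((edges G).filter (v ∈ ·)) t).card := by
  have hcomm : edgesIn ((edges G).filter (v ∈ ·)) t = (edgesIn (edges G) t).filter (v ∈ ·) := by
    ext e
    simp only [mem_edgesIn, Finset.mem_filter, and_right_comm]
  obtain ⟨a, b, c, hab, hac, hbc, rfl⟩ := is3Clique_iff.1 ht
  rw [hcomm, edgesIn_edges_triple hab hac hbc]
  by_cases ha : v = a <;> by_cases hb : v = b <;> by_cases hc : v = c <;>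
    simp_all [Finset.filter_insert, Finset.filter_singleton, hab.ne, hac.ne, hbc.ne, hab.ne',
      hac.ne', hbc.ne']

theorem eq_of_mem_sym2_of_card_le {p : Finset V} (hp : p.card ≤ 2) {e f : Sym2 V}
    (he : e ∈ edges G) (hf : f ∈ edges G) (hep : e ∈ p.sym2) (hfp : f ∈ p.sym2) : e = f := by
  classical
  induction e with
  | _ a b =>
  induction f with
  | _ c d =>
  rw [mk_mem_edges] at he hf
  rw [Finset.mk_mem_sym2_iff] at hep hfp
  have hpab : {a, b} = p := Finset.eq_of_subset_of_card_le
    (Finset.insert_subset hep.1 (Finset.singleton_subset_iff.2 hep.2))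
    (by rwa [Finset.card_pair he.ne])
  have := hf.ne
  simp only [← hpab, Finset.mem_insert, Finset.mem_singleton] at hfp
  rw [Sym2.eq_iff]
  grind

theorem eq_of_mem_sym2 {s t : Finset V} (hs : G.IsNClique 3 s) (ht : G.IsNClique 3 t)
    (hne : s ≠ t) {e f : Sym2 V} (he : e ∈ edges G) (hf : f ∈ edges G) (hes : e ∈ s.sym2)
    (het : e ∈ t.sym2) (hfs : f ∈ s.sym2) (hft : f ∈ t.sym2) : e = f := by
  classical
  have hmem {e : Sym2 V} (hes : e ∈ s.sym2) (het : e ∈ t.sym2) : e ∈ (s ∩ t).sym2 :=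
    Finset.mem_sym2_iff.2 fun x hx => Finset.mem_inter.2
      ⟨Finset.mem_sym2_iff.1 hes x hx, Finset.mem_sym2_iff.1 het x hx⟩
  exact eq_of_mem_sym2_of_card_le (card_inter_le_two hs ht hne) he hf (hmem hes het)
    (hmem hfs hft)

end Incidence

namespace IsFaceSystem

variable [Fintype V] {G : SimpleGraph V} {F : Finset (Finset V)}

theorem card_facesAt (hF : IsFaceSystem G F) {e : Sym2 V} (he : e ∈ edges G) :
    (facesAt F e).card = 2 := by
  classical
  induction e with
  | _ u v =>
  rw [facesAt_mk, hF.card_eq_two u v (mk_mem_edges.1 he)]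

theorem eq_or_eq (hF : IsFaceSystem G F) {e : Sym2 V} (he : e ∈ edges G) {s t r : Finset V}
    (hs : s ∈ F) (ht : t ∈ F) (hr : r ∈ F) (hes : e ∈ s.sym2) (het : e ∈ t.sym2)
    (her : e ∈ r.sym2) (hst : s ≠ t) : r = s ∨ r = t := by
  classical
  have hpair : {s, t} = facesAt F e := Finset.eq_of_subset_of_card_le
    (Finset.insert_subset (mem_facesAt.2 ⟨hs, hes⟩)
      (Finset.singleton_subset_iff.2 (mem_facesAt.2 ⟨ht, het⟩)))
    (by rw [hF.card_facesAt he, Finset.card_pair hst])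
  simpa [← hpair] using mem_facesAt.2 ⟨hr, her⟩

end IsFaceSystem

section Boundary

variable [Finite V] {G : SimpleGraph V} {A : Finset (Finset V)}

open Classical in
/-- The edges of `G` lying in an odd number of members of `A`: the boundary of `A` modulo two. -/
noncomputable def oddEdges (G : SimpleGraph V) (A : Finset (Finset V)) : Finset (Sym2 V) :=
  (edges G).filter fun e => Odd (facesAt A e).card

theorem mem_oddEdges {e : Sym2 V} : e ∈ oddEdges G A ↔ e ∈ edges G ∧ Odd (facesAt A e).card := by
  simp [oddEdges]

theorem odd_card_oddEdges (hA : ∀ t ∈ A, G.IsNClique 3 t) :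
    Odd (oddEdges G A).card ↔ Odd A.card := by
  classical
  rw [oddEdges, ← Finset.odd_sum_iff_odd_card_odd, sum_card_facesAt,
    Finset.sum_congr rfl fun t ht => card_edgesIn_of_isNClique (hA t ht), Finset.sum_const,
    smul_eq_mul, Nat.odd_mul]
  exact and_iff_left (by decide)

theorem even_card_oddEdges_star [DecidableEq V] (hA : ∀ t ∈ A, G.IsNClique 3 t) (v : V) :
    Even ((oddEdges G A).filter (v ∈ ·)).card := by
  have h := Finset.even_sum (s := A) (fun t => (edgesIn ((edges G).filter (v ∈ ·)) t).card)
    fun t ht => even_card_edgesIn_star (hA t ht) v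
  rw [← sum_card_facesAt, ← Nat.not_odd_iff_even, Finset.odd_sum_iff_odd_card_odd,
    Nat.not_odd_iff_even, Finset.filter_filter] at h
  rw [oddEdges, Finset.filter_filter]
  simpa only [and_comm] using h

/-- The boundary is a cycle modulo two, so it is not a single edge. -/
theorem three_le_card_oddEdges (hA : ∀ t ∈ A, G.IsNClique 3 t) (hodd : Odd A.card) :
    3 ≤ (oddEdges G A).card := by
  classical
  have hcard : Odd (oddEdges G A).card := (odd_card_oddEdges hA).2 hodd
  have hne : (oddEdges G A).card ≠ 1 := by
    intro hone
    obtain ⟨e, he⟩ := Finset.card_eq_one.1 hone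
    induction e with
    | _ u v =>
    have heven := even_card_oddEdges_star hA u
    rw [he, Finset.filter_true_of_mem (by simp)] at heven
    simp at heven
  obtain ⟨k, hk⟩ := hcard
  omega

end Boundary

/-! ### The dual graph -/

/-- Two vertex sets are adjacent if they are distinct and share an edge of `G`. On the faces of a
plane triangulation this is the dual graph. -/
def dualGraph [Finite V] (G : SimpleGraph V) : SimpleGraph (Finset V) where
  Adj s t := s ≠ t ∧ ∃ e ∈ edges G, e ∈ s.sym2 ∧ e ∈ t.sym2
  symm := ⟨fun _ _ ⟨hne, e, he, hs, ht⟩ => ⟨hne.symm, e, he, ht, hs⟩⟩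
  loopless := ⟨fun _ h => h.1 rfl⟩

theorem card_union_eq_four [Finite V] [DecidableEq V] {G : SimpleGraph V} {s t : Finset V}
    (hs : G.IsNClique 3 s) (ht : G.IsNClique 3 t) (hst : (dualGraph G).Adj s t) :
    (s ∪ t).card = 4 := by
  obtain ⟨hne, e, he, hes, het⟩ := hst
  have hle := card_inter_le_two hs ht hne
  have hge : 2 ≤ (s ∩ t).card := by
    induction e with
    | _ a b =>
    rw [Finset.mk_mem_sym2_iff] at hes het
    rw [← Finset.card_pair (mk_mem_edges.1 he).ne]
    exact Finset.card_le_card (Finset.insert_subset (Finset.mem_inter.2 ⟨hes.1, het.1⟩)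
      (Finset.singleton_subset_iff.2 (Finset.mem_inter.2 ⟨hes.2, het.2⟩)))
  have hcard := Finset.card_union_add_card_inter s t
  rw [hs.card_eq, ht.card_eq] at hcard
  omega

section Dual

variable [Fintype V] {G : SimpleGraph V} {F : Finset (Finset V)}

/-- A component of `F \ U` in the dual graph meets the other faces only in `U`. -/
theorem IsFaceSystem.exists_mem_of_mem_oddEdges (hF : IsFaceSystem G F) {A U : Finset (Finset V)}
    (hAF : A ⊆ F) (hA : ∀ s ∈ F, ∀ t ∈ A, (dualGraph G).Adj s t → s ∈ A ∨ s ∈ U) {e : Sym2 V}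
    (he : e ∈ oddEdges G A) : ∃ s ∈ U, s ∉ A ∧ ∃ t ∈ A, e ∈ s.sym2 ∧ e ∈ t.sym2 := by
  obtain ⟨heG, hodd⟩ := mem_oddEdges.1 he
  obtain ⟨t, ht⟩ : (facesAt A e).Nonempty := Finset.card_pos.1 hodd.pos
  obtain ⟨s, hs, hsn⟩ : ∃ s ∈ facesAt F e, s ∉ facesAt A e := by
    refine Finset.not_subset.1 fun hsub => ?_
    rw [Finset.Subset.antisymm (facesAt_mono hAF e) hsub, hF.card_facesAt heG] at hodd
    exact absurd hodd (by decide)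
  rw [mem_facesAt] at ht hs hsn
  have hsA : s ∉ A := fun h => hsn ⟨h, hs.2⟩
  have hst : s ≠ t := fun h => hsA (h ▸ ht.1)
  exact ⟨s, (hA s hs.1 t ht.1 ⟨hst, e, heG, hs.2, ht.2⟩).resolve_left hsA, hsA, t, ht.1, hs.2, ht.2⟩

/-- Every odd part sends at least three edges to `U`, while each triangle in `U` receives at most
three. -/
theorem IsFaceSystem.card_le_card_of_pairwiseDisjoint (hF : IsFaceSystem G F) {ι : Type*}
    {O : Finset ι} {A : ι → Finset (Finset V)} {U : Finset (Finset V)} (hU : U ⊆ F)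
    (hAF : ∀ i ∈ O, A i ⊆ F) (hodd : ∀ i ∈ O, Odd (A i).card)
    (hdisj : (O : Set ι).PairwiseDisjoint A) (hAU : ∀ i ∈ O, Disjoint (A i) U)
    (hA : ∀ i ∈ O, ∀ s ∈ F, ∀ t ∈ A i, (dualGraph G).Adj s t → s ∈ A i ∨ s ∈ U) :
    O.card ≤ U.card := by
  classical
  have hbdry (i : ι) (hi : i ∈ O) (e : Sym2 V) (he : e ∈ oddEdges G (A i)) :
      ∃ s ∈ U, s ∉ A i ∧ ∃ t ∈ A i, e ∈ s.sym2 ∧ e ∈ t.sym2 :=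
    hF.exists_mem_of_mem_oddEdges (hAF i hi) (hA i hi) he
  have hdisjEdges : (O : Set ι).PairwiseDisjoint fun i => oddEdges G (A i) := by
    refine fun i hi j hj hij => Finset.disjoint_left.2 fun e hei hej => ?_
    obtain ⟨s, hs, hsA, t, ht, hes, het⟩ := hbdry i hi e hei
    obtain ⟨-, -, -, t', ht', -, het'⟩ := hbdry j hj e hej
    rcases hF.eq_or_eq (mem_oddEdges.1 hei).1 (hU hs) (hAF i hi ht) (hAF j hj ht') hes het het'
      (fun h => hsA (h ▸ ht)) with rfl | rfl
    · exact Finset.disjoint_left.1 (hAU j hj) ht' hs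
    · exact Finset.disjoint_left.1 (hdisj hi hj hij) ht ht'
  have hlower : O.card * 3 ≤ (O.biUnion fun i => oddEdges G (A i)).card := by
    rw [Finset.card_biUnion hdisjEdges]
    exact Finset.card_nsmul_le_sum _ _ _ fun i hi =>
      three_le_card_oddEdges (fun t ht => hF.isNClique t (hAF i hi ht)) (hodd i hi)
  have hsub : (O.biUnion fun i => oddEdges G (A i)) ⊆ U.biUnion (edgesIn (edges G)) := by
    refine Finset.biUnion_subset.2 fun i hi e he => ?_
    obtain ⟨s, hs, -, t, -, hes, -⟩ := hbdry i hi e he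
    exact Finset.mem_biUnion.2 ⟨s, hs, mem_edgesIn.2 ⟨(mem_oddEdges.1 he).1, hes⟩⟩
  have hupper : (U.biUnion (edgesIn (edges G))).card ≤ U.card * 3 :=
    Finset.card_biUnion_le_card_mul _ _ _ fun s hs =>
      (card_edgesIn_of_isNClique (hF.isNClique s (hU hs))).le
  have := Finset.card_le_card hsub
  omega

theorem IsFaceSystem.ncard_oddComponents_le (hF : IsFaceSystem G F) {W : Type*} [Finite W]
    (f : W ↪ Finset V) {U : Finset (Finset V)} (hU : U ⊆ F)
    (hf : Set.range f = (F : Set (Finset V)) \ U) {H : SimpleGraph W}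
    (hH : (dualGraph G).comap f ≤ H) : H.oddComponents.ncard ≤ U.card := by
  classical
  have := Fintype.ofFinite W
  set A : H.ConnectedComponent → Finset (Finset V) := fun C => C.supp.toFinset.map f with hA
  have hmem (C : H.ConnectedComponent) (w : W) : f w ∈ A C ↔ H.connectedComponentMk w = C := by
    simp [hA]
  have hrange (w : W) : f w ∈ F ∧ f w ∉ U := by
    simpa using hf.subset (Set.mem_range_self w)
  have hexists {C : H.ConnectedComponent} {t : Finset V} (ht : t ∈ A C) :
      ∃ w, H.connectedComponentMk w = C ∧ f w = t := by
    simpa [hA] using ht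
  rw [Set.ncard_eq_toFinset_card _ H.oddComponents.toFinite]
  refine hF.card_le_card_of_pairwiseDisjoint hU (A := A) (fun C _ t ht => ?_) (fun C hC => ?_)
    (fun C _ C' _ hne => Finset.disjoint_left.2 fun t ht ht' => hne ?_)
    (fun C _ => Finset.disjoint_left.2 fun t ht => ?_) fun C _ s hs t ht hst => ?_
  · obtain ⟨w, -, rfl⟩ := hexists ht
    exact (hrange w).1
  · rw [Finset.card_map, ← Set.ncard_eq_toFinset_card']
    exact (Set.Finite.mem_toFinset H.oddComponents.toFinite).1 hC
  · obtain ⟨w, rfl, rfl⟩ := hexists ht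
    exact (hmem C' w).1 ht'
  · obtain ⟨w, -, rfl⟩ := hexists ht
    exact (hrange w).2
  · refine or_iff_not_imp_right.2 fun hsU => ?_
    obtain ⟨w, rfl⟩ := hf.superset ⟨hs, hsU⟩
    obtain ⟨w', rfl, rfl⟩ := hexists ht
    exact (hmem _ w).2 (ConnectedComponent.sound (hH hst : H.Adj w w').reachable)

theorem IsFaceSystem.exists_isPerfectMatching (hF : IsFaceSystem G F) :
    ∃ M : Subgraph ((dualGraph G).induce (F : Set (Finset V))), M.IsPerfectMatching := by
  classical
  refine tutte.2 fun u => not_lt.2 ?_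
  have hcard : (u.toFinset.map (.subtype (· ∈ F))).card = u.ncard := by
    rw [Finset.card_map, Set.ncard_eq_toFinset_card']
  rw [← hcard]
  refine hF.ncard_oddComponents_le ⟨fun w => w.1.1,
    Subtype.val_injective.comp Subtype.val_injective⟩ ?_ ?_ ?_
  · intro t ht
    obtain ⟨x, -, rfl⟩ := Finset.mem_map.1 ht
    exact x.2
  · ext t
    by_cases ht : t ∈ F <;> simp [ht]
  · rintro ⟨x, hx⟩ ⟨y, hy⟩ hxy
    simp only [Subgraph.deleteVerts_verts, Subgraph.verts_top] at hx hy
    simp only [Subgraph.coe_adj, Subgraph.deleteVerts_adj, Subgraph.verts_top, Subgraph.top_adj]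
    exact ⟨trivial, hx.2, trivial, hy.2, hxy⟩

/-- The edges dual to a perfect matching of the dual graph. -/
theorem IsFaceSystem.exists_card_edgesIn_eq_one (hF : IsFaceSystem G F) :
    ∃ X ⊆ edges G, ∀ t ∈ F, (edgesIn X t).card = 1 := by
  classical
  obtain ⟨M, hM⟩ := hF.exists_isPerfectMatching
  rw [Subgraph.isPerfectMatching_iff] at hM
  refine ⟨(edges G).filter fun e => ∃ s t, M.Adj s t ∧ e ∈ s.1.sym2 ∧ e ∈ t.1.sym2,
    Finset.filter_subset _ _, fun r hr => ?_⟩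
  obtain ⟨r', hrr', huniq⟩ := hM ⟨r, hr⟩
  obtain ⟨hne, e, he, her, her'⟩ := hrr'.adj_sub
  refine Finset.card_eq_one.2 ⟨e, Finset.eq_singleton_iff_unique_mem.2
    ⟨mem_edgesIn.2 ⟨Finset.mem_filter.2 ⟨he, _, _, hrr', her, her'⟩, her⟩, fun f hf => ?_⟩⟩
  obtain ⟨hfX, hfr⟩ := mem_edgesIn.1 hf
  obtain ⟨hfG, s, t, hst, hfs, hft⟩ := Finset.mem_filter.1 hfX
  have hfr' : f ∈ r'.1.sym2 := by
    rcases hF.eq_or_eq hfG s.2 t.2 hr hfs hft hfr hst.adj_sub.1 with rfl | rfl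
    · exact huniq t hst ▸ hft
    · exact huniq s hst.symm ▸ hfs
  exact eq_of_mem_sym2 (hF.isNClique r hr) (hF.isNClique _ r'.2) hne hfG he hfr hfr' her her'

theorem IsFaceSystem.exists_oddEdges_eq (hF : IsFaceSystem G F) {T : Finset V}
    (hT : G.IsNClique 3 T) : ∃ A ⊆ F, oddEdges G A = edgesIn (edges G) T := by
  classical
  obtain ⟨A, hAF, hA⟩ := hF.exists_odd T hT
  refine ⟨A, hAF, ?_⟩
  ext e
  induction e with
  | _ u v =>
  rw [mem_oddEdges, mem_edgesIn, facesAt_mk, Finset.mk_mem_sym2_iff]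
  exact and_congr_right fun huv => hA u v (mk_mem_edges.1 huv)

/-- A triangle is the boundary of an odd set `A` of faces. If each face has one edge in `X`, the
incidences between `X` and `A` are odd in number, so `X` meets that boundary. -/
theorem IsFaceSystem.isTriangleTransversal (hF : IsFaceSystem G F) {X : Finset (Sym2 V)}
    (hX : X ⊆ edges G) (hone : ∀ t ∈ F, (edgesIn X t).card = 1) : IsTriangleTransversal G X := by
  refine ⟨fun e he => mem_edges.1 (hX he), fun T hT => ?_⟩
  obtain ⟨A, hAF, hA⟩ := hF.exists_oddEdges_eq hT
  have hodd : Odd A.card := by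
    rw [← odd_card_oddEdges (G := G) fun t ht => hF.isNClique t (hAF ht), hA,
      card_edgesIn_of_isNClique hT]
    decide
  have hcount : ∑ e ∈ X, (facesAt A e).card = A.card := by
    rw [sum_card_facesAt, Finset.sum_congr rfl fun t ht => hone t (hAF ht), Finset.card_eq_sum_ones]
  rw [← hcount, Finset.odd_sum_iff_odd_card_odd] at hodd
  obtain ⟨e, he⟩ := Finset.card_pos.1 hodd.pos
  obtain ⟨heX, heodd⟩ := Finset.mem_filter.1 he
  have heT := hA ▸ mem_oddEdges.2 ⟨hX heX, heodd⟩
  exact ⟨e, heX, Finset.mem_sym2_iff.1 (mem_edgesIn.1 heT).2⟩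

theorem IsFaceSystem.exists_isTriangleTransversal (hF : IsFaceSystem G F) :
    ∃ X, IsTriangleTransversal G X ∧ 2 * X.card = F.card := by
  obtain ⟨X, hX, hone⟩ := hF.exists_card_edgesIn_eq_one
  refine ⟨X, hF.isTriangleTransversal hX hone, ?_⟩
  calc 2 * X.card = ∑ e ∈ X, (facesAt F e).card := by
        rw [Finset.sum_const_nat fun e he => hF.card_facesAt (hX he), mul_comm]
    _ = ∑ t ∈ F, (edgesIn X t).card := sum_card_facesAt X F
    _ = F.card := by rw [Finset.sum_const_nat hone, mul_one]

end Dual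

/-! ### Transversals and packings -/

theorem tau_le_card {G : SimpleGraph V} {X : Finset (Sym2 V)} (hX : IsTriangleTransversal G X) :
    tau G ≤ X.card := Nat.sInf_le ⟨X, hX, rfl⟩

theorem card_le_nu [Finite V] {G : SimpleGraph V} {Y : Finset (Finset V)}
    (hY : IsTrianglePacking G Y) : Y.card ≤ nu G := by
  have := Fintype.ofFinite V
  refine le_csSup ⟨Fintype.card (Finset V), ?_⟩ ⟨Y, hY, rfl⟩
  rintro n ⟨Y, -, rfl⟩
  exact Finset.card_le_univ Y

section Packing

variable [Fintype V] {G : SimpleGraph V} {F : Finset (Finset V)}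

theorem IsFaceSystem.card_nbhdIn_dualGraph_le (hF : IsFaceSystem G F) {t : Finset V} (ht : t ∈ F) :
    (nbhdIn (dualGraph G) F t).card ≤ 3 := by
  rw [← card_edgesIn_of_isNClique (hF.isNClique t ht)]
  refine Finset.card_le_card_of_forall_subsingleton (fun s e => e ∈ s.sym2) ?_ ?_
  · intro s hs
    obtain ⟨-, -, e, he, het, hes⟩ := mem_nbhdIn.1 hs
    exact ⟨e, mem_edgesIn.2 ⟨he, het⟩, hes⟩
  · rintro e he s ⟨hs, hes⟩ s' ⟨hs', hes'⟩
    obtain ⟨heG, het⟩ := mem_edgesIn.1 he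
    obtain ⟨hsF, hts⟩ := mem_nbhdIn.1 hs
    obtain ⟨hsF', hts'⟩ := mem_nbhdIn.1 hs'
    exact ((hF.eq_or_eq heG ht hsF hsF' het hes hes' hts.1).resolve_left hts'.1.symm).symm

/-- A vertex of `r` outside `s ∪ t` would force `r` to share the same edge with both. -/
theorem IsFaceSystem.subset_union_of_dualGraph_adj [DecidableEq V] (hF : IsFaceSystem G F)
    {r s t : Finset V} (hr : r ∈ F) (hs : s ∈ F) (ht : t ∈ F) (hst : s ≠ t)
    (hrs : (dualGraph G).Adj r s) (hrt : (dualGraph G).Adj r t) : r ⊆ s ∪ t := by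
  intro z hz
  by_contra hzst
  rw [Finset.mem_union, not_or] at hzst
  obtain ⟨hrs', e, he, her, hes⟩ := hrs
  obtain ⟨hrt', f, hf, hfr, hft⟩ := hrt
  have herase {e : Sym2 V} {s : Finset V} (her : e ∈ r.sym2) (hes : e ∈ s.sym2) (hzs : z ∉ s) :
      e ∈ (r.erase z).sym2 := by
    rw [Finset.mem_sym2_iff] at *
    exact fun x hx => Finset.mem_erase.2 ⟨fun h => hzs (h ▸ hes x hx), her x hx⟩
  have hef : e = f := eq_of_mem_sym2_of_card_le
    (by rw [Finset.card_erase_of_mem hz, (hF.isNClique r hr).card_eq]) he hf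
    (herase her hes hzst.1) (herase hfr hft hzst.2)
  exact (hF.eq_or_eq he hs ht hr hes (hef ▸ hft) her hst).elim hrs' hrt'

theorem IsFaceSystem.exists_eq_powersetCard (hF : IsFaceSystem G F) {K : Finset (Finset V)}
    (hKF : K ⊆ F) (hK : K.card = 4) (hclique : (dualGraph G).IsClique K) :
    ∃ S : Finset V, S.card = 4 ∧ K = S.powersetCard 3 := by
  classical
  have hN (r : Finset V) (hr : r ∈ K) : G.IsNClique 3 r := hF.isNClique r (hKF hr)
  obtain ⟨s, hs, t, ht, hst⟩ := Finset.one_lt_card.1 (show 1 < K.card by omega)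
  have hS : (s ∪ t).card = 4 := card_union_eq_four (hN s hs) (hN t ht) (hclique hs ht hst)
  refine ⟨s ∪ t, hS, Finset.eq_of_subset_of_card_le (fun r hr => Finset.mem_powersetCard.2
    ⟨?_, (hN r hr).card_eq⟩) (by rw [Finset.card_powersetCard, hS, hK]; decide)⟩
  rcases eq_or_ne r s with rfl | hrs
  · exact Finset.subset_union_left
  rcases eq_or_ne r t with rfl | hrt
  · exact Finset.subset_union_right
  exact hF.subset_union_of_dualGraph_adj (hKF hr) (hKF hs) (hKF ht) hst (hclique hr hs hrs)
    (hclique hr ht hrt)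

theorem eq_top_of_forall_isNClique (hV : 3 ≤ Fintype.card V)
    (h : ∀ t : Finset V, t.card = 3 → G.IsNClique 3 t) : G = ⊤ := by
  classical
  refine eq_top_iff_forall_ne_adj.2 fun u v huv => ?_
  obtain ⟨r, hr, -, hr3⟩ := Finset.exists_subsuperset_card_eq
    (Finset.subset_univ ({u, v} : Finset V)) (n := 3) (by rw [Finset.card_pair huv]; omega)
    (by rwa [Finset.card_univ])
  exact (h r hr3).isClique (hr (by simp)) (hr (by simp)) huv

theorem IsFaceSystem.not_isClique_dualGraph (hF : IsFaceSystem G F)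
    (hK4 : ¬ Nonempty (G ≃g (⊤ : SimpleGraph (Fin 4)))) {K : Finset (Finset V)} (hKF : K ⊆ F)
    (hK : K.card = 4) : ¬ (dualGraph G).IsClique K := by
  intro hclique
  obtain ⟨S, hS, rfl⟩ := hF.exists_eq_powersetCard hKF hK hclique
  have hmem (t : Finset V) (hts : t ⊆ S) (ht : t.card = 3) : t ∈ F :=
    hKF (Finset.mem_powersetCard.2 ⟨hts, ht⟩)
  obtain rfl := hF.eq_univ S hS hmem
  rw [Finset.card_univ] at hS
  obtain rfl := eq_top_of_forall_isNClique (G := G) (by omega) fun t ht =>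
    hF.isNClique t (hmem t (Finset.subset_univ t) ht)
  exact hK4 ⟨Iso.completeGraph (Fintype.equivFinOfCardEq hS)⟩

theorem IsFaceSystem.exists_isTrianglePacking (hF : IsFaceSystem G F)
    (hK4 : ¬ Nonempty (G ≃g (⊤ : SimpleGraph (Fin 4)))) :
    ∃ Y, IsTrianglePacking G Y ∧ F.card ≤ 3 * Y.card := by
  have hsub : IsSubcubicOn (dualGraph G) F :=
    ⟨fun _ => hF.card_nbhdIn_dualGraph_le, fun _ => hF.not_isClique_dualGraph hK4⟩
  obtain ⟨Y, hYF, hind, hcard⟩ := hsub.hasThirdIndep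
  refine ⟨Y, ⟨fun t ht => hF.isNClique t (hYF ht), fun s hs t ht hst e he hboth => ?_⟩, hcard⟩
  exact hind hs ht hst ⟨hst, e, mem_edges.2 he, Finset.mem_sym2_iff.2 hboth.1,
    Finset.mem_sym2_iff.2 hboth.2⟩

theorem IsFaceSystem.two_mul_tau_le_three_mul_nu (hF : IsFaceSystem G F)
    (hK4 : ¬ Nonempty (G ≃g (⊤ : SimpleGraph (Fin 4)))) : 2 * tau G ≤ 3 * nu G := by
  obtain ⟨X, hX, hXF⟩ := hF.exists_isTriangleTransversal
  obtain ⟨Y, hY, hFY⟩ := hF.exists_isTrianglePacking hK4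
  calc 2 * tau G ≤ 2 * X.card := Nat.mul_le_mul_left 2 (tau_le_card hX)
    _ = F.card := hXF
    _ ≤ 3 * Y.card := hFY
    _ ≤ 3 * nu G := Nat.mul_le_mul_left 3 (card_le_nu hY)

theorem two_mul_tau_le_of_card_le_three (hV : Fintype.card V ≤ 3) : 2 * tau G ≤ 3 * nu G := by
  classical
  by_cases hex : ∃ T, G.IsNClique 3 T
  · obtain ⟨T, hT⟩ := hex
    have huniv (t : Finset V) (ht : G.IsNClique 3 t) : t = Finset.univ :=
      Finset.eq_univ_of_card t (le_antisymm (Finset.card_le_univ t) (ht.card_eq ▸ hV))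
    obtain ⟨a, b, -, hab, -⟩ := (is3Clique_iff (s := T)).1 hT
    have htau : tau G ≤ ({s(a, b)} : Finset (Sym2 V)).card := tau_le_card
      ⟨by simpa using hab, fun t ht => ⟨s(a, b), by simp, fun v _ => by simp [huniv t ht]⟩⟩
    have hnu : ({T} : Finset (Finset V)).card ≤ nu G := card_le_nu
      ⟨by simpa using hT, fun s hs t ht hst => absurd ((Finset.mem_singleton.1 hs).trans
        (Finset.mem_singleton.1 ht).symm) hst⟩
    rw [Finset.card_singleton] at htau hnu
    omega
  · push Not at hex
    have htau : tau G ≤ (∅ : Finset (Sym2 V)).card := tau_le_card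
      ⟨by simp, fun t ht => absurd ht (hex t)⟩
    rw [Finset.card_empty] at htau
    omega

end Packing

/-- If `G` is a planar triangulation different from `K₄`, then `τ(G) ≤ (3/2)·ν(G)`. -/
theorem tuza_three_halves_of_planar_triangulation (V : Type) [Fintype V]
    (G : SimpleGraph V) (hG : MaximalPlanar G)
    (hK4 : ¬ Nonempty (G ≃g (⊤ : SimpleGraph (Fin 4)))) :
    2 * tau G ≤ 3 * nu G := by
  rcases Nat.lt_or_ge 3 (Fintype.card V) with hV | hV
  · obtain ⟨F, hF⟩ := hG.exists_isFaceSystem hV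
    exact hF.two_mul_tau_le_three_mul_nu hK4
  · exact two_mul_tau_le_of_card_le_three hV
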